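/- The immediate parabolic basin of P_ω consists of exactly q components permuted cyclically with combinatorial rotation number p/q: there are exactly q distinct connected components of Λ_ω whose closure contains 0, and they can be indexed B_0, B_1, …, B_{q−1} so that P_ω maps B_j into B_{(j+p) mod q} for every j; in particular each B_j is invariant under the q-th iterate P_ω^q. -/

import Mathlib

open Complex Filter Topology Set

/-- The quadratic polynomial `P_ω(z) = ω z + z²`. -/
noncomputable def Pq (ω : ℂ) : ℂ → ℂ := fun z => ω * z + z ^ 2

/-- The augmented parabolic basin `Λ̃_ω`: points whose orbit converges to `0`. -/
def basinAug (ω : ℂ) : Set ℂ := {z | Tendsto (fun n => (Pq ω)^[n] z) atTop (𝓝 0)}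

/-- The backward orbit of the parabolic fixed point `0`. -/
def preFixed (ω : ℂ) : Set ℂ := {z | ∃ n : ℕ, (Pq ω)^[n] z = 0}

/-- The parabolic basin `Λ_ω`. -/
def basin (ω : ℂ) : Set ℂ := basinAug ω \ preFixed ω

/-!
By the Leau-Fatou flower theorem the `q`-th iterate has `m` attracting petals at `0`, and `P_ω`
maps the petal with axis `v` into the component of the petal with axis `ω v`. Every cycle of petals
attracts a critical point; there is only one, so there is one cycle and `m = q`.

It remains to see that a component `U` of the basin whose closure contains `0` contains a petal.
Some iterate of `U` does, so by induction we may assume that `P_ω(U)` does. Were `U` not to, it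
would be the image of a petal component `B` under the reflection `z ↦ -ω - z`, so that `-ω` would
be in the closure of `B`. But `-ω` is in the closure of the component of the critical point `-ω/2`,
which is symmetric under the reflection and distinct from `B`. Two closed sets that join `0` to `∞`
in `{0} ∪ {G > 0}`, where `G` is the Green function, and approach `0` in the repelling directions on
both sides of the axis of the critical component separate it from `B` near `-ω`.

To find such a set in a given repelling direction, let `Ψ` be the inverse of the repelling Fatou
coordinate, extended by the functional equation. A Liouville argument shows that `G ∘ Ψ` is not
identically zero; it vanishes off a horizontal strip, since orbits entering far from the axis turn
into the attracting petals. A growth estimate for subharmonic functions then shows that some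
component of `{G ∘ Ψ > 0}` is invariant under translation by a positive integer. An arc in it from a
point to its translate, continued by translation in both directions, is mapped by `Ψ` to the
required set.
-/

section Subharmonic

open Metric MeasureTheory
open scoped Real

/-- Nonnegative continuous functions on the plane that are subharmonic, encoded by the sub-mean
value inequality on all sufficiently small circles about each point where the function is positive.
Where the function vanishes the inequality is automatic. -/
structure NonnegSubharmonic (v : ℂ → ℝ) : Prop where
  continuous : Continuous v
  nonneg : ∀ z, 0 ≤ v z
  le_circleAverage_of_pos : ∀ z, 0 < v z → ∀ᶠ r in 𝓝[>] 0, v z ≤ Real.circleAverage v z r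

lemma circleIntegrable_of_continuous {v : ℂ → ℝ} (hv : Continuous v) (z : ℂ) (r : ℝ) :
    CircleIntegrable v z r :=
  hv.continuousOn.circleIntegrable'

lemma circleAverage_re_of_differentiable {h : ℂ → ℂ} (hh : Differentiable ℂ h) (z : ℂ) (r : ℝ) :
    Real.circleAverage (fun x => (h x).re) z r = (h z).re := by
  have hcomm := ContinuousLinearMap.circleAverage_comp_comm (f := h) (c := z) (R := r)
    Complex.reCLM hh.continuous.continuousOn.circleIntegrable'
  rwa [hh.diffContOnCl.circleAverage] at hcomm

lemma circleAverage_norm_sub_sq (c z : ℂ) (r : ℝ) :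
    Real.circleAverage (fun x => ‖x - c‖ ^ 2) z r = ‖z - c‖ ^ 2 + r ^ 2 := by
  let h : ℂ → ℂ := fun x => (2 * (x - z) * (starRingEnd ℂ) (z - c) + (‖z - c‖ ^ 2 + r ^ 2 : ℝ))
  have hh : Differentiable ℂ h := by fun_prop
  have heq : EqOn (fun x => ‖x - c‖ ^ 2) (fun x => (h x).re) (sphere z |r|) := by
    intro x hx
    have hr : r ^ 2 = ‖x - z‖ ^ 2 := by rw [mem_sphere_iff_norm.1 hx, sq_abs]
    simp only [h, hr, ← Complex.normSq_eq_norm_sq, Complex.normSq_apply, Complex.add_re,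
      Complex.mul_re, Complex.sub_re, Complex.sub_im, Complex.conj_re, Complex.conj_im,
      Complex.mul_im, Complex.ofReal_re, Complex.re_ofNat, Complex.im_ofNat]
    ring
  rw [Real.circleAverage_congr_sphere heq, circleAverage_re_of_differentiable hh]
  simp only [h, sub_self, mul_zero, zero_mul, zero_add, Complex.ofReal_re]

namespace NonnegSubharmonic

variable {v : ℂ → ℝ}

lemma eventually_le_circleAverage (hv : NonnegSubharmonic v) (z : ℂ) :
    ∀ᶠ r in 𝓝[>] 0, v z ≤ Real.circleAverage v z r := by
  rcases (hv.nonneg z).lt_or_eq with hz | hz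
  · exact hv.le_circleAverage_of_pos z hz
  · exact .of_forall fun r => hz ▸ Real.circleAverage_nonneg_of_nonneg fun x _ => hv.nonneg x

/-- Adding `ε ‖x - c‖ ^ 2` makes the sub-mean value inequality strict, so that the function cannot
attain a maximum in the open disc. -/
lemma le_re_of_le_re_on_sphere (hv : NonnegSubharmonic v) {h : ℂ → ℂ} (hh : Differentiable ℂ h)
    {c : ℂ} {R : ℝ} (hR : 0 < R) (hle : ∀ x ∈ sphere c R, v x ≤ (h x).re) : v c ≤ (h c).re := by
  by_contra! hcon
  obtain ⟨ε, hε, hεR⟩ : ∃ ε > 0, ε * R ^ 2 < v c - (h c).re :=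
    ⟨(v c - (h c).re) / (2 * R ^ 2), div_pos (sub_pos.2 hcon) (by positivity), by
      rw [div_mul_eq_mul_div, mul_div_mul_right _ _ (by positivity)]; linarith⟩
  have hhc := hh.continuous
  have hvc := hv.continuous
  let d : ℂ → ℝ := fun x => v x - (h x).re
  let w : ℂ → ℝ := fun x => d x + ε * ‖x - c‖ ^ 2
  have hdc : Continuous d := by fun_prop
  have hwc : Continuous w := by fun_prop
  obtain ⟨x₀, hx₀, hmax⟩ := (isCompact_closedBall c R).exists_isMaxOn
    (nonempty_closedBall.2 hR.le) hwc.continuousOn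
  have hx₀R : dist x₀ c < R := by
    refine (mem_closedBall.1 hx₀).lt_of_ne fun hx₀R => ?_
    have hcx₀ : w c ≤ w x₀ := hmax (mem_closedBall_self hR.le)
    simp only [w, d, ← dist_eq_norm, hx₀R, dist_self] at hcx₀
    linarith [hle x₀ hx₀R]
  obtain ⟨r, hsub, hr₀, hr⟩ := ((hv.eventually_le_circleAverage x₀).and
    (Ioo_mem_nhdsGT (sub_pos.2 hx₀R))).exists
  have hball : sphere x₀ |r| ⊆ closedBall c R := by
    rw [abs_of_pos hr₀]
    exact sphere_subset_closedBall.trans (closedBall_subset_closedBall' (by linarith))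
  have hw_avg : Real.circleAverage w x₀ r ≤ w x₀ :=
    Real.circleAverage_mono_on_of_le_circle (circleIntegrable_of_continuous hwc x₀ r)
      fun x hx => hmax (hball hx)
  have hw_eq : Real.circleAverage w x₀ r
      = Real.circleAverage v x₀ r - (h x₀).re + ε * (‖x₀ - c‖ ^ 2 + r ^ 2) := by
    rw [Real.circleAverage_fun_add (circleIntegrable_of_continuous hdc x₀ r)
        (circleIntegrable_of_continuous (by fun_prop) x₀ r),
      Real.circleAverage_fun_sub (circleIntegrable_of_continuous hvc x₀ r)
        (circleIntegrable_of_continuous (by fun_prop) x₀ r),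
      circleAverage_re_of_differentiable hh, ← circleAverage_norm_sub_sq c x₀ r]
    congr 1
    exact Real.circleAverage_fun_smul (a := ε)
  simp only [w, d] at hw_avg hw_eq
  nlinarith [mul_pos hε (pow_pos hr₀ 2)]

end NonnegSubharmonic

lemma exists_entire_add_conj_of_mem_span_fourier {c : ℂ} {R : ℝ} (hR : R ≠ 0)
    {F : C(AddCircle (2 * π), ℂ)} (hF : F ∈ Submodule.span ℂ (range (fourier (T := 2 * π)))) :
    ∃ g h : ℂ → ℂ, Differentiable ℂ g ∧ Differentiable ℂ h ∧
      ∀ t, F t = g (c + R * fourier 1 t) + (starRingEnd ℂ) (h (c + R * fourier 1 t)) := by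
  induction hF using Submodule.span_induction with
  | mem _ hn =>
    obtain ⟨n, rfl⟩ := hn
    have hunit (t : AddCircle (2 * π)) : (c + R * fourier 1 t - c) / R = fourier 1 t := by
      rw [add_sub_cancel_left, mul_div_cancel_left₀ _ (ofReal_ne_zero.2 hR)]
    have hpow (k : ℕ) (t : AddCircle (2 * π)) : fourier (k : ℤ) t = (fourier 1 t) ^ k := by
      induction k with
      | zero => simp
      | succ k ih => rw [pow_succ, ← ih, ← fourier_add]; simp
    obtain ⟨k, rfl | rfl⟩ := n.eq_nat_or_neg
    · refine ⟨fun x => ((x - c) / R) ^ k, fun _ => 0, by fun_prop, by fun_prop, fun t => ?_⟩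
      simp only [hunit, hpow, map_zero, add_zero]
    · refine ⟨fun _ => 0, fun x => ((x - c) / R) ^ k, by fun_prop, by fun_prop, fun t => ?_⟩
      simp only [hunit, fourier_neg, hpow, zero_add]
  | zero => exact ⟨fun _ => 0, fun _ => 0, by fun_prop, by fun_prop, fun t => by simp⟩
  | add F₁ F₂ _ _ ih₁ ih₂ =>
    obtain ⟨g₁, h₁, hg₁, hh₁, hF₁⟩ := ih₁
    obtain ⟨g₂, h₂, hg₂, hh₂, hF₂⟩ := ih₂
    refine ⟨fun x => g₁ x + g₂ x, fun x => h₁ x + h₂ x, by fun_prop, by fun_prop, fun t => ?_⟩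
    rw [ContinuousMap.add_apply, hF₁, hF₂, map_add]
    ring
  | smul a F _ ih =>
    obtain ⟨g, h, hg, hh, hF⟩ := ih
    refine ⟨fun x => a * g x, fun x => (starRingEnd ℂ) a * h x, by fun_prop, by fun_prop,
      fun t => ?_⟩
    rw [ContinuousMap.smul_apply, hF, map_mul, Complex.conj_conj, smul_eq_mul, mul_add]

lemma exists_add_mul_fourier_eq {c x : ℂ} {R : ℝ} (hx : x ∈ sphere c R) :
    ∃ t : AddCircle (2 * π), c + R * fourier 1 t = x := by
  refine ⟨((x - c).arg : ℝ), ?_⟩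
  have harg : 2 * π * I * ((1 : ℤ) : ℂ) * ((x - c).arg : ℂ) / ((2 * π : ℝ) : ℂ)
      = (x - c).arg * I := by
    push_cast
    field_simp
  rw [fourier_coe_apply, harg, ← mem_sphere_iff_norm.1 hx, Complex.norm_mul_exp_arg_mul_I,
    add_sub_cancel]

lemma exists_entire_re_near_on_sphere {v : ℂ → ℝ} (hv : Continuous v) (c : ℂ) {R : ℝ}
    (hR : R ≠ 0) {ε : ℝ} (hε : 0 < ε) :
    ∃ h : ℂ → ℂ, Differentiable ℂ h ∧ ∀ x ∈ sphere c R, |v x - (h x).re| ≤ ε := by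
  have : Fact (0 < 2 * π) := ⟨Real.two_pi_pos⟩
  let V : C(AddCircle (2 * π), ℂ) := ⟨fun t => v (c + R * fourier 1 t), by fun_prop⟩
  have hV : V ∈ (Submodule.span ℂ (range (fourier (T := 2 * π)))).topologicalClosure :=
    span_fourier_closure_eq_top (T := 2 * π) ▸ Submodule.mem_top
  obtain ⟨F, hF, hVF⟩ := Metric.mem_closure_iff.1 hV ε hε
  obtain ⟨g, h, hg, hh, hFgh⟩ := exists_entire_add_conj_of_mem_span_fourier (c := c) hR hF
  refine ⟨fun x => g x + h x, by fun_prop, fun x hx => ?_⟩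
  obtain ⟨t, rfl⟩ := exists_add_mul_fourier_eq hx
  calc |v (c + R * fourier 1 t) - (g (c + R * fourier 1 t) + h (c + R * fourier 1 t)).re|
      = |(V t - F t).re| := by
        rw [hFgh, Complex.sub_re, Complex.add_re, Complex.add_re, Complex.conj_re]; rfl
    _ ≤ ‖V t - F t‖ := Complex.abs_re_le_norm _
    _ ≤ ε := by
        rw [← dist_eq_norm]
        exact (ContinuousMap.dist_apply_le_dist t).trans hVF.le

lemma continuous_circleAverage {v : ℂ → ℝ} (hv : Continuous v) (c : ℂ) :
    Continuous (Real.circleAverage v c) := by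
  have hcont : Continuous (Function.uncurry fun r θ => v (circleMap c r θ)) := by
    simp only [Function.uncurry_def, circleMap]
    fun_prop
  have hint := intervalIntegral.continuous_parametric_intervalIntegral_of_continuous'
    (μ := volume) hcont 0 (2 * π)
  exact hint.const_smul (2 * π)⁻¹

lemma setIntegral_circleMap_eq_circleAverage (v : ℂ → ℝ) (c : ℂ) (r : ℝ) :
    ∫ θ in Ioo (-π) π, v (circleMap c r θ) = 2 * π * Real.circleAverage v c r := by
  rw [Real.circleAverage_eq_integral_add (-π), smul_eq_mul,
    mul_inv_cancel_left₀ Real.two_pi_pos.ne',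
    intervalIntegral.integral_comp_add_right (fun θ => v (circleMap c r θ)),
    intervalIntegral.integral_of_le (by linarith [Real.pi_pos]), integral_Ioc_eq_integral_Ioo]
  ring_nf

lemma setIntegral_ball_eq_setIntegral_circleMap (v : ℂ → ℝ) (c : ℂ) (R : ℝ) :
    ∫ x in ball c R, v x
      = ∫ p in Ioo 0 R ×ˢ Ioo (-π) π, p.1 * v (circleMap c p.1 p.2) := by
  calc ∫ x in ball c R, v x = ∫ y, (ball 0 R).indicator (fun y => v (c + y)) y := by
        rw [← integral_indicator measurableSet_ball, ← integral_add_left_eq_self _ c]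
        simp [indicator]
    _ = ∫ p in Ioo 0 R ×ˢ Ioo (-π) π, p.1 * v (circleMap c p.1 p.2) := by
        rw [← Complex.integral_comp_polarCoord_symm, polarCoord_target,
          ← integral_indicator (measurableSet_Ioi.prod measurableSet_Ioo),
          ← integral_indicator (measurableSet_Ioo.prod measurableSet_Ioo)]
        congr 1 with ⟨t, θ⟩
        by_cases ht : 0 < t <;> by_cases htR : t < R <;>
          simp [indicator, Complex.polarCoord_symm_apply, circleMap, Complex.exp_mul_I, ht, htR,
            abs_of_pos]

lemma setIntegral_ball_eq_integral_circleAverage {v : ℂ → ℝ} (hv : Continuous v) (c : ℂ) {R : ℝ}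
    (hR : 0 ≤ R) :
    ∫ x in ball c R, v x = ∫ t in (0)..R, t * (2 * π * Real.circleAverage v c t) := by
  have hcont : Continuous fun p : ℝ × ℝ => p.1 * v (circleMap c p.1 p.2) := by
    simp only [circleMap]
    fun_prop
  have hint : IntegrableOn (fun p : ℝ × ℝ => p.1 * v (circleMap c p.1 p.2))
      (Ioo 0 R ×ˢ Ioo (-π) π) :=
    (hcont.continuousOn.integrableOn_compact (isCompact_Icc.prod isCompact_Icc)).mono_set
      (prod_mono Ioo_subset_Icc_self Ioo_subset_Icc_self)
  rw [setIntegral_ball_eq_setIntegral_circleMap, Measure.volume_eq_prod, setIntegral_prod _ hint,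
    intervalIntegral.integral_of_le hR, integral_Ioc_eq_integral_Ioo]
  simp only [integral_const_mul, setIntegral_circleMap_eq_circleAverage]

namespace NonnegSubharmonic

variable {v : ℂ → ℝ}

lemma le_circleAverage (hv : NonnegSubharmonic v) (c : ℂ) {R : ℝ} (hR : 0 < R) :
    v c ≤ Real.circleAverage v c R := by
  refine le_of_forall_pos_le_add fun ε hε => ?_
  obtain ⟨h, hh, hvh⟩ := exists_entire_re_near_on_sphere hv.continuous c hR.ne' (half_pos hε)
  have hupper : v c ≤ (h c + (ε / 2 : ℝ)).re :=
    hv.le_re_of_le_re_on_sphere (h := fun x => h x + (ε / 2 : ℝ)) (by fun_prop) hR fun x hx => by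
      rw [Complex.add_re, Complex.ofReal_re]
      linarith [(abs_le.1 (hvh x hx)).2]
  have hlower : (h c - (ε / 2 : ℝ)).re ≤ Real.circleAverage v c R := by
    have hd : Differentiable ℂ fun x => h x - (ε / 2 : ℝ) := by fun_prop
    rw [← circleAverage_re_of_differentiable hd c R]
    refine Real.circleAverage_mono (circleIntegrable_of_continuous
      (Complex.continuous_re.comp hd.continuous) c R)
      (circleIntegrable_of_continuous hv.continuous c R) fun x hx => ?_
    rw [abs_of_pos hR] at hx
    rw [Complex.sub_re, Complex.ofReal_re]
    linarith [(abs_le.1 (hvh x hx)).1]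
  rw [Complex.add_re, Complex.ofReal_re] at hupper
  rw [Complex.sub_re, Complex.ofReal_re] at hlower
  linarith

lemma mul_area_le_setIntegral_ball (hv : NonnegSubharmonic v) (c : ℂ) {R : ℝ} (hR : 0 ≤ R) :
    v c * (π * R ^ 2) ≤ ∫ x in ball c R, v x := by
  rw [setIntegral_ball_eq_integral_circleAverage hv.continuous c hR]
  calc v c * (π * R ^ 2) = ∫ t in (0)..R, t * (2 * π * v c) := by
        rw [intervalIntegral.integral_mul_const, integral_id]; ring
    _ ≤ ∫ t in (0)..R, t * (2 * π * Real.circleAverage v c t) := by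
        have havg := continuous_circleAverage hv.continuous c
        refine intervalIntegral.integral_mono_on_of_le_Ioo hR
          (Continuous.intervalIntegrable (by fun_prop) _ _)
          (Continuous.intervalIntegrable (by fun_prop) _ _) fun t ht => ?_
        have := ht.1
        gcongr
        exact hv.le_circleAverage c ht.1

lemma mul_area_le_mul_volume (hv : NonnegSubharmonic v) (c : ℂ) {R S : ℝ} (hR : 0 ≤ R)
    {E : Set ℂ} (hE : MeasurableSet E) (hvE : ∀ x ∉ E, v x = 0) (hS : ∀ x ∈ ball c R, v x ≤ S) :
    v c * (π * R ^ 2) ≤ S * volume.real (E ∩ ball c R) := by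
  have hfin : volume (E ∩ ball c R) < ⊤ :=
    (measure_mono inter_subset_right).trans_lt measure_ball_lt_top
  have hint : IntegrableOn v (E ∩ ball c R) :=
    (hv.continuous.continuousOn.integrableOn_compact (isCompact_closedBall c R)).mono_set
      (inter_subset_right.trans ball_subset_closedBall)
  calc v c * (π * R ^ 2) ≤ ∫ x in ball c R, v x := hv.mul_area_le_setIntegral_ball c hR
    _ = ∫ x in ball c R, E.indicator v x := by
        rw [indicator_eq_self.2 fun x hx => by_contra fun hxE => hx (hvE x hxE)]
    _ = ∫ x in E ∩ ball c R, v x := by rw [setIntegral_indicator hE, inter_comm]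
    _ ≤ ∫ _ in E ∩ ball c R, S :=
        setIntegral_mono_on hint (integrableOn_const hfin.ne) (hE.inter measurableSet_ball)
          fun x hx => hS x hx.2
    _ = S * volume.real (E ∩ ball c R) := by rw [setIntegral_const, smul_eq_mul, mul_comm]

end NonnegSubharmonic

end Subharmonic

lemma disjoint_frontier_connectedComponentIn {X : Type*} [TopologicalSpace X]
    [LocallyConnectedSpace X] {U : Set X} (hU : IsOpen U) (x : X) :
    Disjoint (frontier (connectedComponentIn U x)) U := by
  refine Set.disjoint_left.2 fun y hy hyU => hy.2 ?_
  rw [hU.connectedComponentIn.interior_eq]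
  obtain ⟨w, hwy, hwx⟩ := mem_closure_iff.1 hy.1 _ (hU.connectedComponentIn (x := y))
    (mem_connectedComponentIn hyU)
  rw [connectedComponentIn_eq hwx, ← connectedComponentIn_eq hwy]
  exact mem_connectedComponentIn hyU

section Strip

open Metric MeasureTheory
open scoped Real

lemma volume_lt_top_of_disjoint_translates {E : Set ℂ} (hE : MeasurableSet E) {M : ℝ}
    (hM : ∀ z ∈ E, |z.im| ≤ M) (hdisj : ∀ k : ℕ, 1 ≤ k → ∀ z ∈ E, z + k ∉ E) :
    volume E < ⊤ := by
  let S : ℤ → Set ℂ := fun n => E ∩ {z | ⌊z.re⌋ = n}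
  let T : ℤ → Set ℂ := fun n => (· + (n : ℂ)) ⁻¹' S n
  have hS_meas (n : ℤ) : MeasurableSet (S n) :=
    hE.inter ((Int.measurable_floor.comp Complex.measurable_re) (measurableSet_singleton n))
  have hT_meas (n : ℤ) : MeasurableSet (T n) := measurable_add_const _ (hS_meas n)
  have hE_union : E = ⋃ n, S n := by ext z; simp [S]
  have hS_disj : Pairwise (Function.onFun Disjoint S) := fun a b hab =>
    Set.disjoint_left.2 fun z ha hb => hab (ha.2.symm.trans hb.2)
  have hT_disj_of_lt {a b : ℤ} (hab : a < b) : Disjoint (T a) (T b) := by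
    refine Set.disjoint_left.2 fun z ha hb => hdisj (b - a).toNat (by lia) _ ha.1 ?_
    have hcast : (((b - a).toNat : ℕ) : ℂ) = b - a := by
      rw [← Int.cast_natCast, Int.toNat_of_nonneg (by lia), Int.cast_sub]
    rw [hcast, add_assoc, add_sub_cancel]
    exact hb.1
  have hT_disj : Pairwise (Function.onFun Disjoint T) := fun a b hab =>
    hab.lt_or_gt.elim hT_disj_of_lt fun h => (hT_disj_of_lt h).symm
  have hT_sub : ⋃ n, T n ⊆ closedBall 0 (1 + M) := by
    refine iUnion_subset fun n z hz => ?_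
    have him := hM _ hz.1
    have hre : ⌊(z + n).re⌋ = n := hz.2
    rw [Complex.add_im, Complex.intCast_im, add_zero] at him
    rw [Complex.add_re, Complex.intCast_re, Int.floor_add_intCast, add_eq_right,
      Int.floor_eq_zero_iff] at hre
    rw [mem_closedBall_zero_iff]
    refine (Complex.norm_le_abs_re_add_abs_im z).trans (add_le_add ?_ him)
    rw [abs_of_nonneg hre.1]
    exact hre.2.le
  calc volume E = volume (⋃ n, T n) := by
        rw [hE_union, measure_iUnion hS_disj hS_meas, measure_iUnion hT_disj hT_meas]
        simp only [T, measure_preimage_add_right]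
    _ ≤ volume (closedBall (0 : ℂ) (1 + M)) := measure_mono hT_sub
    _ < ⊤ := measure_closedBall_lt_top

lemma exists_volume_re_lt_neg_lt {E : Set ℂ} (hE : MeasurableSet E) (hvol : volume E < ⊤) {ε : ℝ}
    (hε : 0 < ε) : ∃ n : ℕ, volume.real (E ∩ {z | z.re < -n}) < ε := by
  have hlim := tendsto_measure_iInter_atTop (μ := volume) (s := fun n : ℕ => E ∩ {z | z.re < -n})
    (fun n => (hE.inter (measurableSet_lt Complex.measurable_re
      measurable_const)).nullMeasurableSet)
    (fun a b hab => inter_subset_inter_right E fun z hz =>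
      lt_of_lt_of_le (mem_ofPred.1 hz) (neg_le_neg (Nat.cast_le.2 hab)))
    ⟨0, ((measure_mono inter_subset_left).trans_lt hvol).ne⟩
  have hempty : ⋂ n : ℕ, E ∩ {z : ℂ | z.re < -n} = ∅ := by
    refine eq_empty_of_forall_notMem fun z hz => ?_
    obtain ⟨n, hn⟩ := exists_nat_gt (-z.re)
    have hzn : z.re < -n := (mem_iInter.1 hz n).2
    linarith
  rw [hempty, measure_empty] at hlim
  exact (((ENNReal.tendsto_toReal ENNReal.zero_ne_top).comp hlim).eventually_lt_const
    (by rwa [ENNReal.toReal_zero])).exists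

namespace NonnegSubharmonic

variable {u v : ℂ → ℝ} {E : Set ℂ}

lemma indicator_connectedComponentIn (hu : NonnegSubharmonic u) (z₀ : ℂ) :
    NonnegSubharmonic ((connectedComponentIn {z | 0 < u z} z₀).indicator u) := by
  have hU : IsOpen {z | 0 < u z} := isOpen_lt continuous_const hu.continuous
  have hE : IsOpen (connectedComponentIn {z | 0 < u z} z₀) := hU.connectedComponentIn
  refine ⟨?_, fun z => indicator_nonneg (fun z _ => hu.nonneg z) z, fun z hz => ?_⟩
  · refine continuous_indicator (fun a ha => ?_) hu.continuous.continuousOn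
    by_contra hne
    exact Set.disjoint_left.1 (disjoint_frontier_connectedComponentIn hU z₀) ha
      ((hu.nonneg a).lt_of_ne' hne)
  · have hzE := mem_of_indicator_ne_zero hz.ne'
    obtain ⟨ρ, hρ, hball⟩ := Metric.isOpen_iff.1 hE z hzE
    filter_upwards [hu.eventually_le_circleAverage z, Ioo_mem_nhdsGT hρ] with r hr hrρ
    rw [indicator_of_mem hzE]
    refine hr.trans_eq (Real.circleAverage_congr_sphere fun x hx => ?_)
    rw [abs_of_pos hrρ.1] at hx
    rw [indicator_of_mem (hball (sphere_subset_closedBall.trans (closedBall_subset_ball hrρ.2) hx))]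

lemma exists_lt_of_volume_lt_top (hv : NonnegSubharmonic v) (hE : MeasurableSet E)
    (hvE : ∀ x ∉ E, v x = 0) (hvol : volume E < ⊤) {z : ℂ} (hz : 0 < v z) (S : ℝ) :
    ∃ x, S < v x := by
  by_contra! hS
  have harea (R : ℝ) (hR : 0 ≤ R) : v z * (π * R ^ 2) ≤ S * volume.real E :=
    (hv.mul_area_le_mul_volume z hR hE hvE fun x _ => hS x).trans
      (mul_le_mul_of_nonneg_left (measureReal_mono inter_subset_left hvol.ne)
        ((hv.nonneg z).trans (hS z)))
  have htop : Tendsto (fun R : ℝ => v z * (π * R ^ 2)) atTop atTop :=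
    ((tendsto_pow_atTop two_ne_zero).const_mul_atTop Real.pi_pos).const_mul_atTop hz
  obtain ⟨R, hR, hR₀⟩ := ((htop.eventually_gt_atTop _).and (eventually_ge_atTop 0)).exists
  exact (harea R hR₀).not_gt hR

lemma exists_mem_ball_mul_lt (hv : NonnegSubharmonic v) (hE : MeasurableSet E)
    (hvE : ∀ x ∉ E, v x = 0) {z : ℂ} (hz : 0 < v z) {A : ℝ} (hA : 0 < A)
    (hvol : volume.real (E ∩ ball z 1) < π / A) : ∃ x ∈ ball z 1, A * v z < v x := by
  by_contra! hle
  have harea := hv.mul_area_le_mul_volume z zero_le_one hE hvE hle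
  have : A * v z * volume.real (E ∩ ball z 1) < A * v z * (π / A) := by gcongr
  have : A * v z * (π / A) = v z * π := by field_simp
  linarith

lemma exists_mul_lt_of_volume_re_lt (hv : NonnegSubharmonic v) (hE : MeasurableSet E)
    (hvE : ∀ x ∉ E, v x = 0) (hvol : volume E < ⊤) {z : ℂ} (hz : 0 < v z) {A N : ℝ} (hA : 0 < A)
    (hN : volume.real (E ∩ {x | x.re < -N}) < π / A) (hre : z.re < -(N + 1)) :
    ∃ x, A * v z < v x ∧ z.re - 1 ≤ x.re := by
  have hball (x : ℂ) (hx : x ∈ ball z 1) : |x.re - z.re| < 1 :=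
    (Complex.abs_re_le_norm (x - z)).trans_lt (mem_ball_iff_norm.1 hx)
  have hsub : ball z 1 ⊆ {x | x.re < -N} := fun x hx => by
    change x.re < -N
    linarith [(abs_lt.1 (hball x hx)).2]
  obtain ⟨x, hx, hzx⟩ := hv.exists_mem_ball_mul_lt hE hvE hz hA
    ((measureReal_mono (inter_subset_inter_right E hsub)
      ((measure_mono inter_subset_left).trans_lt hvol).ne).trans_lt hN)
  exact ⟨x, hzx, by linarith [(abs_lt.1 (hball x hx)).1]⟩

/-- Moving left by at most one unit gains a factor `2 * D`, whereas the majorant only gains `D`. -/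
lemma eq_zero_of_le_rpow_of_volume_lt_top (hv : NonnegSubharmonic v) (hE : MeasurableSet E)
    (hvE : ∀ x ∉ E, v x = 0) (hvol : volume E < ⊤) {C D : ℝ} (hC : 0 < C) (hD : 1 < D)
    (hle : ∀ z, v z ≤ C * D ^ (-z.re)) (z : ℂ) : v z = 0 := by
  have hD₀ : 0 < D := by linarith
  by_contra hne
  obtain ⟨N, hN⟩ := exists_volume_re_lt_neg_lt hE hvol (ε := π / (2 * D)) (by positivity)
  obtain ⟨z₁, hz₁⟩ := hv.exists_lt_of_volume_lt_top hE hvE hvol ((hv.nonneg z).lt_of_ne' hne)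
    (C * D ^ ((N : ℝ) + 1))
  have hz₁_pos : 0 < v z₁ := lt_trans (by positivity) hz₁
  have hre (x : ℂ) (hx : v z₁ ≤ v x) : x.re < -(N + 1) := by
    have hlt := lt_of_mul_lt_mul_left (hz₁.trans_le (hx.trans (hle x))) hC.le
    linarith [(Real.rpow_lt_rpow_left_iff hD).1 hlt]
  have hstep (x : ℂ) (hx : v z₁ ≤ v x) : ∃ y, 2 * D * v x < v y ∧ x.re - 1 ≤ y.re :=
    hv.exists_mul_lt_of_volume_re_lt hE hvE hvol (hz₁_pos.trans_le hx) (by positivity) hN (hre x hx)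
  have hiter (n : ℕ) : ∃ x, (2 * D) ^ n * v z₁ ≤ v x ∧ z₁.re - n ≤ x.re := by
    induction n with
    | zero => exact ⟨z₁, by simp⟩
    | succ n ih =>
      obtain ⟨x, hx, hxre⟩ := ih
      obtain ⟨y, hy, hyre⟩ := hstep x ((le_mul_of_one_le_left hz₁_pos.le
        (one_le_pow₀ (by linarith))).trans hx)
      refine ⟨y, le_trans ?_ hy.le, by push_cast; linarith⟩
      rw [pow_succ', mul_assoc]
      gcongr
  obtain ⟨n, hn⟩ := pow_unbounded_of_one_lt (C * D ^ (-z₁.re) / v z₁) one_lt_two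
  obtain ⟨x, hx, hxre⟩ := hiter n
  rw [div_lt_iff₀ hz₁_pos] at hn
  have hbound : (2 * D) ^ n * v z₁ ≤ D ^ n * (C * D ^ (-z₁.re)) :=
    calc (2 * D) ^ n * v z₁ ≤ C * D ^ (-x.re) := hx.trans (hle x)
      _ ≤ C * D ^ (-z₁.re + n) := by gcongr; exacts [hD.le, by linarith]
      _ = D ^ n * (C * D ^ (-z₁.re)) := by rw [Real.rpow_add hD₀, Real.rpow_natCast]; ring
  rw [mul_pow, mul_comm (2 ^ n), mul_assoc, mul_le_mul_iff_right₀ (by positivity)] at hbound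
  exact hbound.not_gt hn

end NonnegSubharmonic

variable {u : ℂ → ℝ} {D M : ℝ}

lemma exists_le_mul_rpow_of_translate (hc : Continuous u) (hD : 1 < D)
    (hu : ∀ z, u z = D * u (z + 1)) (hM : ∀ z : ℂ, M ≤ |z.im| → u z = 0) :
    ∃ C > 0, ∀ z, u z ≤ C * D ^ (-z.re) := by
  have hD₀ : 0 < D := by linarith
  let h : ℂ → ℝ := fun z => u z * D ^ z.re
  have hh : Continuous h := hc.mul
    ((Real.continuous_const_rpow hD₀.ne').comp Complex.continuous_re)
  have hper : Function.Periodic h 1 := fun z => by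
    simp only [h, hu z, Complex.add_re, Complex.one_re, Real.rpow_add hD₀, Real.rpow_one]
    ring
  obtain ⟨C, hC⟩ := (isCompact_closedBall (0 : ℂ) (1 + M)).exists_bound_of_continuousOn
    hh.continuousOn
  refine ⟨max C 1, by positivity, fun z => ?_⟩
  rw [Real.rpow_neg hD₀.le, ← div_eq_mul_inv, le_div_iff₀ (by positivity)]
  rcases le_or_gt M |z.im| with hz | hz
  · rw [hM z hz, zero_mul]
    positivity
  · change h z ≤ max C 1
    rw [← hper.sub_zsmul_eq ⌊z.re⌋]
    refine le_max_of_le_left ((le_abs_self _).trans (hC _ (mem_closedBall_zero_iff.2 ?_)))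
    refine (Complex.norm_le_abs_re_add_abs_im _).trans (add_le_add ?_ ?_)
    · have hfract : (z - ⌊z.re⌋ • (1 : ℂ)).re = Int.fract z.re := by simp
      rw [hfract, abs_of_nonneg (Int.fract_nonneg _)]
      exact (Int.fract_lt_one _).le
    · have him : (z - ⌊z.re⌋ • (1 : ℂ)).im = z.im := by simp
      rw [him]
      exact hz.le

lemma eq_pow_mul_of_translate (hu : ∀ z, u z = D * u (z + 1)) (k : ℕ) (z : ℂ) :
    u z = D ^ k * u (z + k) := by
  induction k with
  | zero => simp
  | succ k ih => rw [ih, hu, Nat.cast_succ, ← add_assoc, pow_succ, mul_assoc]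

lemma add_natCast_mem_connectedComponentIn_of_translate (hD : 1 < D)
    (hu : ∀ z, u z = D * u (z + 1)) {z₀ z : ℂ} (hz₀ : 0 < u z₀) {k : ℕ}
    (hz : z ∈ connectedComponentIn {z | 0 < u z} z₀)
    (hzk : z + k ∈ connectedComponentIn {z | 0 < u z} z₀) :
    z₀ + k ∈ connectedComponentIn {z | 0 < u z} z₀ := by
  have hpos : {x | 0 < u x} ⊆ (· + (k : ℂ)) ⁻¹' {x | 0 < u x} := fun x hx => by
    rw [mem_ofPred, eq_pow_mul_of_translate hu k x] at hx
    exact pos_of_mul_pos_right hx (by positivity)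
  have himage : (· + (k : ℂ)) '' connectedComponentIn {z | 0 < u z} z₀
      ⊆ connectedComponentIn {z | 0 < u z} (z + k) :=
    (isPreconnected_connectedComponentIn.image _ (by fun_prop)).subset_connectedComponentIn
      (mem_image_of_mem _ hz)
      (image_subset_iff.2 ((connectedComponentIn_subset _ _).trans hpos))
  rw [connectedComponentIn_eq hzk]
  exact himage (mem_image_of_mem _ (mem_connectedComponentIn (F := {z | 0 < u z}) hz₀))

/-- Otherwise the translates of the component are pairwise disjoint, so it has finite area. -/
lemma exists_add_natCast_mem_connectedComponentIn (hsub : NonnegSubharmonic u) (hD : 1 < D)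
    (hu : ∀ z, u z = D * u (z + 1)) (hM : ∀ z : ℂ, M ≤ |z.im| → u z = 0) {z₀ : ℂ}
    (hz₀ : 0 < u z₀) : ∃ k : ℕ, 1 ≤ k ∧ z₀ + k ∈ connectedComponentIn {z | 0 < u z} z₀ := by
  by_contra! hnot
  have hE : MeasurableSet (connectedComponentIn {z | 0 < u z} z₀) :=
    (isOpen_lt continuous_const hsub.continuous).connectedComponentIn.measurableSet
  have hvol : volume (connectedComponentIn {z | 0 < u z} z₀) < ⊤ := by
    refine volume_lt_top_of_disjoint_translates hE (M := M) (fun z hz => ?_) fun k hk z hz hzk =>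
      hnot k hk (add_natCast_mem_connectedComponentIn_of_translate hD hu hz₀ hz hzk)
    by_contra! hzM
    exact (connectedComponentIn_subset _ _ hz).ne' (hM z hzM.le)
  obtain ⟨C, hC, hle⟩ := exists_le_mul_rpow_of_translate hsub.continuous hD hu hM
  have hzero := (hsub.indicator_connectedComponentIn z₀).eq_zero_of_le_rpow_of_volume_lt_top hE
    (fun x hx => indicator_of_notMem hx u) hvol hC hD
    (fun z => (indicator_le_self' (fun z _ => hsub.nonneg z) z).trans (hle z)) z₀
  rw [indicator_of_mem (mem_connectedComponentIn (F := {z | 0 < u z}) hz₀)] at hzero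
  exact hz₀.ne' hzero

end Strip

section Green

open Metric

variable {ω z : ℂ}

lemma Pq_eq_mul (ω z : ℂ) : Pq ω z = z * (ω + z) := by unfold Pq; ring

lemma differentiable_Pq (ω : ℂ) : Differentiable ℂ (Pq ω) := by unfold Pq; fun_prop

lemma differentiable_Pq_iterate (ω : ℂ) (n : ℕ) : Differentiable ℂ (Pq ω)^[n] :=
  (differentiable_Pq ω).iterate n

lemma continuous_Pq_iterate (ω : ℂ) (n : ℕ) : Continuous (Pq ω)^[n] :=
  (differentiable_Pq_iterate ω n).continuous

lemma norm_mul_norm_sub_one_le_norm_Pq (hω : ‖ω‖ ≤ 1) (z : ℂ) : ‖z‖ * (‖z‖ - 1) ≤ ‖Pq ω z‖ := by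
  rw [Pq_eq_mul, norm_mul, add_comm]
  gcongr
  linarith [norm_sub_le_norm_add z ω]

lemma norm_lt_norm_Pq (hω : ‖ω‖ ≤ 1) (hz : 2 < ‖z‖) : ‖z‖ < ‖Pq ω z‖ := by
  nlinarith [norm_mul_norm_sub_one_le_norm_Pq hω z]

lemma posLog_norm_Pq_le (hω : ‖ω‖ ≤ 1) (z : ℂ) :
    Real.posLog ‖Pq ω z‖ ≤ 2 * Real.posLog ‖z‖ + Real.log 2 := by
  have hω0 : Real.posLog ‖ω‖ = 0 := (Real.posLog_eq_zero_iff _).2 (by rwa [abs_norm])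
  rw [Pq_eq_mul, norm_mul]
  linarith [Real.posLog_norm_add_le ω z, Real.posLog_mul (x := ‖z‖) (y := ‖ω + z‖)]

lemma two_mul_posLog_norm_le (hω : ‖ω‖ ≤ 1) (z : ℂ) :
    2 * Real.posLog ‖z‖ ≤ Real.posLog ‖Pq ω z‖ + 2 * Real.log 2 := by
  have hlog2 : Real.posLog 2 = Real.log 2 := Real.posLog_eq_log (by norm_num)
  rcases le_or_gt ‖z‖ 2 with hz | hz
  · linarith [Real.posLog_le_posLog (norm_nonneg z) hz, Real.posLog_nonneg (x := ‖Pq ω z‖)]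
  · have hsq : ‖z‖ ^ 2 ≤ 2 * ‖Pq ω z‖ := by nlinarith [norm_mul_norm_sub_one_le_norm_Pq hω z]
    have hmono := Real.posLog_le_posLog (by positivity) hsq
    rw [Real.posLog_pow, Nat.cast_ofNat] at hmono
    linarith [Real.posLog_mul (x := 2) (y := ‖Pq ω z‖), Real.log_pos one_lt_two]

lemma abs_posLog_norm_Pq_sub_le (hω : ‖ω‖ ≤ 1) (z : ℂ) :
    |Real.posLog ‖Pq ω z‖ - 2 * Real.posLog ‖z‖| ≤ 2 * Real.log 2 := by
  rw [abs_le]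
  constructor <;>
    linarith [posLog_norm_Pq_le hω z, two_mul_posLog_norm_le hω z, Real.log_pos one_lt_two]

/-- The `n`-th approximation `log⁺ ‖P_ω^n z‖ / 2 ^ n` of the Green's function. -/
noncomputable def greenApprox (ω : ℂ) (n : ℕ) (z : ℂ) : ℝ := Real.posLog ‖(Pq ω)^[n] z‖ / 2 ^ n

/-- The Green's function of the filled Julia set of `P_ω`. It vanishes exactly at the points with
bounded orbit, and is used to single out the basin of infinity. -/
noncomputable def green (ω : ℂ) (z : ℂ) : ℝ := limUnder atTop (fun n => greenApprox ω n z)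

lemma greenApprox_nonneg (ω : ℂ) (n : ℕ) (z : ℂ) : 0 ≤ greenApprox ω n z :=
  div_nonneg Real.posLog_nonneg (by positivity)

lemma continuous_greenApprox (ω : ℂ) (n : ℕ) : Continuous (greenApprox ω n) := by
  unfold greenApprox
  have := continuous_Pq_iterate ω n
  fun_prop

lemma dist_greenApprox_succ_le (hω : ‖ω‖ ≤ 1) (z : ℂ) (n : ℕ) :
    dist (greenApprox ω n z) (greenApprox ω (n + 1) z) ≤ (2 * Real.log 2) / 2 / 2 ^ n := by
  have hdiff : greenApprox ω (n + 1) z - greenApprox ω n z =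
      (Real.posLog ‖Pq ω ((Pq ω)^[n] z)‖ - 2 * Real.posLog ‖(Pq ω)^[n] z‖) / 2 ^ (n + 1) := by
    simp only [greenApprox, Function.iterate_succ_apply', pow_succ]
    field_simp
  rw [dist_comm, Real.dist_eq, hdiff, div_div, ← pow_succ', abs_div,
    abs_of_pos (a := (2 : ℝ) ^ (n + 1)) (by positivity)]
  gcongr
  exact abs_posLog_norm_Pq_sub_le hω _

lemma tendsto_greenApprox (hω : ‖ω‖ ≤ 1) (z : ℂ) :
    Tendsto (fun n => greenApprox ω n z) atTop (𝓝 (green ω z)) :=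
  (cauchySeq_of_le_geometric_two (dist_greenApprox_succ_le hω z)).tendsto_limUnder

lemma abs_greenApprox_sub_green_le (hω : ‖ω‖ ≤ 1) (z : ℂ) (n : ℕ) :
    |greenApprox ω n z - green ω z| ≤ 2 * Real.log 2 / 2 ^ n :=
  dist_le_of_le_geometric_two_of_tendsto (dist_greenApprox_succ_le hω z)
    (tendsto_greenApprox hω z) n

lemma tendsto_const_div_two_pow (c : ℝ) : Tendsto (fun n : ℕ => c / 2 ^ n) atTop (𝓝 0) :=
  tendsto_const_nhds.div_atTop (tendsto_pow_atTop_atTop_of_one_lt one_lt_two)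

lemma continuous_green (hω : ‖ω‖ ≤ 1) : Continuous (green ω) := by
  have hunif : TendstoUniformly (greenApprox ω) (green ω) atTop := by
    rw [Metric.tendstoUniformly_iff]
    intro ε hε
    filter_upwards [(tendsto_const_div_two_pow _).eventually_lt_const hε] with n hn z
    rw [dist_comm]
    exact (abs_greenApprox_sub_green_le hω z n).trans_lt hn
  exact hunif.continuous (.of_forall fun n => continuous_greenApprox ω n)

lemma green_nonneg (hω : ‖ω‖ ≤ 1) (z : ℂ) : 0 ≤ green ω z :=
  ge_of_tendsto' (tendsto_greenApprox hω z) fun n => greenApprox_nonneg ω n z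

lemma green_Pq (hω : ‖ω‖ ≤ 1) (z : ℂ) : green ω (Pq ω z) = 2 * green ω z := by
  have hshift := ((tendsto_add_atTop_iff_nat 1).2 (tendsto_greenApprox hω z)).const_mul 2
  refine tendsto_nhds_unique (tendsto_greenApprox hω (Pq ω z)) (hshift.congr fun n => ?_)
  simp only [greenApprox, Function.iterate_succ_apply, pow_succ]
  field_simp

lemma green_iterate (hω : ‖ω‖ ≤ 1) (n : ℕ) (z : ℂ) :
    green ω ((Pq ω)^[n] z) = 2 ^ n * green ω z := by
  induction n with
  | zero => simp
  | succ n ih => rw [Function.iterate_succ_apply', green_Pq hω, ih, pow_succ]; ring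

lemma green_eq_zero_of_norm_iterate_le (hω : ‖ω‖ ≤ 1) {K : ℝ} (hK : ∀ n, ‖(Pq ω)^[n] z‖ ≤ K) :
    green ω z = 0 :=
  tendsto_nhds_unique (tendsto_greenApprox hω z) <|
    squeeze_zero (fun n => greenApprox_nonneg ω n z)
      (fun n => div_le_div_of_nonneg_right (Real.posLog_le_posLog (norm_nonneg _) (hK n))
        (by positivity))
      (tendsto_const_div_two_pow (Real.posLog K))

lemma green_eq_zero_of_mem_basinAug (hω : ‖ω‖ ≤ 1) (hz : z ∈ basinAug ω) : green ω z = 0 := by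
  obtain ⟨K, hK⟩ := (Metric.isBounded_range_of_tendsto _ hz).exists_norm_le
  exact green_eq_zero_of_norm_iterate_le hω fun n => hK _ (mem_range_self n)

lemma norm_le_four_of_green_eq_zero (hω : ‖ω‖ ≤ 1) (hz : green ω z = 0) : ‖z‖ ≤ 4 := by
  have hle : Real.posLog ‖z‖ ≤ Real.log 4 := by
    have hclose := (abs_le.1 (abs_greenApprox_sub_green_le hω z 0)).2
    have hlog4 : Real.log 4 = 2 * Real.log 2 := by
      rw [show (4 : ℝ) = 2 ^ 2 by norm_num, Real.log_pow, Nat.cast_ofNat]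
    simpa [greenApprox, hz, hlog4] using hclose
  by_contra! hlt
  rw [Real.posLog_eq_log (by rw [abs_norm]; linarith)] at hle
  exact hlt.not_ge ((Real.log_le_log_iff (by linarith) (by norm_num)).1 hle)

lemma norm_iterate_le_four_of_green_eq_zero (hω : ‖ω‖ ≤ 1) (hz : green ω z = 0) (n : ℕ) :
    ‖(Pq ω)^[n] z‖ ≤ 4 :=
  norm_le_four_of_green_eq_zero hω (by rw [green_iterate hω, hz, mul_zero])

lemma greenApprox_eq_log_of_pos {n : ℕ} (hz : 0 < greenApprox ω n z) :
    (Pq ω)^[n] z ≠ 0 ∧ greenApprox ω n z = Real.log ‖(Pq ω)^[n] z‖ / 2 ^ n := by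
  have hgt : 1 < ‖(Pq ω)^[n] z‖ := by
    by_contra! hle
    rw [greenApprox, (Real.posLog_eq_zero_iff _).2 (by rwa [abs_norm]), zero_div] at hz
    exact hz.false
  exact ⟨norm_pos_iff.1 (one_pos.trans hgt), by
    rw [greenApprox, Real.posLog_eq_log (by rw [abs_norm]; exact hgt.le)]⟩

lemma circleAverage_greenApprox_comp {Ψ : ℂ → ℂ} {s : Set ℂ} (hs : IsOpen s)
    (hΨ : DifferentiableOn ℂ Ψ s) {n : ℕ} (hpos : ∀ x ∈ s, 0 < greenApprox ω n (Ψ x)) {r : ℝ}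
    (hr : closedBall z |r| ⊆ s) :
    Real.circleAverage (greenApprox ω n ∘ Ψ) z r = greenApprox ω n (Ψ z) := by
  have hlog : EqOn (greenApprox ω n ∘ Ψ)
      ((1 / 2 ^ n : ℝ) • fun x => Real.log ‖(Pq ω)^[n] (Ψ x)‖) (closedBall z |r|) := fun x hx => by
    rw [Function.comp_apply, (greenApprox_eq_log_of_pos (hpos x (hr hx))).2, Pi.smul_apply,
      smul_eq_mul, one_div_mul_eq_div]
  have hharm : InnerProductSpace.HarmonicOnNhd (fun x => Real.log ‖(Pq ω)^[n] (Ψ x)‖)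
      (closedBall z |r|) := fun x hx =>
    (((differentiable_Pq_iterate ω n).comp_differentiableOn hΨ).analyticAt
      (hs.mem_nhds (hr hx))).harmonicAt_log_norm (greenApprox_eq_log_of_pos (hpos x (hr hx))).1
  rw [Real.circleAverage_congr_sphere (hlog.mono sphere_subset_closedBall), Real.circleAverage_smul,
    hharm.circleAverage_eq]
  exact (hlog (mem_closedBall_self (abs_nonneg r))).symm

lemma greenApprox_le_circleAverage_green_comp (hω : ‖ω‖ ≤ 1) {Ψ : ℂ → ℂ} {s : Set ℂ}
    (hs : IsOpen s) (hΨ : DifferentiableOn ℂ Ψ s) {n : ℕ}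
    (hpos : ∀ x ∈ s, 0 < greenApprox ω n (Ψ x)) {r : ℝ} (hr : closedBall z |r| ⊆ s) :
    greenApprox ω n (Ψ z) ≤ Real.circleAverage (green ω ∘ Ψ) z r + 2 * Real.log 2 / 2 ^ n := by
  have hΨr : ContinuousOn Ψ (sphere z |r|) :=
    hΨ.continuousOn.mono (sphere_subset_closedBall.trans hr)
  have happrox : CircleIntegrable (greenApprox ω n ∘ Ψ) z r :=
    ((continuous_greenApprox ω n).comp_continuousOn hΨr).circleIntegrable'
  have hgreen : CircleIntegrable (green ω ∘ Ψ) z r :=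
    ((continuous_green hω).comp_continuousOn hΨr).circleIntegrable'
  have hconst : CircleIntegrable (fun _ : ℂ => 2 * Real.log 2 / 2 ^ n) z r :=
    continuousOn_const.circleIntegrable'
  rw [← circleAverage_greenApprox_comp hs hΨ hpos hr,
    ← Real.circleAverage_const (2 * Real.log 2 / 2 ^ n) z r,
    ← Real.circleAverage_add hgreen hconst]
  refine Real.circleAverage_mono happrox (hgreen.add hconst) fun x _ => ?_
  have := (abs_le.1 (abs_greenApprox_sub_green_le hω (Ψ x) n)).2
  simp only [Function.comp_apply, Pi.add_apply]
  linarith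

/-- Near a point where `green ω ∘ Ψ` is positive it is a uniform limit of the harmonic functions
`log ‖P_ω^n ∘ Ψ‖ / 2 ^ n`. -/
lemma green_comp_le_circleAverage (hω : ‖ω‖ ≤ 1) {Ψ : ℂ → ℂ}
    (hΨ : ∀ᶠ x in 𝓝 z, DifferentiableAt ℂ Ψ x) (hz : 0 < green ω (Ψ z)) :
    ∀ᶠ r in 𝓝[>] 0, green ω (Ψ z) ≤ Real.circleAverage (green ω ∘ Ψ) z r := by
  have hcont : ContinuousAt (green ω ∘ Ψ) z :=
    (continuous_green hω).continuousAt.comp hΨ.self_of_nhds.continuousAt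
  obtain ⟨ρ, hρ, hball⟩ := Metric.eventually_nhds_iff_ball.1
    (hΨ.and (hcont.eventually_const_lt (half_lt_self hz)))
  filter_upwards [Ioo_mem_nhdsGT hρ] with r ⟨hr, hrρ⟩
  have hsub : closedBall z |r| ⊆ ball z ρ := by
    rw [abs_of_pos hr]; exact closedBall_subset_ball hrρ
  have hle : ∀ᶠ n in atTop, greenApprox ω n (Ψ z) ≤
      Real.circleAverage (green ω ∘ Ψ) z r + 2 * Real.log 2 / 2 ^ n := by
    filter_upwards [(tendsto_const_div_two_pow (2 * Real.log 2)).eventually_lt_const (half_pos hz)]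
      with n hn
    refine greenApprox_le_circleAverage_green_comp hω isOpen_ball
      (fun x hx => (hball x hx).1.differentiableWithinAt) (fun x hx => ?_) hsub
    have hclose := (abs_le.1 (abs_greenApprox_sub_green_le hω (Ψ x) n)).1
    have hhalf := (hball x hx).2
    simp only [Function.comp_apply] at hhalf
    linarith
  have hlim := (tendsto_const_div_two_pow (2 * Real.log 2)).const_add
    (Real.circleAverage (green ω ∘ Ψ) z r)
  rw [add_zero] at hlim
  exact le_of_tendsto_of_tendsto (tendsto_greenApprox hω _) hlim hle

end Green

section ParabolicGerm

open Asymptotics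

variable {f : ℂ → ℂ} {m : ℕ} {a v ζ : ℂ}

lemma isBigO_sub_sub_deriv_mul_of_analyticAt {g : ℂ → ℂ} (hg : AnalyticAt ℂ g 0) :
    (fun z => g z - g 0 - deriv g 0 * z) =O[𝓝 0] fun z => z ^ 2 := by
  obtain ⟨F, hF, heq⟩ := hg.exists_eq_sum_add_pow_mul 2
  have hrem : (fun z => g z - g 0 - deriv g 0 * z) = fun z => z ^ 2 * F z := by
    ext z
    rw [heq z]
    simp [Finset.sum_range_succ]
    ring
  rw [hrem]
  simpa using (isBigO_refl (fun z : ℂ => z ^ 2) (𝓝 0)).mul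
    (hF.continuousAt.isBigO_one ℂ)

lemma isBigO_inv_one_add_pow (m : ℕ) :
    (fun x : ℂ => ((1 + x) ^ m)⁻¹ - 1 + m * x) =O[𝓝 0] fun x => x ^ 2 := by
  have hderiv : HasDerivAt (fun x : ℂ => ((1 + x) ^ m)⁻¹) (-m) 0 := by
    simpa using (((hasDerivAt_id (0 : ℂ)).const_add 1).fun_pow m).fun_inv (by simp)
  have han : AnalyticAt ℂ (fun x : ℂ => ((1 + x) ^ m)⁻¹) 0 :=
    ((analyticAt_const.add analyticAt_id).pow m).inv (by simp)
  simpa [hderiv.deriv] using isBigO_sub_sub_deriv_mul_of_analyticAt han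

lemma isBigO_pow_of_le {i j : ℕ} (h : i ≤ j) : (fun z : ℂ => z ^ j) =O[𝓝 0] fun z => z ^ i := by
  rcases h.eq_or_lt with rfl | h
  · exact isBigO_refl _ _
  · exact (isLittleO_pow_pow h).isBigO

/-- Germs at `0` of the form `z + a z ^ (m + 1) + O(z ^ (m + 2))` with `m ≥ 1` and `a ≠ 0`:
parabolic germs with multiplier `1` and `m` attracting directions. -/
structure IsParabolicGerm (f : ℂ → ℂ) (m : ℕ) (a : ℂ) : Prop where
  m_ne_zero : m ≠ 0
  a_ne_zero : a ≠ 0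
  analyticAt : AnalyticAt ℂ f 0
  isBigO : (fun z => f z - z - a * z ^ (m + 1)) =O[𝓝 0] fun z => z ^ (m + 2)

/-- The coordinate at infinity `-1 / (m a z ^ m)`, in which a parabolic germ with parameters `m` and
`a` is close to the translation by `1`. -/
noncomputable def parCoord (m : ℕ) (a z : ℂ) : ℂ := -1 / (m * a * z ^ m)

/-- The branch `v ζ ^ (-1 / m)`, on the plane slit along the negative reals, of the inverse of
`parCoord`. Its image is a sector about the half-line spanned by `v`. -/
noncomputable def parBranch (m : ℕ) (v ζ : ℂ) : ℂ := v * exp (-(log ζ) / m)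

/-- `v` is an attracting direction of the parabolic germs with parameters `m` and `a`, normalised so
that `parCoord m a v = 1`. Repelling directions are the attracting ones for `-a`. -/
def IsAttractingDir (m : ℕ) (a v : ℂ) : Prop := m * a * v ^ m = -1

namespace IsAttractingDir

lemma mul_ne_zero (hv : IsAttractingDir m a v) : (m * a * v ^ m : ℂ) ≠ 0 := by
  rw [IsAttractingDir] at hv
  rw [hv]
  exact neg_ne_zero.2 one_ne_zero

lemma m_ne_zero (hv : IsAttractingDir m a v) : m ≠ 0 := by
  rintro rfl
  simpa using hv.mul_ne_zero

lemma ne_zero (hv : IsAttractingDir m a v) : v ≠ 0 := by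
  rintro rfl
  simpa [hv.m_ne_zero] using hv.mul_ne_zero

lemma a_ne_zero (hv : IsAttractingDir m a v) : a ≠ 0 := by
  rintro rfl
  simpa using hv.mul_ne_zero

end IsAttractingDir

lemma parBranch_ne_zero (hv : v ≠ 0) (m : ℕ) (ζ : ℂ) : parBranch m v ζ ≠ 0 :=
  mul_ne_zero hv (exp_ne_zero _)

lemma parCoord_parBranch (hv : IsAttractingDir m a v) (hζ : ζ ≠ 0) :
    parCoord m a (parBranch m v ζ) = ζ := by
  have hm : (m : ℂ) ≠ 0 := Nat.cast_ne_zero.2 hv.m_ne_zero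
  rw [parCoord, parBranch, mul_pow, ← mul_assoc, hv, ← exp_nat_mul, mul_div_cancel₀ _ hm, exp_neg,
    exp_log hζ]
  field_simp

lemma norm_parBranch (m : ℕ) (v : ℂ) (hζ : ζ ≠ 0) :
    ‖parBranch m v ζ‖ = ‖v‖ * ‖ζ‖ ^ (-(1 / m : ℝ)) := by
  rw [parBranch, norm_mul, norm_exp, Real.rpow_def_of_pos (norm_pos_iff.2 hζ), ← ofReal_natCast,
    div_ofReal_re, neg_re, log_re]
  ring_nf

lemma differentiableAt_parBranch (m : ℕ) (v : ℂ) (hζ : ζ ∈ slitPlane) :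
    DifferentiableAt ℂ (parBranch m v) ζ := by
  have := differentiableAt_id.clog hζ
  unfold parBranch
  fun_prop (disch := assumption)

lemma parCoord_mul (m : ℕ) (a z t : ℂ) : parCoord m a (z * t) = parCoord m a z / t ^ m := by
  rw [parCoord, parCoord, mul_pow, ← mul_assoc, div_div]

lemma natCast_mul_norm_log_one_add_le {x : ℂ} (hm : m ≠ 0) (hx : ‖x‖ ≤ 1 / (2 * m)) :
    m * ‖log (1 + x)‖ ≤ 3 / 4 := by
  have hm1 : (1 : ℝ) ≤ m := mod_cast Nat.one_le_iff_ne_zero.2 hm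
  have hx2 : ‖x‖ ≤ 1 / 2 := hx.trans (one_div_le_one_div_of_le two_pos (by linarith))
  calc m * ‖log (1 + x)‖ ≤ m * (3 / 2 * (1 / (2 * m))) := by
        gcongr
        exact (norm_log_one_add_half_le_self hx2).trans (by gcongr)
    _ = 3 / 4 := by field_simp; norm_num

/-- A point at small relative distance from the sector `parBranch m v '' {0 < re}` lies on the same
branch. -/
lemma parBranch_parCoord (hv : IsAttractingDir m a v) (hζ : 0 < ζ.re) {w : ℂ}
    (hw : ‖w / parBranch m v ζ - 1‖ ≤ 1 / (2 * m)) : parBranch m v (parCoord m a w) = w := by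
  have hm : (m : ℂ) ≠ 0 := Nat.cast_ne_zero.2 hv.m_ne_zero
  have hζ0 : ζ ≠ 0 := by rintro rfl; exact hζ.false
  obtain ⟨x, rfl⟩ : ∃ x, w = parBranch m v ζ * (1 + x) :=
    ⟨w / parBranch m v ζ - 1, by field_simp [parBranch_ne_zero hv.ne_zero m ζ]; ring⟩
  rw [mul_div_cancel_left₀ _ (parBranch_ne_zero hv.ne_zero m ζ), add_sub_cancel_left] at hw
  have hlog := natCast_mul_norm_log_one_add_le hv.m_ne_zero hw
  have hx0 : 1 + x ≠ 0 := by
    intro hx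
    rw [eq_neg_of_add_eq_zero_right hx, norm_neg, norm_one, le_div_iff₀ (by
      have := hv.m_ne_zero; positivity)] at hw
    have : (1 : ℝ) ≤ m := mod_cast Nat.one_le_iff_ne_zero.2 hv.m_ne_zero
    linarith
  have hexp : parCoord m a (parBranch m v ζ * (1 + x)) = exp (log ζ - m * log (1 + x)) := by
    rw [parCoord_mul, parCoord_parBranch hv hζ0, exp_sub, exp_log hζ0, exp_nat_mul, exp_log hx0]
  have him : |(m * log (1 + x)).im| ≤ 3 / 4 := by
    refine (abs_im_le_norm _).trans ?_
    rwa [norm_mul, norm_natCast]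
  have harg : |(log ζ).im| < Real.pi / 2 := by
    rw [log_im]; exact abs_arg_lt_pi_div_two_iff.2 (Or.inl hζ)
  have hlogCoord : log (parCoord m a (parBranch m v ζ * (1 + x))) = log ζ - m * log (1 + x) := by
    rw [hexp]
    have hpi := Real.pi_gt_three
    obtain ⟨him₁, him₂⟩ := abs_le.1 him
    obtain ⟨harg₁, harg₂⟩ := abs_lt.1 harg
    refine log_exp ?_ ?_ <;> rw [sub_im] <;> linarith
  have hdiv : -(log ζ - m * log (1 + x)) / m = -(log ζ) / m + log (1 + x) := by field_simp; ring
  rw [parBranch, hlogCoord, hdiv, exp_add, exp_log hx0, ← mul_assoc, parBranch]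

namespace IsParabolicGerm

lemma map_zero (hf : IsParabolicGerm f m a) : f 0 = 0 := by
  obtain ⟨K, hK⟩ := hf.isBigO.bound
  simpa using hK.self_of_nhds

lemma isBigO_sub_self (hf : IsParabolicGerm f m a) :
    (fun z => f z - z) =O[𝓝 0] fun z => z ^ (m + 1) :=
  ((hf.isBigO.trans (isBigO_pow_of_le (by lia))).add
    ((isBigO_refl _ _).const_mul_left a)).congr_left fun z => by ring

lemma isBigO_div_self_sub_one (hf : IsParabolicGerm f m a) :
    (fun z => f z / z - 1) =O[𝓝[≠] 0] fun z => z ^ m := by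
  refine ((hf.isBigO_sub_self.mono nhdsWithin_le_nhds).mul
    (isBigO_refl (fun z : ℂ => z⁻¹) _)).congr' ?_ ?_ <;>
    filter_upwards [self_mem_nhdsWithin] with z (hz : z ≠ 0)
  · field_simp
  · field_simp
    ring

lemma isBigO_div_self_sub_one_sub (hf : IsParabolicGerm f m a) :
    (fun z => f z / z - 1 - a * z ^ m) =O[𝓝[≠] 0] fun z => z ^ (m + 1) := by
  refine ((hf.isBigO.mono nhdsWithin_le_nhds).mul
    (isBigO_refl (fun z : ℂ => z⁻¹) _)).congr' ?_ ?_ <;>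
  · filter_upwards [self_mem_nhdsWithin] with z (hz : z ≠ 0)
    field_simp
    ring

lemma tendsto_div_self_sub_one (hf : IsParabolicGerm f m a) :
    Tendsto (fun z => f z / z - 1) (𝓝[≠] 0) (𝓝 0) := by
  refine hf.isBigO_div_self_sub_one.trans_tendsto (Tendsto.mono_left ?_ nhdsWithin_le_nhds)
  simpa [hf.m_ne_zero] using (continuous_pow (M := ℂ) m).tendsto 0

lemma eventually_norm_div_self_sub_one_lt (hf : IsParabolicGerm f m a) {ε : ℝ} (hε : 0 < ε) :
    ∀ᶠ z in 𝓝[≠] 0, ‖f z / z - 1‖ < ε :=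
  (tendsto_zero_iff_norm_tendsto_zero.1 hf.tendsto_div_self_sub_one).eventually_lt_const hε

lemma eventually_ne_zero (hf : IsParabolicGerm f m a) : ∀ᶠ z in 𝓝[≠] 0, f z ≠ 0 := by
  filter_upwards [hf.eventually_norm_div_self_sub_one_lt one_pos] with z hz hfz
  simp [hfz] at hz

lemma isBigO_parCoord_sub (hf : IsParabolicGerm f m a) :
    (fun z => parCoord m a (f z) - parCoord m a z - 1) =O[𝓝[≠] 0] fun z => z := by
  have hm : (m : ℂ) ≠ 0 := Nat.cast_ne_zero.2 hf.m_ne_zero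
  have ha := hf.a_ne_zero
  have hlin : (fun z => (f z / z - 1 - a * z ^ m) * (a * z ^ m)⁻¹) =O[𝓝[≠] 0] fun z => z := by
    refine (hf.isBigO_div_self_sub_one_sub.mul
      ((isBigO_refl (fun z : ℂ => (z ^ m)⁻¹) _).const_mul_left a⁻¹)).congr' ?_ ?_ <;>
      filter_upwards [self_mem_nhdsWithin] with z (hz : z ≠ 0)
    · field_simp
    · field_simp
      ring
  have hquad : (fun z => (((1 + (f z / z - 1)) ^ m)⁻¹ - 1 + m * (f z / z - 1)) *
      (m * a * z ^ m)⁻¹) =O[𝓝[≠] 0] fun z => z ^ m := by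
    refine ((((isBigO_inv_one_add_pow m).comp_tendsto hf.tendsto_div_self_sub_one).trans
      (hf.isBigO_div_self_sub_one.pow 2)).mul
      ((isBigO_refl (fun z : ℂ => (z ^ m)⁻¹) _).const_mul_left (m * a)⁻¹)).congr' ?_ ?_ <;>
      filter_upwards [self_mem_nhdsWithin] with z (hz : z ≠ 0)
    · simp only [Function.comp_apply]
      field_simp
    · field_simp
  have hpow : (fun z : ℂ => z ^ m) =O[𝓝[≠] 0] fun z => z := by
    simpa using (isBigO_pow_of_le (Nat.one_le_iff_ne_zero.2 hf.m_ne_zero)).mono nhdsWithin_le_nhds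
  refine (hlin.sub (hquad.trans hpow)).congr' ?_ .rfl
  filter_upwards [self_mem_nhdsWithin, hf.eventually_ne_zero] with z (hz : z ≠ 0) hfz
  have hratio : f z = z * (f z / z) := by field_simp
  rw [hratio, parCoord_mul, parCoord, add_sub_cancel, mul_div_cancel_left₀ _ hz]
  have : f z / z ≠ 0 := div_ne_zero hfz hz
  field_simp
  ring

lemma exists_norm_parCoord_sub_le (hf : IsParabolicGerm f m a) :
    ∃ C ≥ 0, ∀ᶠ z in 𝓝[≠] 0, ‖parCoord m a (f z) - parCoord m a z - 1‖ ≤ C * ‖z‖ := by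
  obtain ⟨C, hC, hbound⟩ := hf.isBigO_parCoord_sub.exists_nonneg
  exact ⟨C, hC, hbound.bound⟩

lemma eventually_norm_parCoord_sub_le (hf : IsParabolicGerm f m a) {ε : ℝ} (hε : 0 < ε) :
    ∀ᶠ z in 𝓝[≠] 0, ‖parCoord m a (f z) - parCoord m a z - 1‖ ≤ ε := by
  have hlim : Tendsto (fun z => parCoord m a (f z) - parCoord m a z - 1) (𝓝[≠] 0) (𝓝 0) :=
    hf.isBigO_parCoord_sub.trans_tendsto (tendsto_id.mono_left nhdsWithin_le_nhds)
  exact ((tendsto_zero_iff_norm_tendsto_zero.1 hlim).eventually_lt_const hε).mono fun _ => le_of_lt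

lemma hasDerivAt_zero (hf : IsParabolicGerm f m a) : HasDerivAt f 1 0 := by
  have hlin : (fun z => f z - z) =o[𝓝 0] fun z => z := by
    refine hf.isBigO_sub_self.trans_isLittleO ?_
    simpa using isLittleO_pow_pow (𝕜 := ℂ) (m := 1) (n := m + 1)
      (by have := hf.m_ne_zero; lia)
  rw [hasDerivAt_iff_isLittleO]
  simpa [hf.map_zero] using hlin

lemma isBigO_pow_sub_pow (hf : IsParabolicGerm f m a) :
    (fun z => f z ^ (m + 1) - z ^ (m + 1)) =O[𝓝 0] fun z => z ^ (m + 2) := by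
  have hfz : f =O[𝓝 0] fun z => z := by simpa [hf.map_zero] using hf.hasDerivAt_zero.isBigO_sub
  have hsq : (fun z => f z - z) =O[𝓝 0] fun z => z ^ 2 :=
    hf.isBigO_sub_self.trans (isBigO_pow_of_le (by have := hf.m_ne_zero; lia))
  have hsum : (fun z => ∑ i ∈ Finset.range (m + 1), f z ^ i * z ^ (m - i)) =O[𝓝 0]
      fun z => z ^ m := by
    refine IsBigO.fun_sum fun i hi => ?_
    refine ((hfz.pow i).mul (isBigO_refl (fun z : ℂ => z ^ (m - i)) _)).congr_right fun z => ?_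
    rw [← pow_add, Nat.add_sub_cancel' (Finset.mem_range_succ_iff.1 hi)]
  exact (hsum.mul hsq).congr (fun z => by rw [← geom_sum₂_mul, Nat.add_sub_cancel])
    fun z => by ring

lemma exists_rightInverse (hf : IsParabolicGerm f m a) :
    ∃ g : ℂ → ℂ, IsParabolicGerm g m (-a) ∧ ∀ᶠ z in 𝓝 0, f (g z) = z := by
  have hderiv : deriv f 0 ≠ 0 := by rw [hf.hasDerivAt_zero.deriv]; exact one_ne_zero
  have hstrict := hf.analyticAt.hasStrictDerivAt
  obtain ⟨g, hg, hg0, hfg⟩ : ∃ g : ℂ → ℂ, AnalyticAt ℂ g 0 ∧ g 0 = 0 ∧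
      ∀ᶠ z in 𝓝 0, f (g z) = z := by
    have hana := hf.analyticAt.analyticAt_localInverse hderiv
    have hinv := hstrict.eventually_right_inverse hderiv
    have hzero : hstrict.localInverse f _ 0 hderiv (f 0) = 0 :=
      HasStrictFDerivAt.localInverse_apply_image ..
    rw [hf.map_zero] at hana hinv hzero
    exact ⟨_, hana, hzero, hinv⟩
  have hgt : Tendsto g (𝓝 0) (𝓝 0) := by simpa [hg0] using hg.continuousAt.tendsto
  have hgO : g =O[𝓝 0] fun z => z := by
    simpa [hg0] using hg.differentiableAt.hasDerivAt.isBigO_sub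
  refine ⟨g, ⟨hf.m_ne_zero, neg_ne_zero.2 hf.a_ne_zero, hg, ?_⟩, hfg⟩
  -- `g z - z + a z ^ (m + 1)` is the remainder of `f` at `g z`, up to sign and up to replacing
  -- `a (g z) ^ (m + 1)` by `a (f (g z)) ^ (m + 1)`.
  have hrem := (((hf.isBigO_pow_sub_pow.const_mul_left a).sub hf.isBigO).comp_tendsto hgt).trans
    (hgO.pow (m + 2))
  refine hrem.congr' ?_ .rfl
  filter_upwards [hfg] with z hz
  simp only [Function.comp_apply, hz]
  ring

end IsParabolicGerm

end ParabolicGerm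

section NearIdentity

variable {h : ℂ → ℂ} {s t : Set ℂ} {x y : ℂ}

/-- `h` approximates the identity on `s` up to a Lipschitz error with constant `1 / 2`. In
particular it is injective on `s` and expands or contracts distances by bounded factors. -/
def IsNearId (h : ℂ → ℂ) (s : Set ℂ) : Prop :=
  ∀ x ∈ s, ∀ y ∈ s, ‖(h x - h y) - (x - y)‖ ≤ 1 / 2 * ‖x - y‖

namespace IsNearId

lemma mono (hh : IsNearId h t) (hst : s ⊆ t) : IsNearId h s :=
  fun x hx y hy => hh x (hst hx) y (hst hy)

lemma norm_map_sub_le (hh : IsNearId h s) (hx : x ∈ s) (hy : y ∈ s) :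
    ‖h x - h y‖ ≤ 3 / 2 * ‖x - y‖ := by
  linarith [hh x hx y hy, norm_sub_norm_le (h x - h y) (x - y)]

lemma norm_sub_le (hh : IsNearId h s) (hx : x ∈ s) (hy : y ∈ s) :
    ‖x - y‖ ≤ 2 * ‖h x - h y‖ := by
  have hrev := norm_sub_norm_le (x - y) (h x - h y)
  rw [norm_sub_rev (x - y)] at hrev
  linarith [hh x hx y hy]

lemma injOn (hh : IsNearId h s) : InjOn h s := by
  intro x hx y hy hxy
  have hle := hh.norm_sub_le hx hy
  rw [hxy, sub_self, norm_zero, mul_zero] at hle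
  exact sub_eq_zero.1 (norm_le_zero_iff.1 hle)

lemma deriv_ne_zero (hh : IsNearId h s) (hs : s ∈ 𝓝 x) (hd : DifferentiableAt ℂ h x) :
    deriv h x ≠ 0 := by
  intro hzero
  have hderiv : HasDerivAt (fun y => h y - y) (0 - 1) x :=
    hzero ▸ hd.hasDerivAt.sub (hasDerivAt_id x)
  have hle : ‖(0 - 1 : ℂ)‖ ≤ 1 / 2 := by
    refine hderiv.le_of_lip' (by norm_num) ?_
    filter_upwards [hs] with y hy
    simpa only [sub_sub_sub_comm] using hh y hy x (mem_of_mem_nhds hs)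
  norm_num at hle

lemma exists_mem_closedBall_eq {b w : ℂ} {ρ : ℝ} (hh : IsNearId h (Metric.closedBall b ρ))
    (hw : ‖w - h b‖ ≤ ρ / 2) : ∃ x ∈ Metric.closedBall b ρ, h x = w := by
  have hρ : 0 ≤ ρ := by linarith [norm_nonneg (w - h b)]
  set e := ContinuousLinearEquiv.refl ℂ ℂ
  have happrox : ApproximatesLinearOn h (e : ℂ →L[ℂ] ℂ) (Metric.closedBall b ρ) (1 / 2) :=
    fun x hx y hy => by simpa [e] using hh x hx y hy
  have hsurj := happrox.surjOn_closedBall_of_nonlinearRightInverse e.toNonlinearRightInverse hρ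
    subset_rfl
  refine hsurj (mem_closedBall_iff_norm.2 (hw.trans_eq ?_))
  have hone : (e.toNonlinearRightInverse.nnnorm : ℝ) = 1 := by
    simp [ContinuousLinearEquiv.toNonlinearRightInverse, e]
  rw [hone]
  push_cast
  ring

lemma of_tendsto {g : ℕ → ℂ → ℂ} {c : ℕ → ℂ} (hg : ∀ n, IsNearId (g n) s)
    (hlim : ∀ x ∈ s, Tendsto (fun n => g n x - c n) atTop (𝓝 (h x))) : IsNearId h s := by
  intro x hx y hy
  refine le_of_tendsto' (((hlim x hx).sub (hlim y hy)).sub_const (x - y)).norm fun n => ?_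
  simpa only [sub_sub_sub_cancel_right] using hg n x hx y hy

end IsNearId

/-- A sequence of maps starting with the identity, in which passing from `g n` to `g (n + 1)`
distorts differences by a relative error `e n`, with `∑ e n ≤ 1 / 4`. -/
structure IsNearIdSeq (g : ℕ → ℂ → ℂ) (e : ℕ → ℝ) (s : Set ℂ) : Prop where
  zero : g 0 = id
  nonneg : ∀ n, 0 ≤ e n
  summable : Summable e
  tsum_le : ∑' n, e n ≤ 1 / 4
  norm_step_le : ∀ n, ∀ x ∈ s, ∀ y ∈ s,
    ‖(g (n + 1) x - g (n + 1) y) - (g n x - g n y)‖ ≤ e n * ‖g n x - g n y‖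

namespace IsNearIdSeq

variable {g : ℕ → ℂ → ℂ} {e : ℕ → ℝ}

lemma norm_sub_sub_le (hg : IsNearIdSeq g e s) (hx : x ∈ s) (hy : y ∈ s) (n : ℕ) :
    ‖(g n x - g n y) - (x - y)‖ ≤ (∑ k ∈ Finset.range n, e k) * (2 * ‖x - y‖) := by
  induction n with
  | zero => simp [hg.zero]
  | succ n ih =>
    have hsum : ∑ k ∈ Finset.range n, e k ≤ 1 / 4 :=
      (hg.summable.sum_le_tsum _ fun k _ => hg.nonneg k).trans hg.tsum_le
    have hdiff : ‖g n x - g n y‖ ≤ 2 * ‖x - y‖ := by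
      nlinarith [norm_sub_norm_le (g n x - g n y) (x - y), norm_nonneg (x - y)]
    calc ‖(g (n + 1) x - g (n + 1) y) - (x - y)‖
        ≤ ‖(g (n + 1) x - g (n + 1) y) - (g n x - g n y)‖ + ‖(g n x - g n y) - (x - y)‖ :=
          norm_sub_le_norm_sub_add_norm_sub ..
      _ ≤ e n * (2 * ‖x - y‖) + (∑ k ∈ Finset.range n, e k) * (2 * ‖x - y‖) :=
          add_le_add ((hg.norm_step_le n x hx y hy).trans
            (mul_le_mul_of_nonneg_left hdiff (hg.nonneg n))) ih
      _ = (∑ k ∈ Finset.range (n + 1), e k) * (2 * ‖x - y‖) := by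
          rw [Finset.sum_range_succ]; ring

lemma isNearId (hg : IsNearIdSeq g e s) (n : ℕ) : IsNearId (g n) s := by
  intro x hx y hy
  have hsum : ∑ k ∈ Finset.range n, e k ≤ 1 / 4 :=
    (hg.summable.sum_le_tsum _ fun k _ => hg.nonneg k).trans hg.tsum_le
  nlinarith [hg.norm_sub_sub_le hx hy n, norm_nonneg (x - y)]

lemma norm_step_le_mul_norm_sub (hg : IsNearIdSeq g e s) (hx : x ∈ s) (hy : y ∈ s) (n : ℕ) :
    ‖(g (n + 1) x - g (n + 1) y) - (g n x - g n y)‖ ≤ e n * (3 / 2 * ‖x - y‖) :=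
  (hg.norm_step_le n x hx y hy).trans
    (mul_le_mul_of_nonneg_left ((hg.isNearId n).norm_map_sub_le hx hy) (hg.nonneg n))

lemma exists_tendsto (hg : IsNearIdSeq g e s) (hs : IsOpen s)
    (hd : ∀ n, DifferentiableOn ℂ (g n) s) (hy : y ∈ s) :
    ∃ Φ : ℂ → ℂ, DifferentiableOn ℂ Φ s ∧
      ∀ x ∈ s, Tendsto (fun n => g n x - g n y) atTop (𝓝 (Φ x)) := by
  set δ : ℕ → ℂ → ℂ := fun n x => (g (n + 1) x - g (n + 1) y) - (g n x - g n y) with hδ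
  have hδd : ∀ n, DifferentiableOn ℂ (δ n) s := fun n =>
    ((hd (n + 1)).sub_const _).fun_sub ((hd n).sub_const _)
  refine ⟨fun x => ∑' n, δ n x + (x - y), .fun_add ?_ (by fun_prop), fun x hx => ?_⟩
  · intro x hx
    set U := Metric.ball x 1 ∩ s
    have hU : IsOpen U := Metric.isOpen_ball.inter hs
    have hbound : ∀ n, ∀ w ∈ U, ‖δ n w‖ ≤ e n * (3 / 2 * (1 + ‖x - y‖)) := by
      intro n w hw
      refine (hg.norm_step_le_mul_norm_sub hw.2 hy n).trans ?_
      have := hg.nonneg n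
      have := mem_ball_iff_norm.1 hw.1
      gcongr
      linarith [norm_sub_le_norm_sub_add_norm_sub w x y]
    have hdiff := differentiableOn_tsum_of_summable_norm (hg.summable.mul_right _)
      (fun n => (hδd n).mono inter_subset_right) hU hbound
    exact (hdiff.differentiableAt (hU.mem_nhds ⟨Metric.mem_ball_self one_pos, hx⟩)
      ).differentiableWithinAt
  · have hsum : Summable fun n => δ n x :=
      .of_norm_bounded (hg.summable.mul_right _) (hg.norm_step_le_mul_norm_sub hx hy)
    refine (hsum.hasSum.tendsto_sum_nat.add_const (x - y)).congr fun n => ?_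
    rw [hδ, Finset.sum_range_sub fun n => g n x - g n y, hg.zero, id, id, sub_add_cancel]

end IsNearIdSeq

end NearIdentity

section NearTranslation

open Metric

variable {F Φ : ℂ → ℂ} {R : ℝ} {ζ ζ' : ℂ}

/-- `F` is holomorphic on the half-plane `{R < re}` and differs there from the translation by `1` by
at most `1 / 4`. -/
structure IsNearTranslation (F : ℂ → ℂ) (R : ℝ) : Prop where
  differentiableAt : ∀ ζ : ℂ, R < ζ.re → DifferentiableAt ℂ F ζ
  norm_sub_le : ∀ ζ : ℂ, R < ζ.re → ‖F ζ - ζ - 1‖ ≤ 1 / 4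

/-- `Φ` is a Fatou coordinate for `F` on the half-plane `{R < re}`: it conjugates `F` to the
translation by `1`. It is normalised to be close to the identity. -/
structure IsFatouCoord (F : ℂ → ℂ) (R : ℝ) (Φ : ℂ → ℂ) : Prop where
  differentiableAt : ∀ ζ : ℂ, R < ζ.re → DifferentiableAt ℂ Φ ζ
  map_eq : ∀ ζ : ℂ, R < ζ.re → Φ (F ζ) = Φ ζ + 1
  isNearId : IsNearId Φ {ζ | R < ζ.re}

lemma isOpen_setOf_lt_re (R : ℝ) : IsOpen {ζ : ℂ | R < ζ.re} :=
  isOpen_lt continuous_const continuous_re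

lemma lt_re_of_mem_ball {x c : ℂ} {R : ℝ} (hx : x ∈ Metric.ball c (c.re - R)) : R < x.re := by
  have habs := (abs_re_le_norm _).trans_lt (mem_ball_iff_norm.1 hx)
  rw [sub_re] at habs
  linarith [(abs_lt.1 habs).1]

lemma abs_re_sub_re_le_of_mem_closedBall {x c : ℂ} {ρ : ℝ} (hx : x ∈ closedBall c ρ) :
    |x.re - c.re| ≤ ρ := by
  rw [← sub_re]
  exact (abs_re_le_norm _).trans (mem_closedBall_iff_norm.1 hx)

/-- Cauchy's estimate on balls of radius `ρ`. -/
lemma norm_sub_sub_sub_le_of_norm_le {S ρ K : ℝ} (hρ : 0 < ρ)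
    (hd : ∀ ζ : ℂ, S - ρ ≤ ζ.re → DifferentiableAt ℂ F ζ)
    (hK : ∀ ζ : ℂ, S - ρ ≤ ζ.re → ‖F ζ - ζ - 1‖ ≤ K) (hζ : S ≤ ζ.re) (hζ' : S ≤ ζ'.re) :
    ‖(F ζ - F ζ') - (ζ - ζ')‖ ≤ K / ρ * ‖ζ - ζ'‖ := by
  have hdiff : ∀ x : ℂ, S - ρ ≤ x.re → DifferentiableAt ℂ (fun x => F x - x - 1) x :=
    fun x hx => ((hd x hx).fun_sub differentiableAt_id).sub_const 1
  have hderiv : ∀ x ∈ {x : ℂ | S ≤ x.re}, ‖deriv (fun x => F x - x - 1) x‖ ≤ K / ρ := by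
    intro x (hx : S ≤ x.re)
    have hball : ∀ y ∈ closedBall x ρ, S - ρ ≤ y.re := fun y hy => by
      linarith [(abs_le.1 (abs_re_sub_re_le_of_mem_closedBall hy)).1]
    refine norm_deriv_le_of_forall_mem_sphere_norm_le hρ ?_
      fun y hy => hK y (hball y (sphere_subset_closedBall hy))
    exact DifferentiableOn.diffContOnCl fun y hy =>
      (hdiff y (hball y (closure_ball_subset_closedBall hy))).differentiableWithinAt
  have hconvex : Convex ℝ {x : ℂ | S ≤ x.re} := convex_halfSpace_re_ge S
  have hmean := hconvex.norm_image_sub_le_of_norm_deriv_le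
    (fun x hx => hdiff x ((sub_le_self S hρ.le).trans hx)) hderiv hζ' hζ
  have hrw : (F ζ - F ζ') - (ζ - ζ') = (F ζ - ζ - 1) - (F ζ' - ζ' - 1) := by ring
  rwa [hrw]

namespace IsNearTranslation

lemma mono {R' : ℝ} (hF : IsNearTranslation F R) (hR : R ≤ R') : IsNearTranslation F R' :=
  ⟨fun ζ hζ => hF.differentiableAt ζ (hR.trans_lt hζ),
    fun ζ hζ => hF.norm_sub_le ζ (hR.trans_lt hζ)⟩

lemma re_add_le_re_map (hF : IsNearTranslation F R) (hζ : R < ζ.re) :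
    ζ.re + 3 / 4 ≤ (F ζ).re := by
  have hre := (abs_re_le_norm _).trans (hF.norm_sub_le ζ hζ)
  rw [sub_re, sub_re, one_re] at hre
  linarith [(abs_le.1 hre).1]

lemma re_add_le_re_iterate (hF : IsNearTranslation F R) (hζ : R < ζ.re) (n : ℕ) :
    ζ.re + 3 / 4 * n ≤ (F^[n] ζ).re := by
  induction n with
  | zero => simp
  | succ n ih =>
    have hn : R < (F^[n] ζ).re := by linarith [Nat.cast_nonneg (α := ℝ) n]
    rw [Function.iterate_succ_apply']
    push_cast
    linarith [hF.re_add_le_re_map hn]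

lemma lt_re_iterate (hF : IsNearTranslation F R) (hζ : R < ζ.re) (n : ℕ) : R < (F^[n] ζ).re := by
  linarith [hF.re_add_le_re_iterate hζ n, Nat.cast_nonneg (α := ℝ) n]

lemma lt_re_map (hF : IsNearTranslation F R) (hζ : R < ζ.re) : R < (F ζ).re :=
  hF.lt_re_iterate hζ 1

lemma differentiableAt_iterate (hF : IsNearTranslation F R) (hζ : R < ζ.re) (n : ℕ) :
    DifferentiableAt ℂ F^[n] ζ := by
  induction n with
  | zero => exact differentiableAt_id
  | succ n ih =>
    rw [Function.iterate_succ']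
    exact (hF.differentiableAt _ (hF.lt_re_iterate hζ n)).comp ζ ih

lemma isNearId (hF : IsNearTranslation F R) : IsNearId F {ζ | R + 1 / 2 < ζ.re} := by
  intro x (hx : R + 1 / 2 < x.re) y (hy : R + 1 / 2 < y.re)
  obtain ⟨S, hRS, hSxy⟩ := exists_between (lt_min hx hy)
  have hlip := norm_sub_sub_sub_le_of_norm_le (ρ := 1 / 2) (K := 1 / 4) (S := S) (by norm_num)
    (fun ζ hζ => hF.differentiableAt ζ (by linarith)) (fun ζ hζ => hF.norm_sub_le ζ (by linarith))
    (hSxy.le.trans (min_le_left ..)) (hSxy.le.trans (min_le_right ..))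
  norm_num at hlip ⊢
  exact hlip

lemma exists_map_eq (hF : IsNearTranslation F R) (hζ : R + 2 < ζ.re) :
    ∃ x : ℂ, R < x.re ∧ x.re ≤ ζ.re - 1 / 2 ∧ F x = ζ := by
  have hre : ∀ x ∈ closedBall (ζ - 1) (1 / 2), R + 1 / 2 < x.re ∧ x.re ≤ ζ.re - 1 / 2 := by
    intro x hx
    have hsub := abs_le.1 (abs_re_sub_re_le_of_mem_closedBall hx)
    rw [sub_re, one_re] at hsub
    constructor <;> linarith
  have hcenter := hF.norm_sub_le (ζ - 1) (by rw [sub_re, one_re]; linarith)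
  obtain ⟨x, hx, hxζ⟩ := (hF.isNearId.mono fun x hx => (hre x hx).1).exists_mem_closedBall_eq
    (w := ζ) (by
      rw [norm_sub_rev, ← sub_add_cancel ζ 1, ← sub_sub, sub_add_cancel]
      linarith)
  exact ⟨x, by linarith [hre x hx], (hre x hx).2, hxζ⟩

lemma exists_iterate_eq_of_re_le (hF : IsNearTranslation F R) (N : ℕ) :
    ∀ ζ : ℂ, R < ζ.re → ζ.re ≤ R + 2 + N / 2 →
      ∃ (n : ℕ) (x : ℂ), R < x.re ∧ x.re ≤ R + 2 ∧ F^[n] x = ζ := by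
  induction N with
  | zero => exact fun ζ hζ hle => ⟨0, ζ, hζ, by simpa using hle, rfl⟩
  | succ N ih =>
    intro ζ hζ hle
    rcases le_or_gt ζ.re (R + 2) with hnear | hfar
    · exact ⟨0, ζ, hζ, hnear, rfl⟩
    · obtain ⟨y, hy, hyζ, rfl⟩ := hF.exists_map_eq hfar
      push_cast at hle
      obtain ⟨n, x, hx, hx2, rfl⟩ := ih y hy (by linarith)
      exact ⟨n + 1, x, hx, hx2, Function.iterate_succ_apply' ..⟩

lemma exists_iterate_eq (hF : IsNearTranslation F R) (hζ : R < ζ.re) :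
    ∃ (n : ℕ) (x : ℂ), R < x.re ∧ x.re ≤ R + 2 ∧ F^[n] x = ζ := by
  obtain ⟨N, hN⟩ := exists_nat_gt (2 * (ζ.re - R - 2))
  exact hF.exists_iterate_eq_of_re_le N ζ hζ (by linarith)

end IsNearTranslation

end NearTranslation

section FatouCoordinate

open Metric

variable {F Φ : ℂ → ℂ} {R : ℝ} {ζ ζ' : ℂ}

lemma exists_tsum_nat_add_le_and_le {e : ℕ → ℝ} {ε : ℝ} (hε : 0 < ε) (A : ℝ) :
    ∃ N : ℕ, ∑' n, e (n + N) ≤ ε ∧ A ≤ N := by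
  obtain ⟨N, hN, hA⟩ := (((tendsto_sum_nat_add e).eventually_le_const hε).and
    (tendsto_natCast_atTop_atTop.eventually_ge_atTop A)).exists
  exact ⟨N, hN, hA⟩

/-- The bound on `‖F ζ - ζ - 1‖` at real part `3 n / 8` becomes, by Cauchy's estimate, a relative
error of size `n ^ (-β - 1)` at real part `3 n / 4`. -/
lemma IsNearTranslation.norm_sub_sub_sub_le {C β R₀ : ℝ} (hC : 0 ≤ C) (hβ : 0 < β)
    (hR₀ : 0 ≤ R₀) (hF : IsNearTranslation F R₀)
    (hbound : ∀ ζ : ℂ, R₀ < ζ.re → ‖F ζ - ζ - 1‖ ≤ C * ζ.re ^ (-β)) {n : ℕ} (hn : 8 / 3 * R₀ < n)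
    (hζ : 3 / 4 * n ≤ ζ.re) (hζ' : 3 / 4 * n ≤ ζ'.re) :
    ‖(F ζ - F ζ') - (ζ - ζ')‖ ≤
      C * (3 / 8) ^ (-β - 1) * (n : ℝ) ^ (-β - 1) * ‖ζ - ζ'‖ := by
  have hpos : (0 : ℝ) < 3 / 8 * n := by linarith
  refine (norm_sub_sub_sub_le_of_norm_le (K := C * (3 / 8 * n) ^ (-β)) hpos
    (fun x hx => hF.differentiableAt x (by linarith)) (fun x hx => ?_) hζ hζ').trans_eq ?_
  · refine (hbound x (by linarith)).trans (mul_le_mul_of_nonneg_left ?_ hC)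
    exact Real.rpow_le_rpow_of_nonpos hpos (by linarith) (by linarith)
  · rw [mul_div_assoc, ← Real.rpow_sub_one hpos.ne', Real.mul_rpow (by norm_num) (by positivity)]
    ring

lemma exists_isNearIdSeq_iterate {C β R₀ : ℝ} (hC : 0 ≤ C) (hβ : 0 < β) (hR₀ : 0 ≤ R₀) :
    ∃ R ≥ R₀, ∃ e : ℕ → ℝ, ∀ F : ℂ → ℂ, IsNearTranslation F R₀ →
      (∀ ζ : ℂ, R₀ < ζ.re → ‖F ζ - ζ - 1‖ ≤ C * ζ.re ^ (-β)) →
      IsNearIdSeq (fun n => F^[n]) e {ζ | R < ζ.re} := by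
  set e : ℕ → ℝ := fun n => C * (3 / 8) ^ (-β - 1) * (n : ℝ) ^ (-β - 1)
  have hsum : Summable e := (Real.summable_nat_rpow.2 (by linarith)).mul_left _
  obtain ⟨N, hN, hNR⟩ := exists_tsum_nat_add_le_and_le (e := e) (show (0 : ℝ) < 1 / 4 by norm_num)
    (8 / 3 * R₀ + 1)
  refine ⟨3 / 4 * N, by linarith, fun n => e (n + N), fun F hF hbound =>
    ⟨rfl, fun n => by positivity, (summable_nat_add_iff N).2 hsum, hN, fun n x hx y hy => ?_⟩⟩
  have hFR : IsNearTranslation F (3 / 4 * N) := hF.mono (by linarith)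
  have hre : ∀ z ∈ {ζ : ℂ | 3 / 4 * N < ζ.re}, 3 / 4 * ((n + N : ℕ) : ℝ) ≤ (F^[n] z).re :=
    fun z (hz : 3 / 4 * N < z.re) => by
      push_cast
      linarith [hFR.re_add_le_re_iterate hz n]
  rw [Function.iterate_succ_apply', Function.iterate_succ_apply']
  refine hF.norm_sub_sub_sub_le hC hβ hR₀ hbound ?_ (hre x hx) (hre y hy)
  push_cast
  linarith [Nat.cast_nonneg (α := ℝ) n]

lemma IsNearTranslation.tendsto_map_iterate_sub {C β : ℝ} (hC : 0 ≤ C) (hβ : 0 < β) (hR : 0 ≤ R)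
    (hF : IsNearTranslation F R) (hbound : ∀ ζ : ℂ, R < ζ.re → ‖F ζ - ζ - 1‖ ≤ C * ζ.re ^ (-β))
    (hζ : R < ζ.re) : Tendsto (fun n => F (F^[n] ζ) - F^[n] ζ) atTop (𝓝 1) := by
  rw [tendsto_iff_norm_sub_tendsto_zero]
  have hlim : Tendsto (fun n : ℕ => C * (3 / 4 * (n : ℝ)) ^ (-β)) atTop (𝓝 0) := by
    simpa using ((tendsto_rpow_neg_atTop hβ).comp
      (tendsto_natCast_atTop_atTop.const_mul_atTop (show (0 : ℝ) < 3 / 4 by norm_num))).const_mul C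
  refine squeeze_zero' (Eventually.of_forall fun n => norm_nonneg _) ?_ hlim
  filter_upwards [eventually_gt_atTop 0] with n hn
  refine (hbound _ (hF.lt_re_iterate hζ n)).trans (mul_le_mul_of_nonneg_left ?_ hC)
  exact Real.rpow_le_rpow_of_nonpos (by positivity)
    (by linarith [hF.re_add_le_re_iterate hζ n]) (by linarith)

theorem exists_isFatouCoord {C β R₀ : ℝ} (hC : 0 ≤ C) (hβ : 0 < β) (hR₀ : 0 ≤ R₀) :
    ∃ R ≥ R₀, ∀ F : ℂ → ℂ, IsNearTranslation F R₀ →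
      (∀ ζ : ℂ, R₀ < ζ.re → ‖F ζ - ζ - 1‖ ≤ C * ζ.re ^ (-β)) →
      ∃ Φ : ℂ → ℂ, IsFatouCoord F R Φ := by
  obtain ⟨R, hR, e, hseq⟩ := exists_isNearIdSeq_iterate hC hβ hR₀
  refine ⟨R, hR, fun F hF hbound => ?_⟩
  have hFR := hF.mono hR
  have hopen := isOpen_setOf_lt_re R
  set ζ₀ : ℂ := ((R + 1 : ℝ) : ℂ)
  have hζ₀ : R < ζ₀.re := by rw [ofReal_re]; linarith
  obtain ⟨Φ, hΦd, hΦ⟩ := (hseq F hF hbound).exists_tendsto hopen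
    (fun n ζ hζ => (hFR.differentiableAt_iterate hζ n).differentiableWithinAt) hζ₀
  refine ⟨Φ, fun ζ hζ => hΦd.differentiableAt (hopen.mem_nhds hζ), fun ζ hζ => ?_,
    .of_tendsto (hseq F hF hbound).isNearId hΦ⟩
  have hstep : Tendsto (fun n => (F^[n] (F ζ) - F^[n] ζ₀) - (F^[n] ζ - F^[n] ζ₀)) atTop (𝓝 1) := by
    simpa only [sub_sub_sub_cancel_right, ← Function.iterate_succ_apply,
      Function.iterate_succ_apply'] using
      hFR.tendsto_map_iterate_sub hC hβ (hR₀.trans hR)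
        (fun ζ hζ => hbound ζ (hR.le.trans_lt hζ)) hζ
  rw [eq_add_of_sub_eq' (tendsto_nhds_unique ((hΦ _ (hFR.lt_re_map hζ)).sub (hΦ ζ hζ)) hstep)]

namespace IsFatouCoord

lemma map_iterate (hΦ : IsFatouCoord F R Φ) (hF : IsNearTranslation F R) (hζ : R < ζ.re) (n : ℕ) :
    Φ (F^[n] ζ) = Φ ζ + n := by
  induction n with
  | zero => simp
  | succ n ih =>
    rw [Function.iterate_succ_apply', hΦ.map_eq _ (hF.lt_re_iterate hζ n), ih]
    push_cast
    ring

lemma norm_iterate_sub_le (hΦ : IsFatouCoord F R Φ) (hF : IsNearTranslation F R) (hζ : R < ζ.re)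
    (hζ' : R < ζ'.re) (n : ℕ) : ‖F^[n] ζ - F^[n] ζ'‖ ≤ 3 * ‖ζ - ζ'‖ := by
  have hle := hΦ.isNearId.norm_sub_le (hF.lt_re_iterate hζ n) (hF.lt_re_iterate hζ' n)
  rw [hΦ.map_iterate hF hζ, hΦ.map_iterate hF hζ', add_sub_add_right_eq_sub] at hle
  linarith [hΦ.isNearId.norm_map_sub_le hζ hζ']

lemma norm_deriv_iterate_le (hΦ : IsFatouCoord F R Φ) (hF : IsNearTranslation F R) (hζ : R < ζ.re)
    (n : ℕ) : ‖deriv F^[n] ζ‖ ≤ 3 := by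
  refine norm_deriv_le_of_lip' (by norm_num) ?_
  filter_upwards [(isOpen_setOf_lt_re R).mem_nhds hζ] with x hx
  exact hΦ.norm_iterate_sub_le hF hx hζ n

/-- Uniformly bounded maps `H k` on the balls of growing radius about `F^[k] ζ` have derivatives
tending to `0` there, by Cauchy's estimate, while `F^[k]` has bounded derivative at `ζ`. -/
lemma eq_zero_of_deriv_mul_deriv_iterate_eq (hΦ : IsFatouCoord F R Φ) (hF : IsNearTranslation F R)
    (hζ : R < ζ.re) {K : ℝ} {d : ℂ} {H : ℕ → ℂ → ℂ}
    (hd : ∀ k, ∀ x ∈ ball (F^[k] ζ) ((F^[k] ζ).re - R), DifferentiableAt ℂ (H k) x)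
    (hK : ∀ k, ∀ x ∈ ball (F^[k] ζ) ((F^[k] ζ).re - R), ‖H k x‖ ≤ K)
    (hderiv : ∀ k, deriv (H k) (F^[k] ζ) * deriv F^[k] ζ = d) : d = 0 := by
  have hbound : ∀ᶠ k : ℕ in atTop, ‖d‖ ≤ K * 8 / k := by
    filter_upwards [eventually_gt_atTop 0] with k hk
    have hk : (0 : ℝ) < k := mod_cast hk
    have hball : closedBall (F^[k] ζ) (3 / 8 * k) ⊆ ball (F^[k] ζ) ((F^[k] ζ).re - R) :=
      closedBall_subset_ball (by linarith [hF.re_add_le_re_iterate hζ k])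
    have hH := norm_deriv_le_of_forall_mem_sphere_norm_le (f := H k) (by positivity)
      (DifferentiableOn.diffContOnCl fun y hy =>
        (hd k y (hball (closure_ball_subset_closedBall hy))).differentiableWithinAt)
      fun y hy => hK k y (hball (sphere_subset_closedBall hy))
    calc ‖d‖ = ‖deriv (H k) (F^[k] ζ)‖ * ‖deriv F^[k] ζ‖ := by rw [← hderiv k, norm_mul]
      _ ≤ K / (3 / 8 * k) * 3 :=
        mul_le_mul hH (hΦ.norm_deriv_iterate_le hF hζ k) (norm_nonneg _) ((norm_nonneg _).trans hH)
      _ = K * 8 / k := by field_simp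
  exact norm_le_zero_iff.1 (ge_of_tendsto
    (tendsto_const_nhds.div_atTop tendsto_natCast_atTop_atTop) hbound)

lemma exists_le_abs_im_of_le_abs_im (hΦ : IsFatouCoord F R Φ) (hF : IsNearTranslation F R) (A : ℝ) :
    ∃ M : ℝ, ∀ ζ : ℂ, R < ζ.re → M ≤ |(Φ ζ).im| →
      ∃ (n : ℕ) (x : ℂ), R < x.re ∧ x.re ≤ R + 2 ∧ F^[n] x = ζ ∧ A ≤ |x.im| := by
  set ζ₁ : ℂ := ((R + 1 : ℝ) : ℂ)
  have hζ₁ : R < ζ₁.re := by rw [ofReal_re]; linarith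
  refine ⟨‖Φ ζ₁‖ + 3 / 2 * (A + 1), fun ζ hζ hM => ?_⟩
  obtain ⟨n, x, hx, hx2, rfl⟩ := hF.exists_iterate_eq hζ
  refine ⟨n, x, hx, hx2, rfl, ?_⟩
  have him : ‖Φ ζ₁‖ + 3 / 2 * (A + 1) ≤ ‖Φ x‖ := by
    rw [hΦ.map_iterate hF hx, add_im, natCast_im, add_zero] at hM
    exact hM.trans (abs_im_le_norm _)
  have hnear := hΦ.isNearId.norm_map_sub_le hx hζ₁
  have hre : |(x - ζ₁).re| ≤ 1 := by
    rw [sub_re, ofReal_re, abs_le]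
    constructor <;> linarith
  have hsub := norm_le_abs_re_add_abs_im (x - ζ₁)
  rw [sub_im, ofReal_im, sub_zero] at hsub
  linarith [norm_sub_norm_le (Φ x) (Φ ζ₁)]

/-- The image of a Fatou coordinate contains the right end of each horizontal strip: near the point
`Φ (F^[n] ζ₁) = Φ ζ₁ + n` it covers balls of radius tending to infinity with `n`. -/
lemma exists_map_eq (hΦ : IsFatouCoord F R Φ) (hF : IsNearTranslation F R) (B : ℝ) :
    ∃ N₀ : ℝ, ∀ Z : ℂ, N₀ < Z.re → |Z.im| < B → ∃ ζ : ℂ, R < ζ.re ∧ Φ ζ = Z := by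
  set ζ₁ : ℂ := ((R + 1 : ℝ) : ℂ)
  have hζ₁ : R < ζ₁.re := by rw [ofReal_re]; linarith
  set ρ : ℝ := |B| + ‖Φ ζ₁‖ + 1
  obtain ⟨N, hN⟩ := exists_nat_gt (8 / 3 * ρ)
  refine ⟨N + ‖Φ ζ₁‖, fun Z hZ hZB => ?_⟩
  set n : ℕ := ⌊Z.re - (Φ ζ₁).re⌋₊
  have hpos : (N : ℝ) ≤ Z.re - (Φ ζ₁).re := by linarith [re_le_norm (Φ ζ₁)]
  have hn₁ : (n : ℝ) ≤ Z.re - (Φ ζ₁).re := Nat.floor_le ((Nat.cast_nonneg N).trans hpos)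
  have hn₂ : Z.re - (Φ ζ₁).re < n + 1 := Nat.lt_floor_add_one _
  have hNn : (N : ℝ) ≤ n := mod_cast Nat.le_floor hpos
  have hball : closedBall (F^[n] ζ₁) (2 * ρ) ⊆ {ζ | R < ζ.re} := fun x hx => by
    have hre := (abs_le.1 (abs_re_sub_re_le_of_mem_closedBall hx)).1
    change R < x.re
    linarith [hF.re_add_le_re_iterate hζ₁ n]
  have hdist : ‖Z - Φ (F^[n] ζ₁)‖ ≤ 2 * ρ / 2 := by
    have hre : |(Z - (Φ ζ₁ + n)).re| ≤ 1 := by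
      rw [sub_re, add_re, natCast_re, abs_le]
      constructor <;> linarith
    have him : |(Z - (Φ ζ₁ + n)).im| ≤ |B| + ‖Φ ζ₁‖ := by
      rw [sub_im, add_im, natCast_im, add_zero]
      linarith [abs_sub Z.im (Φ ζ₁).im, le_abs_self B, abs_im_le_norm (Φ ζ₁)]
    rw [hΦ.map_iterate hF hζ₁]
    linarith [norm_le_abs_re_add_abs_im (Z - (Φ ζ₁ + n))]
  obtain ⟨x, hx, hxZ⟩ := (hΦ.isNearId.mono hball).exists_mem_closedBall_eq hdist
  exact ⟨x, hball hx, hxZ⟩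

lemma differentiableAt_of_rightInverse (hΦ : IsFatouCoord F R Φ) {ψ : ℂ → ℂ} {Z : ℂ}
    (hψ : ∀ᶠ W in 𝓝 Z, R < (ψ W).re ∧ Φ (ψ W) = W) : DifferentiableAt ℂ ψ Z := by
  obtain ⟨hZ, hΦZ⟩ := hψ.self_of_nhds
  have hcont : ContinuousAt ψ Z := by
    rw [ContinuousAt, tendsto_iff_norm_sub_tendsto_zero]
    have hlim : Tendsto (fun W => 2 * ‖W - Z‖) (𝓝 Z) (𝓝 0) :=
      Continuous.tendsto' (by fun_prop) _ _ (by simp)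
    refine squeeze_zero' (Eventually.of_forall fun W => norm_nonneg _) ?_ hlim
    filter_upwards [hψ] with W ⟨hW, hΦW⟩
    simpa only [hΦW, hΦZ] using hΦ.isNearId.norm_sub_le hW hZ
  have hne := hΦ.isNearId.deriv_ne_zero ((isOpen_setOf_lt_re R).mem_nhds hZ)
    (hΦ.differentiableAt _ hZ)
  exact (HasDerivAt.of_local_left_inverse hcont (hΦ.differentiableAt _ hZ).hasDerivAt hne
    (hψ.mono fun W hW => hW.2)).differentiableAt

lemma exists_rightInverse (hΦ : IsFatouCoord F R Φ) (hF : IsNearTranslation F R) (B : ℝ) :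
    ∃ (N₀ : ℝ) (ψ : ℂ → ℂ), ∀ Z : ℂ, N₀ < Z.re → |Z.im| < B →
      R < (ψ Z).re ∧ Φ (ψ Z) = Z ∧ DifferentiableAt ℂ ψ Z ∧ F (ψ Z) = ψ (Z + 1) := by
  obtain ⟨N₀, hsurj⟩ := hΦ.exists_map_eq hF B
  choose! ψ hψ hΦψ using hsurj
  have hopen : IsOpen {Z : ℂ | N₀ < Z.re ∧ |Z.im| < B} :=
    (isOpen_lt continuous_const continuous_re).inter
      (isOpen_lt continuous_im.abs continuous_const)
  refine ⟨N₀, ψ, fun Z hZ hZB => ⟨hψ Z hZ hZB, hΦψ Z hZ hZB, ?_, ?_⟩⟩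
  · refine hΦ.differentiableAt_of_rightInverse ?_
    filter_upwards [hopen.mem_nhds ⟨hZ, hZB⟩] with W ⟨hW, hWB⟩
    exact ⟨hψ W hW hWB, hΦψ W hW hWB⟩
  · have hre : N₀ < (Z + 1).re := by rw [add_re, one_re]; linarith
    have him : |(Z + 1).im| < B := by rwa [add_im, one_im, add_zero]
    refine hΦ.isNearId.injOn (hF.lt_re_map (hψ Z hZ hZB)) (hψ _ hre him) ?_
    rw [hΦψ _ hre him, hΦ.map_eq _ (hψ Z hZ hZB), hΦψ Z hZ hZB]

end IsFatouCoord

end FatouCoordinate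

section Petal

variable {f : ℂ → ℂ} {m : ℕ} {a v ζ : ℂ} {R r : ℝ}

/-- The map `f` read in the coordinate `parCoord m a` along the direction `v`. -/
noncomputable def parConj (f : ℂ → ℂ) (m : ℕ) (a v ζ : ℂ) : ℂ := parCoord m a (f (parBranch m v ζ))

/-- The sector `parBranch m v '' {ζ | R < ζ.re}` is a petal of `f` of radius at most `r` in the
direction `v`: in the coordinate `parCoord m a`, the map `f` is a near-translation of the half-plane
`{ζ | R < ζ.re}` possessing a Fatou coordinate. -/
structure IsPetal (f : ℂ → ℂ) (m : ℕ) (a v : ℂ) (R r : ℝ) : Prop where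
  isAttractingDir : IsAttractingDir m a v
  one_le : 1 ≤ R
  norm_lt : ∀ ζ : ℂ, R < ζ.re → ‖parBranch m v ζ‖ < r
  isNearTranslation : IsNearTranslation (parConj f m a v) R
  parBranch_parConj :
    ∀ ζ : ℂ, R < ζ.re → parBranch m v (parConj f m a v ζ) = f (parBranch m v ζ)
  exists_isFatouCoord : ∃ Φ, IsFatouCoord (parConj f m a v) R Φ

lemma ne_zero_of_lt_re (hR : 0 ≤ R) (hζ : R < ζ.re) : ζ ≠ 0 := by
  rintro rfl
  exact hR.not_gt hζ

lemma IsAttractingDir.norm_le (hv : IsAttractingDir m a v) : ‖v‖ ≤ max 1 (1 / (m * ‖a‖)) := by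
  rcases le_total ‖v‖ 1 with hv1 | hv1
  · exact le_max_of_le_left hv1
  · refine le_max_of_le_right ((le_self_pow₀ hv1 hv.m_ne_zero).trans_eq ?_)
    have := norm_ne_zero_iff.2 hv.a_ne_zero
    have := hv.m_ne_zero
    have hnorm := congrArg norm hv
    simp only [norm_mul, norm_natCast, norm_pow, norm_neg, norm_one] at hnorm
    rw [eq_div_iff (by positivity), mul_comm, hnorm]

lemma IsAttractingDir.norm_parBranch_le (hv : IsAttractingDir m a v) (hζ : 0 < ζ.re) :
    ‖parBranch m v ζ‖ ≤ max 1 (1 / (m * ‖a‖)) * ζ.re ^ (-(1 / m : ℝ)) := by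
  rw [norm_parBranch m v (ne_zero_of_lt_re le_rfl hζ)]
  refine mul_le_mul hv.norm_le ?_ (by positivity) (by positivity)
  exact Real.rpow_le_rpow_of_nonpos hζ (re_le_norm ζ) (neg_nonpos.2 (by positivity))

lemma exists_forall_norm_parBranch_lt (hm : m ≠ 0) (a : ℂ) (hr : 0 < r) :
    ∃ R : ℝ, 1 ≤ R ∧ ∀ v, IsAttractingDir m a v → ∀ ζ : ℂ, R < ζ.re → ‖parBranch m v ζ‖ < r := by
  have hlim : Tendsto (fun x : ℝ => max 1 (1 / (m * ‖a‖)) * x ^ (-(1 / m : ℝ))) atTop (𝓝 0) := by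
    simpa using (tendsto_rpow_neg_atTop (y := 1 / m) (by positivity)).const_mul
      (max 1 (1 / (m * ‖a‖)))
  obtain ⟨R, hR⟩ := eventually_atTop.1 (hlim.eventually_lt_const hr)
  exact ⟨max 1 R, le_max_left _ _, fun v hv ζ hζ => (hv.norm_parBranch_le
    (one_pos.trans_le (le_max_left _ _) |>.trans hζ)).trans_lt
    (hR _ ((le_max_right _ _).trans hζ.le))⟩

lemma differentiableAt_parConj (hv : IsAttractingDir m a v) (hζ : ζ ∈ slitPlane)
    (hf : DifferentiableAt ℂ f (parBranch m v ζ)) (hf0 : f (parBranch m v ζ) ≠ 0) :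
    DifferentiableAt ℂ (parConj f m a v) ζ := by
  have hcomp : DifferentiableAt ℂ (fun ζ => f (parBranch m v ζ)) ζ :=
    hf.fun_comp' ζ (differentiableAt_parBranch m v hζ)
  exact (differentiableAt_const _).div ((hcomp.fun_pow m).const_mul _)
    (mul_ne_zero (left_ne_zero_of_mul hv.mul_ne_zero) (pow_ne_zero _ hf0))

lemma IsParabolicGerm.exists_forall_isPetal (hf : IsParabolicGerm f m a) (hr : 0 < r) :
    ∃ R : ℝ, ∀ v, IsAttractingDir m a v → IsPetal f m a v R r := by
  have hm : 0 < m := Nat.pos_of_ne_zero hf.m_ne_zero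
  obtain ⟨C, hC, hCf⟩ := hf.exists_norm_parCoord_sub_le
  obtain ⟨ε, hε, hεf⟩ := Metric.eventually_nhds_iff.1 (eventually_nhdsWithin_iff.1
    (((hf.analyticAt.eventually_analyticAt.filter_mono nhdsWithin_le_nhds).and
      hf.eventually_ne_zero).and
      ((hCf.and (hf.eventually_norm_parCoord_sub_le (ε := 1 / 4) (by norm_num))).and
      (hf.eventually_norm_div_self_sub_one_lt (ε := 1 / (2 * m)) (by positivity)))))
  obtain ⟨R₀, hR₀, hlt⟩ := exists_forall_norm_parBranch_lt hf.m_ne_zero a (lt_min hr hε)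
  obtain ⟨R, hRR₀, hR⟩ := exists_isFatouCoord (C := C * max 1 (1 / (m * ‖a‖))) (β := 1 / m)
    (by positivity) (by positivity) (zero_le_one.trans hR₀)
  refine ⟨R, fun v hv => ?_⟩
  have hlocal (ζ : ℂ) (hζ : R₀ < ζ.re) := hεf (y := parBranch m v ζ)
    (by simpa using (hlt v hv ζ hζ).trans_le (min_le_right _ _)) (parBranch_ne_zero hv.ne_zero m ζ)
  have hcoord (ζ : ℂ) (hζ : R₀ < ζ.re) : parCoord m a (parBranch m v ζ) = ζ :=
    parCoord_parBranch hv (ne_zero_of_lt_re (zero_le_one.trans hR₀) hζ)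
  have hnear : IsNearTranslation (parConj f m a v) R₀ := by
    refine ⟨fun ζ hζ => ?_, fun ζ hζ => ?_⟩
    · exact differentiableAt_parConj hv (Or.inl (by linarith))
        (hlocal ζ hζ).1.1.differentiableAt (hlocal ζ hζ).1.2
    · simpa only [parConj, hcoord ζ hζ] using (hlocal ζ hζ).2.1.2
  refine ⟨hv, hR₀.trans hRR₀, fun ζ hζ => ?_, hnear.mono hRR₀, fun ζ hζ => ?_,
    hR _ hnear fun ζ hζ => ?_⟩
  · exact (hlt v hv ζ (hRR₀.trans_lt hζ)).trans_le (min_le_left _ _)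
  · exact parBranch_parCoord hv (ζ := ζ) (by linarith) (hlocal ζ (hRR₀.trans_lt hζ)).2.2.le
  · calc ‖parConj f m a v ζ - ζ - 1‖ ≤ C * ‖parBranch m v ζ‖ := by
          simpa only [parConj, hcoord ζ hζ] using (hlocal ζ hζ).2.1.1
      _ ≤ C * (max 1 (1 / (m * ‖a‖)) * ζ.re ^ (-(1 / m : ℝ))) := by
          gcongr
          exact hv.norm_parBranch_le (by linarith)
      _ = C * max 1 (1 / (m * ‖a‖)) * ζ.re ^ (-(1 / m : ℝ)) := (mul_assoc _ _ _).symm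

end Petal

section GermOfIterate

open Asymptotics

variable {f g : ℂ → ℂ} {m : ℕ} {a ω : ℂ}

lemma exists_isParabolicGerm (hf : AnalyticAt ℂ f 0) (hf0 : f 0 = 0) (hf1 : HasDerivAt f 1 0)
    (hne : ¬f =ᶠ[𝓝 0] id) : ∃ m a, IsParabolicGerm f m a := by
  obtain ⟨n, g, hg, hg0, heq⟩ :=
    (hf.fun_sub analyticAt_id).exists_eventuallyEq_pow_smul_nonzero_iff.2
      fun h => hne (h.mono fun z hz => sub_eq_zero.1 hz)
  simp only [sub_zero, smul_eq_mul, id] at heq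
  obtain ⟨m, rfl⟩ : ∃ m, n = m + 1 := by
    refine Nat.exists_eq_succ_of_ne_zero ?_
    rintro rfl
    have h0 := heq.self_of_nhds
    rw [hf0, sub_zero, pow_zero, one_mul] at h0
    exact hg0 h0.symm
  have hm : m ≠ 0 := by
    rintro rfl
    have hderiv₁ : HasDerivAt (fun z => f z - z) (1 - 1) 0 := hf1.fun_sub (hasDerivAt_id 0)
    have hderiv₂ : HasDerivAt (fun z => z ^ (0 + 1) * g z) (1 * g 0 + 0 * deriv g 0) 0 := by
      simpa only [zero_add, pow_one] using
        (hasDerivAt_id' (0 : ℂ)).fun_mul hg.differentiableAt.hasDerivAt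
    have h0 := hderiv₁.unique (hderiv₂.congr_of_eventuallyEq heq)
    rw [sub_self, one_mul, zero_mul, add_zero] at h0
    exact hg0 h0.symm
  refine ⟨m, g 0, hm, hg0, hf, ?_⟩
  have hg1 : (fun z => g z - g 0) =O[𝓝 0] fun z : ℂ => z := by
    simpa using hg.differentiableAt.isBigO_sub
  refine ((isBigO_refl (fun z : ℂ => z ^ (m + 1)) _).mul hg1).congr' ?_
    (Eventually.of_forall fun z => (pow_succ z (m + 1)).symm)
  filter_upwards [heq] with z hz
  rw [hz]
  ring

namespace IsParabolicGerm

lemma tendsto_sub_self_div_pow (hf : IsParabolicGerm f m a) :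
    Tendsto (fun z => (f z - z) / z ^ (m + 1)) (𝓝[≠] 0) (𝓝 a) := by
  have hlittle := (hf.isBigO.trans_isLittleO (isLittleO_pow_pow (m + 1).lt_succ_self)).mono
    (nhdsWithin_le_nhds (s := {0}ᶜ))
  have hlim := (hlittle.tendsto_div_nhds_zero).add_const a
  rw [zero_add] at hlim
  refine hlim.congr' ?_
  filter_upwards [self_mem_nhdsWithin] with z (hz : z ≠ 0)
  field_simp
  ring

/-- Compare the leading terms of `f (g z) - g z` and `g (f z) - g z`. -/
lemma pow_eq_one_of_commute (hf : IsParabolicGerm f m a) (hg : HasStrictDerivAt g ω 0)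
    (hω : ω ≠ 0) (hg0 : g 0 = 0) (hfg : Function.Commute f g) : ω ^ m = 1 := by
  have hgne : Tendsto g (𝓝[≠] 0) (𝓝[≠] 0) := by
    simpa only [hg0] using hg.hasDerivAt.tendsto_nhdsNE hω
  have hfself : Tendsto (fun z => (f z, z)) (𝓝[≠] 0) (𝓝 (0, 0)) := by
    have hcont : ContinuousAt (fun z => (f z, z)) 0 :=
      hf.analyticAt.continuousAt.prodMk continuousAt_id
    simpa only [hf.map_zero] using hcont.tendsto.mono_left nhdsWithin_le_nhds
  have hfne : ∀ᶠ z in 𝓝[≠] 0, f z - z ≠ 0 :=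
    (hf.tendsto_sub_self_div_pow.eventually_ne hf.a_ne_zero).mono
      fun z hz => (div_ne_zero_iff.1 hz).1
  have hgslope : Tendsto (fun z => (g (f z) - g z) / (f z - z)) (𝓝[≠] 0) (𝓝 ω) := by
    have hlim := ((hg.isLittleO.comp_tendsto hfself).tendsto_div_nhds_zero).add_const ω
    rw [zero_add] at hlim
    refine hlim.congr' ?_
    filter_upwards [hfne] with z hz
    simp only [Function.comp_apply, ContinuousLinearMap.toSpanSingleton_apply, smul_eq_mul]
    field_simp
    ring
  have hgdiv : Tendsto (fun z => g z / z) (𝓝[≠] 0) (𝓝 ω) := by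
    simpa only [slope_fun_def, hg0, sub_zero, vsub_eq_sub, smul_eq_mul, inv_mul_eq_div] using
      hg.hasDerivAt.tendsto_slope
  have hlim₁ := (hf.tendsto_sub_self_div_pow.comp hgne).mul (hgdiv.pow (m + 1))
  have hlim₂ := hgslope.mul hf.tendsto_sub_self_div_pow
  have hlim : a * ω ^ (m + 1) = ω * a := by
    refine tendsto_nhds_unique (hlim₁.congr' ?_) hlim₂
    filter_upwards [hfne, self_mem_nhdsWithin, hgne self_mem_nhdsWithin]
      with z hfz (hz : z ≠ 0) (hgz : g z ≠ 0)
    simp only [Function.comp_apply, hfg.eq z, div_pow]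
    field_simp
  refine mul_left_cancel₀ (mul_ne_zero hω hf.a_ne_zero) ?_
  linear_combination hlim

end IsParabolicGerm

@[simp]
lemma Pq_zero (ω : ℂ) : Pq ω 0 = 0 := by simp [Pq]

@[simp]
lemma Pq_iterate_zero (ω : ℂ) (n : ℕ) : (Pq ω)^[n] 0 = 0 := Function.iterate_fixed (Pq_zero ω) n

lemma hasDerivAt_Pq (ω z : ℂ) : HasDerivAt (Pq ω) (ω + 2 * z) z :=
  (((hasDerivAt_id' z).const_mul ω).fun_add ((hasDerivAt_id' z).fun_pow 2)).congr_deriv (by simp)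

lemma hasDerivAt_Pq_iterate_zero (ω : ℂ) (n : ℕ) : HasDerivAt (Pq ω)^[n] (ω ^ n) 0 :=
  HasDerivAt.iterate 0 (by simpa using hasDerivAt_Pq ω 0) (Pq_zero ω) n

lemma three_lt_norm_Pq_iterate_succ (hω : ‖ω‖ ≤ 1) (n : ℕ) : 3 < ‖(Pq ω)^[n + 1] 3‖ := by
  induction n with
  | zero => simpa using norm_lt_norm_Pq hω (z := 3) (by norm_num)
  | succ n ih =>
    rw [Function.iterate_succ_apply']
    exact ih.trans (norm_lt_norm_Pq hω (by linarith))

lemma exists_isParabolicGerm_Pq_iterate {q : ℕ} (hq : q ≠ 0) (hω : IsPrimitiveRoot ω q) :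
    ∃ m a, IsParabolicGerm (Pq ω)^[q] m a := by
  have hf := differentiable_Pq_iterate ω q
  have hne : ¬(Pq ω)^[q] =ᶠ[𝓝 0] id := by
    intro hid
    have heq : (Pq ω)^[q] = id := AnalyticOnNhd.eq_of_eventuallyEq (𝕜 := ℂ)
      (fun z _ => hf.analyticAt z) (fun _ _ => analyticAt_id) hid
    have hlt := three_lt_norm_Pq_iterate_succ (hω.norm'_eq_one hq).le (q - 1)
    rw [Nat.sub_one_add_one hq, heq, id, norm_ofNat] at hlt
    exact hlt.false
  have hderiv : HasDerivAt (Pq ω)^[q] 1 0 := hω.pow_eq_one ▸ hasDerivAt_Pq_iterate_zero ω q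
  exact exists_isParabolicGerm (hf.analyticAt 0) (Pq_iterate_zero ω q) hderiv hne

lemma pow_eq_one_of_isParabolicGerm_Pq_iterate {q : ℕ} (hω : ω ≠ 0)
    (h : IsParabolicGerm (Pq ω)^[q] m a) : ω ^ m = 1 := by
  have hstrict : HasStrictDerivAt (Pq ω) ω 0 := by
    have := ((differentiable_Pq ω).analyticAt 0).hasStrictDerivAt
    rwa [(hasDerivAt_Pq ω 0).deriv, mul_zero, add_zero] at this
  exact h.pow_eq_one_of_commute hstrict hω (Pq_zero ω) (Function.Commute.iterate_self _ _)

end GermOfIterate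

section ConnectedComponentIn

variable {X Y : Type*} [TopologicalSpace X] [TopologicalSpace Y] {f : X → Y} {U : Set Y} {z : X}

lemma image_connectedComponentIn_preimage_subset (hf : Continuous f) (hz : f z ∈ U) :
    f '' connectedComponentIn (f ⁻¹' U) z ⊆ connectedComponentIn U (f z) := by
  refine (isPreconnected_connectedComponentIn.image _ hf.continuousOn).subset_connectedComponentIn
    (mem_image_of_mem f (mem_connectedComponentIn hz)) ?_
  exact image_subset_iff.2 (connectedComponentIn_subset _ _)

lemma image_connectedComponentIn_preimage [LocallyConnectedSpace X] [T2Space Y]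
    (hf : Continuous f) (hfo : IsOpenMap f) (hU : IsOpen U)
    (hc : IsCompact (closure (connectedComponentIn (f ⁻¹' U) z))) (hz : f z ∈ U) :
    f '' connectedComponentIn (f ⁻¹' U) z = connectedComponentIn U (f z) := by
  have hV : IsOpen (f ⁻¹' U) := hU.preimage hf
  refine (image_connectedComponentIn_preimage_subset hf hz).antisymm ?_
  refine isPreconnected_connectedComponentIn.subset_of_closure_inter_subset
    (hfo _ hV.connectedComponentIn)
    ⟨f z, mem_connectedComponentIn hz, mem_image_of_mem f (mem_connectedComponentIn hz)⟩ ?_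
  rintro y ⟨hy, hyU⟩
  obtain ⟨x, hx, rfl⟩ :=
    closure_minimal (image_mono subset_closure) (hc.image hf).isClosed hy
  have hxV : x ∈ f ⁻¹' U := connectedComponentIn_subset U (f z) hyU
  obtain ⟨x', hx', hx'z⟩ := mem_closure_iff.1 hx _ (hV.connectedComponentIn (x := x))
    (mem_connectedComponentIn hxV)
  refine ⟨x, ?_, rfl⟩
  rw [connectedComponentIn_eq hx'z, ← connectedComponentIn_eq hx']
  exact mem_connectedComponentIn hxV

end ConnectedComponentIn

section Basin

variable {ω z : ℂ}

lemma Pq_mem_basin : Pq ω z ∈ basin ω ↔ z ∈ basin ω := by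
  simp only [basin, basinAug, preFixed, Set.mem_sdiff, mem_ofPred_eq, ← Function.iterate_succ_apply]
  refine and_congr (tendsto_add_atTop_iff_nat (f := fun n => (Pq ω)^[n] z) 1) (not_congr ⟨?_, ?_⟩)
  · rintro ⟨n, hn⟩
    exact ⟨n + 1, hn⟩
  · rintro ⟨n, hn⟩
    exact ⟨n, by rw [Function.iterate_succ_apply', hn, Pq_zero]⟩

lemma Pq_iterate_mem_basin (n : ℕ) : (Pq ω)^[n] z ∈ basin ω ↔ z ∈ basin ω := by
  induction n with
  | zero => rfl
  | succ n ih => rw [Function.iterate_succ_apply', Pq_mem_basin, ih]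

lemma zero_notMem_basin : 0 ∉ basin ω := fun h => h.2 ⟨0, rfl⟩

lemma norm_le_four_of_mem_basin (hω : ‖ω‖ ≤ 1) (hz : z ∈ basin ω) : ‖z‖ ≤ 4 :=
  norm_le_four_of_green_eq_zero hω (green_eq_zero_of_mem_basinAug hω hz.1)

lemma tendsto_Pq_iterate_of_tendsto_iterate_iterate {q : ℕ} (hq : q ≠ 0)
    (hz : Tendsto (fun n => ((Pq ω)^[q])^[n] z) atTop (𝓝 0)) :
    Tendsto (fun n => (Pq ω)^[n] z) atTop (𝓝 0) := by
  rw [Metric.tendsto_atTop]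
  intro ε hε
  have hres (j : ℕ) : ∀ᶠ n in atTop, dist ((Pq ω)^[j] (((Pq ω)^[q])^[n] z)) 0 < ε := by
    have hlim := ((continuous_Pq_iterate ω j).tendsto 0).comp hz
    rw [Pq_iterate_zero] at hlim
    exact Metric.tendsto_nhds.1 hlim ε hε
  obtain ⟨N, hN⟩ := eventually_atTop.1
    ((Finset.eventually_all (Finset.range q)).2 fun j _ => hres j)
  refine ⟨q * N, fun n hn => ?_⟩
  have hdist := hN (n / q) ((Nat.le_div_iff_mul_le (Nat.pos_of_ne_zero hq)).2 (by rwa [mul_comm]))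
    (n % q) (Finset.mem_range.2 (Nat.mod_lt _ (Nat.pos_of_ne_zero hq)))
  rwa [← Function.iterate_mul, ← Function.iterate_add_apply, Nat.mod_add_div] at hdist

lemma mem_basin_of_tendsto_iterate_iterate {q : ℕ} (hq : q ≠ 0)
    (hz : Tendsto (fun n => ((Pq ω)^[q])^[n] z) atTop (𝓝 0)) (hne : ∀ n, ((Pq ω)^[q])^[n] z ≠ 0) :
    z ∈ basin ω := by
  refine ⟨tendsto_Pq_iterate_of_tendsto_iterate_iterate hq hz, ?_⟩
  rintro ⟨n, hn⟩
  apply hne n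
  obtain ⟨k, hk⟩ := Nat.exists_eq_add_of_le' (Nat.le_mul_of_pos_left n (Nat.pos_of_ne_zero hq))
  rw [← Function.iterate_mul, hk, Function.iterate_add_apply, hn, Pq_iterate_zero]

lemma tendsto_iterate_iterate_of_mem_basin {q : ℕ} (hq : q ≠ 0) (hz : z ∈ basin ω) :
    Tendsto (fun n => ((Pq ω)^[q])^[n] z) atTop (𝓝 0) := by
  have hlim : Tendsto (fun n => (Pq ω)^[n] z) atTop (𝓝 0) := hz.1
  have hmul : Tendsto (fun n : ℕ => q * n) atTop atTop :=
    tendsto_id.const_mul_atTop' (Nat.pos_of_ne_zero hq)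
  simpa only [Function.comp_def, Function.iterate_mul] using hlim.comp hmul

lemma isOpenMap_Pq (ω : ℂ) : IsOpenMap (Pq ω) := by
  refine (AnalyticOnNhd.is_constant_or_isOpenMap
    fun z _ => (differentiable_Pq ω).analyticAt z).resolve_left ?_
  rintro ⟨w, hw⟩
  have h₀ := hw 0
  have h₁ := hw 1
  have h₂ := hw (-1)
  simp only [Pq] at h₀ h₁ h₂
  exact two_ne_zero (α := ℂ) (by linear_combination h₁ + h₂ - 2 * h₀)

lemma image_Pq_connectedComponentIn_basin (hω : ‖ω‖ ≤ 1) (hopen : IsOpen (basin ω))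
    (hz : z ∈ basin ω) :
    Pq ω '' connectedComponentIn (basin ω) z = connectedComponentIn (basin ω) (Pq ω z) := by
  have hpre : Pq ω ⁻¹' basin ω = basin ω := ext fun _ => Pq_mem_basin
  have hbdd : Bornology.IsBounded (connectedComponentIn (Pq ω ⁻¹' basin ω) z) := by
    refine (Metric.isBounded_closedBall (x := (0 : ℂ)) (r := 4)).subset fun x hx => ?_
    rw [hpre] at hx
    exact mem_closedBall_zero_iff.2
      (norm_le_four_of_mem_basin hω (connectedComponentIn_subset _ _ hx))
  have himage := image_connectedComponentIn_preimage (differentiable_Pq ω).continuous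
    (isOpenMap_Pq ω) hopen hbdd.isCompact_closure (Pq_mem_basin.2 hz)
  rwa [hpre] at himage

end Basin

section PetalSet

variable {f : ℂ → ℂ} {m : ℕ} {a v v' z ζ : ℂ} {R r : ℝ}

/-- The sector about the direction `v` that `parCoord` maps to the half-plane `{ζ | R < ζ.re}`. -/
def petal (m : ℕ) (v : ℂ) (R : ℝ) : Set ℂ := parBranch m v '' {ζ | R < ζ.re}

lemma exists_mem_petal_of_lt_re_parCoord (hm : m ≠ 0) (ha : a ≠ 0) (hz : z ≠ 0) (hR : 0 ≤ R)
    (h : R < (parCoord m a z).re) : ∃ v, IsAttractingDir m a v ∧ z ∈ petal m v R := by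
  have hm : (m : ℂ) ≠ 0 := Nat.cast_ne_zero.2 hm
  have hζ := ne_zero_of_lt_re hR h
  refine ⟨z * exp (log (parCoord m a z) / m), ?_, parCoord m a z, h, ?_⟩
  · rw [IsAttractingDir, mul_pow, ← exp_nat_mul, mul_div_cancel₀ _ hm, exp_log hζ, parCoord]
    field_simp
  · rw [parBranch, mul_assoc, ← exp_add, neg_div, add_neg_cancel, exp_zero, mul_one]

lemma exists_isAttractingDir (hm : m ≠ 0) (ha : a ≠ 0) : ∃ v, IsAttractingDir m a v := by
  obtain ⟨v, hv⟩ := IsAlgClosed.exists_pow_nat_eq (-1 / (m * a) : ℂ) (Nat.pos_of_ne_zero hm)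
  have hm : (m : ℂ) ≠ 0 := Nat.cast_ne_zero.2 hm
  exact ⟨v, by rw [IsAttractingDir, hv]; field_simp⟩

lemma tendsto_parBranch_comp (hm : m ≠ 0) (v : ℂ) {u : ℕ → ℂ}
    (hu : Tendsto (fun n => (u n).re) atTop atTop) :
    Tendsto (fun n => parBranch m v (u n)) atTop (𝓝 0) := by
  have hnorm : Tendsto (fun n => ‖u n‖) atTop atTop :=
    tendsto_atTop_mono (fun n => re_le_norm (u n)) hu
  have hlim := ((tendsto_rpow_neg_atTop (y := 1 / m) (by positivity)).comp hnorm).const_mul ‖v‖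
  rw [mul_zero] at hlim
  refine squeeze_zero_norm' ?_ hlim
  filter_upwards [hu.eventually_gt_atTop 0] with n hn
  exact (norm_parBranch m v (ne_zero_of_lt_re le_rfl hn)).le

lemma isOpen_petal (hv : IsAttractingDir m a v) (hR : 0 ≤ R) : IsOpen (petal m v R) := by
  rw [isOpen_iff_mem_nhds]
  rintro _ ⟨ζ, hζ : R < ζ.re, rfl⟩
  have hne := parBranch_ne_zero hv.ne_zero m ζ
  have hdiv : Tendsto (fun w => ‖w / parBranch m v ζ - 1‖) (𝓝 (parBranch m v ζ)) (𝓝 0) :=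
    (by fun_prop : Continuous fun w => ‖w / parBranch m v ζ - 1‖).tendsto' _ _
      (by simp [div_self hne])
  have hcoord : Tendsto (fun w => (parCoord m a w).re) (𝓝 (parBranch m v ζ)) (𝓝 ζ.re) := by
    have hcont : ContinuousAt (parCoord m a) (parBranch m v ζ) :=
      continuousAt_const.div (by fun_prop)
        (mul_ne_zero (left_ne_zero_of_mul hv.mul_ne_zero) (pow_ne_zero _ hne))
    have hlim := (continuous_re.tendsto _).comp hcont.tendsto
    rwa [parCoord_parBranch hv (ne_zero_of_lt_re hR hζ)] at hlim
  have hm : 0 < m := Nat.pos_of_ne_zero hv.m_ne_zero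
  filter_upwards [hdiv.eventually_lt_const (u := 1 / (2 * m : ℝ)) (by positivity),
    hcoord.eventually_const_lt hζ] with w hw hRw
  exact ⟨parCoord m a w, hRw, parBranch_parCoord hv (hR.trans_lt hζ) hw.le⟩

lemma isPreconnected_petal (m : ℕ) (v : ℂ) (hR : 0 ≤ R) : IsPreconnected (petal m v R) :=
  (convex_halfSpace_re_gt R).isPreconnected.image _ fun _ hζ => (differentiableAt_parBranch m v
    (Or.inl (hR.trans_lt hζ))).continuousAt.continuousWithinAt

lemma eq_of_mem_petal_of_mem_petal (hv : IsAttractingDir m a v) (hv' : IsAttractingDir m a v')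
    (hR : 0 ≤ R) (hz : z ∈ petal m v R) (hz' : z ∈ petal m v' R) : v = v' := by
  obtain ⟨ζ, hζ, rfl⟩ := hz
  obtain ⟨ζ', hζ', heq⟩ := hz'
  obtain rfl : ζ' = ζ := by
    rw [← parCoord_parBranch hv (ne_zero_of_lt_re hR hζ), ← heq,
      parCoord_parBranch hv' (ne_zero_of_lt_re hR hζ')]
  exact (mul_right_cancel₀ (exp_ne_zero _) heq).symm

namespace IsPetal

lemma nonneg (hp : IsPetal f m a v R r) : 0 ≤ R := zero_le_one.trans hp.one_le

lemma parBranch_iterate (hp : IsPetal f m a v R r) (hζ : R < ζ.re) (n : ℕ) :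
    parBranch m v ((parConj f m a v)^[n] ζ) = f^[n] (parBranch m v ζ) := by
  induction n with
  | zero => rfl
  | succ n ih =>
    rw [Function.iterate_succ_apply', Function.iterate_succ_apply',
      hp.parBranch_parConj _ (hp.isNearTranslation.lt_re_iterate hζ n), ih]

lemma iterate_mem_petal (hp : IsPetal f m a v R r) (hz : z ∈ petal m v R) (n : ℕ) :
    f^[n] z ∈ petal m v R := by
  obtain ⟨ζ, hζ, rfl⟩ := hz
  exact ⟨_, hp.isNearTranslation.lt_re_iterate hζ n, hp.parBranch_iterate hζ n⟩

lemma tendsto_iterate (hp : IsPetal f m a v R r) (hz : z ∈ petal m v R) :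
    Tendsto (fun n => f^[n] z) atTop (𝓝 0) := by
  obtain ⟨ζ, hζ, rfl⟩ := hz
  simp only [← hp.parBranch_iterate hζ]
  refine tendsto_parBranch_comp hp.isAttractingDir.m_ne_zero v (tendsto_atTop_mono
    (fun n => hp.isNearTranslation.re_add_le_re_iterate hζ n) ?_)
  exact tendsto_atTop_add_const_left _ _
    (tendsto_natCast_atTop_atTop.const_mul_atTop (by norm_num))

end IsPetal

lemma zero_notMem_petal (hv : v ≠ 0) (m : ℕ) (R : ℝ) : 0 ∉ petal m v R := by
  rintro ⟨ζ, -, hζ⟩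
  exact parBranch_ne_zero hv m ζ hζ

lemma IsParabolicGerm.exists_iterate_mem_petal (hf : IsParabolicGerm f m a) (hR : 0 ≤ R)
    (hz : Tendsto (fun n => f^[n] z) atTop (𝓝 0)) (hne : ∀ n, f^[n] z ≠ 0) :
    ∃ v, IsAttractingDir m a v ∧ ∃ n, f^[n] z ∈ petal m v R := by
  have hlim : Tendsto (fun n => f^[n] z) atTop (𝓝[≠] 0) :=
    tendsto_nhdsWithin_iff.2 ⟨hz, Eventually.of_forall hne⟩
  obtain ⟨N, hN⟩ := eventually_atTop.1
    (hlim.eventually (hf.eventually_norm_parCoord_sub_le (ε := 1 / 4) (by norm_num)))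
  have hre (k : ℕ) :
      (parCoord m a (f^[N] z)).re + 3 / 4 * k ≤ (parCoord m a (f^[N + k] z)).re := by
    induction k with
    | zero => simp
    | succ k ih =>
      have hstep := (abs_re_le_norm _).trans (hN (N + k) (Nat.le_add_right N k))
      rw [sub_re, sub_re, one_re, ← Function.iterate_succ_apply' f] at hstep
      rw [← Nat.add_assoc]
      push_cast
      linarith [(abs_le.1 hstep).1]
  obtain ⟨k, hk⟩ := exists_nat_gt ((R - (parCoord m a (f^[N] z)).re) * (4 / 3))
  obtain ⟨v, hv, hmem⟩ := exists_mem_petal_of_lt_re_parCoord hf.m_ne_zero hf.a_ne_zero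
    (hne (N + k)) hR (by linarith [hre k])
  exact ⟨v, hv, N + k, hmem⟩

end PetalSet

section AttractingPetals

variable {ω a v v' z : ℂ} {q m : ℕ} {R : ℝ}

/-- A choice of attracting petals for `Pq ω` when `ω` is a root of unity: `q` is a period of `ω`,
`m` and `a` are the parameters of the germ of the `q`-th iterate at `0`, and `R` measures the size
of the petals. -/
structure HasAttractingPetals (ω : ℂ) (q m : ℕ) (a : ℂ) (R : ℝ) : Prop where
  norm_eq_one : ‖ω‖ = 1
  q_ne_zero : q ≠ 0
  isParabolicGerm : IsParabolicGerm (Pq ω)^[q] m a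
  isPetal : ∀ v, IsAttractingDir m a v → IsPetal (Pq ω)^[q] m a v R 1

/-- The set of points whose orbit under the `q`-th iterate enters the petal about `v`. -/
def petalBasin (ω : ℂ) (q m : ℕ) (v : ℂ) (R : ℝ) : Set ℂ :=
  {z | ∃ n, ((Pq ω)^[q])^[n] z ∈ petal m v R}

namespace HasAttractingPetals

lemma nonneg (h : HasAttractingPetals ω q m a R) : 0 ≤ R := by
  obtain ⟨v, hv⟩ :=
    exists_isAttractingDir h.isParabolicGerm.m_ne_zero h.isParabolicGerm.a_ne_zero
  exact (h.isPetal v hv).nonneg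

lemma petal_subset_basin (h : HasAttractingPetals ω q m a R) (hv : IsAttractingDir m a v) :
    petal m v R ⊆ basin ω := fun _ hz =>
  mem_basin_of_tendsto_iterate_iterate h.q_ne_zero ((h.isPetal v hv).tendsto_iterate hz)
    fun n h0 => zero_notMem_petal hv.ne_zero m R (h0 ▸ (h.isPetal v hv).iterate_mem_petal hz n)

lemma exists_mem_petalBasin (h : HasAttractingPetals ω q m a R) (hz : z ∈ basin ω) :
    ∃ v, IsAttractingDir m a v ∧ z ∈ petalBasin ω q m v R :=
  h.isParabolicGerm.exists_iterate_mem_petal h.nonneg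
    (tendsto_iterate_iterate_of_mem_basin h.q_ne_zero hz)
    fun n h0 => hz.2 ⟨q * n, by rw [Function.iterate_mul, h0]⟩

lemma isOpen_petalBasin (h : HasAttractingPetals ω q m a R) (hv : IsAttractingDir m a v) :
    IsOpen (petalBasin ω q m v R) := by
  simp only [petalBasin, ofPred_exists]
  exact isOpen_iUnion fun n =>
    (isOpen_petal hv h.nonneg).preimage ((continuous_Pq_iterate ω q).iterate n)

lemma eq_of_mem_petalBasin_of_mem_petalBasin (h : HasAttractingPetals ω q m a R)
    (hv : IsAttractingDir m a v) (hv' : IsAttractingDir m a v') (hz : z ∈ petalBasin ω q m v R)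
    (hz' : z ∈ petalBasin ω q m v' R) : v = v' := by
  obtain ⟨n, hn⟩ := hz
  obtain ⟨n', hn'⟩ := hz'
  have hmem := (h.isPetal v hv).iterate_mem_petal hn n'
  have hmem' := (h.isPetal v' hv').iterate_mem_petal hn' n
  rw [← Function.iterate_add_apply] at hmem hmem'
  exact eq_of_mem_petal_of_mem_petal hv hv' h.nonneg hmem (add_comm n n' ▸ hmem')

lemma petalBasin_subset_basin (h : HasAttractingPetals ω q m a R) (hv : IsAttractingDir m a v) :
    petalBasin ω q m v R ⊆ basin ω := by
  rintro z ⟨n, hn⟩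
  rw [← Function.iterate_mul] at hn
  exact (Pq_iterate_mem_basin _).1 (h.petal_subset_basin hv hn)

lemma isOpen_basin (h : HasAttractingPetals ω q m a R) : IsOpen (basin ω) := by
  have hunion : basin ω = ⋃ v : {v // IsAttractingDir m a v}, petalBasin ω q m v R := by
    ext z
    simp only [mem_iUnion, Subtype.exists, exists_prop]
    exact ⟨h.exists_mem_petalBasin, fun ⟨v, hv, hz⟩ => h.petalBasin_subset_basin hv hz⟩
  rw [hunion]
  exact isOpen_iUnion fun v => h.isOpen_petalBasin v.2

lemma subset_petalBasin_of_isPreconnected (h : HasAttractingPetals ω q m a R)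
    (hv : IsAttractingDir m a v) {S : Set ℂ} (hS : IsPreconnected S) (hSb : S ⊆ basin ω)
    (hzS : z ∈ S) (hz : z ∈ petalBasin ω q m v R) : S ⊆ petalBasin ω q m v R := by
  refine hS.subset_left_of_subset_union (h.isOpen_petalBasin hv)
    (v := ⋃ v' : {v' // IsAttractingDir m a v' ∧ v' ≠ v}, petalBasin ω q m v' R)
    (isOpen_iUnion fun v' => h.isOpen_petalBasin v'.2.1) ?_ ?_ ⟨z, hzS, hz⟩
  · refine disjoint_iUnion_right.2 fun v' => disjoint_left.2 fun x hx hx' => ?_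
    exact v'.2.2 (h.eq_of_mem_petalBasin_of_mem_petalBasin v'.2.1 hv hx' hx)
  · intro x hx
    obtain ⟨v', hv', hx'⟩ := h.exists_mem_petalBasin (hSb hx)
    rcases eq_or_ne v' v with rfl | hne
    · exact Or.inl hx'
    · exact Or.inr (mem_iUnion.2 ⟨⟨v', hv', hne⟩, hx'⟩)

lemma image_component (h : HasAttractingPetals ω q m a R) (hz : z ∈ basin ω) :
    Pq ω '' connectedComponentIn (basin ω) z = connectedComponentIn (basin ω) (Pq ω z) :=
  image_Pq_connectedComponentIn_basin h.norm_eq_one.le h.isOpen_basin hz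

end HasAttractingPetals

end AttractingPetals

section LocalInverse

open Metric

lemma exists_differentiableOn_eqOn_exp_ball {h : ℂ → ℂ} {c : ℂ} {ρ : ℝ}
    (hd : DifferentiableOn ℂ h (ball c ρ)) (hne : ∀ x ∈ ball c ρ, h x ≠ 0) :
    ∃ g : ℂ → ℂ, DifferentiableOn ℂ g (ball c ρ) ∧ EqOn (exp ∘ g) h (ball c ρ) := by
  rcases (ball c ρ).eq_empty_or_nonempty with hempty | ⟨x₀, hx₀⟩
  · exact ⟨h, hd, fun x hx => absurd hx (hempty ▸ notMem_empty x)⟩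
  obtain ⟨g, hg⟩ := ((hd.deriv isOpen_ball).div hd hne).isExactOn_ball
  have hderiv : ∀ x ∈ ball c ρ, HasDerivAt (fun x => h x * exp (-g x)) 0 x := fun x hx =>
    (((hd.differentiableAt (isOpen_ball.mem_nhds hx)).hasDerivAt.fun_mul
      (hg x hx).fun_neg.cexp)).congr_deriv (by
        have := hne x hx
        simp only [Pi.div_apply]
        field_simp
        ring)
  refine ⟨fun x => log (h x₀ * exp (-g x₀)) + g x, fun x hx =>
    ((hg x hx).differentiableAt.const_add _).differentiableWithinAt, fun x hx => ?_⟩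
  have hconst : h x * exp (-g x) = h x₀ * exp (-g x₀) :=
    isOpen_ball.is_const_of_deriv_eq_zero isPreconnected_ball
      (fun x hx => (hderiv x hx).differentiableAt.differentiableWithinAt)
      (fun x hx => (hderiv x hx).deriv) hx hx₀
  rw [Function.comp_apply, exp_add, exp_log (mul_ne_zero (hne x₀ hx₀) (exp_ne_zero _)), ← hconst,
    mul_assoc, ← exp_add, neg_add_cancel, exp_zero, mul_one]

lemma exists_differentiableOn_sq_eq_ball {h : ℂ → ℂ} {c x₀ b : ℂ} {ρ : ℝ}
    (hd : DifferentiableOn ℂ h (ball c ρ)) (hne : ∀ x ∈ ball c ρ, h x ≠ 0)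
    (hx₀ : x₀ ∈ ball c ρ) (hb : b ^ 2 = h x₀) :
    ∃ s : ℂ → ℂ, DifferentiableOn ℂ s (ball c ρ) ∧ s x₀ = b ∧ ∀ x ∈ ball c ρ, s x ^ 2 = h x := by
  obtain ⟨g, hg, hexp⟩ := exists_differentiableOn_eqOn_exp_ball hd hne
  refine ⟨fun x => b * exp ((g x - g x₀) / 2), by fun_prop, by simp, fun x hx => ?_⟩
  rw [mul_pow, ← exp_nat_mul, hb, ← hexp hx, ← hexp hx₀, Function.comp_apply, Function.comp_apply,
    ← exp_add]
  congr 1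
  push_cast
  ring

lemma Pq_sub_Pq_critical (ω z : ℂ) : Pq ω z - Pq ω (-ω / 2) = (z - -ω / 2) ^ 2 := by
  simp only [Pq]
  ring

lemma deriv_parBranch_ne_zero {m : ℕ} {v ζ : ℂ} (hm : m ≠ 0) (hv : v ≠ 0) (hζ : 0 < ζ.re) :
    deriv (parBranch m v) ζ ≠ 0 := by
  have hderiv := ((hasDerivAt_log (Or.inl hζ)).fun_neg.div_const (m : ℂ)).cexp.const_mul v
  have hζ₀ := ne_zero_of_lt_re le_rfl hζ
  have hm : (m : ℂ) ≠ 0 := Nat.cast_ne_zero.2 hm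
  rw [show deriv (parBranch m v) ζ = _ from hderiv.deriv]
  exact mul_ne_zero hv (mul_ne_zero (exp_ne_zero _)
    (div_ne_zero (neg_ne_zero.2 (inv_ne_zero hζ₀)) hm))

lemma deriv_mul_deriv_eq_of_semiconj {T H φ F : ℂ → ℂ} {ζ : ℂ} (hT : Differentiable ℂ T)
    (hH : DifferentiableAt ℂ H (F ζ)) (hF : DifferentiableAt ℂ F ζ) (hφ : DifferentiableAt ℂ φ ζ)
    (hHF : H (F ζ) = φ ζ) (hTH : T ∘ H =ᶠ[𝓝 (F ζ)] φ) (hTφ : T ∘ φ =ᶠ[𝓝 ζ] φ ∘ F)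
    (hne : deriv φ (F ζ) ≠ 0) : deriv H (F ζ) * deriv F ζ = deriv φ ζ := by
  have hφF : HasDerivAt φ (deriv T (φ ζ) * deriv H (F ζ)) (F ζ) := by
    rw [← hHF]
    exact (hT.differentiableAt.hasDerivAt.comp (F ζ) hH.hasDerivAt).congr_of_eventuallyEq hTH.symm
  have hcomp : deriv T (φ ζ) * deriv H (F ζ) * deriv F ζ = deriv T (φ ζ) * deriv φ ζ :=
    (hφF.comp ζ hF.hasDerivAt).unique
      ((hT.differentiableAt.hasDerivAt.comp ζ hφ.hasDerivAt).congr_of_eventuallyEq hTφ.symm)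
  rw [mul_assoc] at hcomp
  refine mul_left_cancel₀ (fun h₀ => hne ?_) hcomp
  rw [hφF.deriv, h₀, zero_mul]

end LocalInverse

section CriticalPoint

open Metric

variable {ω : ℂ} {q m : ℕ} {a : ℂ} {R : ℝ}

lemma exists_lift_Pq (hω : ‖ω‖ ≤ 1) (hopen : IsOpen (basin ω)) {H : ℂ → ℂ} {c x₀ y : ℂ} {ρ : ℝ}
    (hd : DifferentiableOn ℂ H (ball c ρ)) (hx₀ : x₀ ∈ ball c ρ) (hy : y ∈ basin ω)
    (hHx₀ : H x₀ = Pq ω y)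
    (hH : MapsTo H (ball c ρ) (connectedComponentIn (basin ω) (Pq ω y)))
    (hcrit : -ω / 2 ∉ connectedComponentIn (basin ω) y) :
    ∃ H' : ℂ → ℂ, DifferentiableOn ℂ H' (ball c ρ) ∧ H' x₀ = y ∧
      MapsTo H' (ball c ρ) (connectedComponentIn (basin ω) y) ∧
      EqOn (Pq ω ∘ H') H (ball c ρ) := by
  have hne : ∀ x ∈ ball c ρ, H x - Pq ω (-ω / 2) ≠ 0 := by
    intro x hx hzero
    have hcomp := hH hx
    rw [sub_eq_zero.1 hzero, ← image_Pq_connectedComponentIn_basin hω hopen hy] at hcomp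
    obtain ⟨u, hu, hPu⟩ := hcomp
    have hsq := Pq_sub_Pq_critical ω u
    rw [hPu, sub_self, eq_comm, sq_eq_zero_iff, sub_eq_zero] at hsq
    exact hcrit (hsq ▸ hu)
  obtain ⟨s, hs, hsx₀, hsq⟩ := exists_differentiableOn_sq_eq_ball (b := y - -ω / 2)
    (hd.sub_const _) hne hx₀ (by rw [← Pq_sub_Pq_critical, hHx₀])
  have hs' : DifferentiableOn ℂ (fun x => -ω / 2 + s x) (ball c ρ) := by fun_prop
  have hx₀y : -ω / 2 + s x₀ = y := by rw [hsx₀, add_sub_cancel]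
  have hP : EqOn (Pq ω ∘ fun x => -ω / 2 + s x) H (ball c ρ) := fun x hx =>
    sub_left_injective (b := Pq ω (-ω / 2)) (by
      simp only [Function.comp_apply, Pq_sub_Pq_critical, add_sub_cancel_left, hsq x hx])
  refine ⟨_, hs', hx₀y, mapsTo_iff_image_subset.2 ?_, hP⟩
  refine (isPreconnected_ball.image _ hs'.continuousOn).subset_connectedComponentIn
    ⟨x₀, hx₀, hx₀y⟩ (image_subset_iff.2 fun x hx => Pq_mem_basin.1 ?_)
  have hPx : Pq ω (-ω / 2 + s x) = H x := hP hx
  exact hPx ▸ connectedComponentIn_subset _ _ (hH hx)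

lemma exists_lift_Pq_iterate (hω : ‖ω‖ ≤ 1) (hopen : IsOpen (basin ω)) {H : ℂ → ℂ} {c x₀ y : ℂ}
    {ρ : ℝ} (hd : DifferentiableOn ℂ H (ball c ρ)) (hx₀ : x₀ ∈ ball c ρ) (n : ℕ)
    (hy : y ∈ basin ω) (hHx₀ : H x₀ = (Pq ω)^[n] y)
    (hH : MapsTo H (ball c ρ) (connectedComponentIn (basin ω) ((Pq ω)^[n] y)))
    (hcrit : ∀ j, -ω / 2 ∉ connectedComponentIn (basin ω) ((Pq ω)^[j] y)) :
    ∃ H' : ℂ → ℂ, DifferentiableOn ℂ H' (ball c ρ) ∧ H' x₀ = y ∧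
      MapsTo H' (ball c ρ) (connectedComponentIn (basin ω) y) ∧
      EqOn ((Pq ω)^[n] ∘ H') H (ball c ρ) := by
  induction n generalizing y with
  | zero => exact ⟨H, hd, hHx₀, hH, fun _ _ => rfl⟩
  | succ n ih =>
    obtain ⟨H₁, hd₁, hx₁, hmaps₁, heq₁⟩ := ih (Pq_mem_basin.2 hy) hHx₀ hH fun j => hcrit (j + 1)
    obtain ⟨H₂, hd₂, hx₂, hmaps₂, heq₂⟩ := exists_lift_Pq hω hopen hd₁ hx₀ hy hx₁ hmaps₁ (hcrit 0)
    refine ⟨H₂, hd₂, hx₂, hmaps₂, fun x hx => ?_⟩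
    rw [← heq₁ hx, Function.comp_apply, Function.comp_apply, ← heq₂ hx]
    rfl

namespace HasAttractingPetals

lemma petal_subset_connectedComponentIn (h : HasAttractingPetals ω q m a R) {v z : ℂ}
    (hv : IsAttractingDir m a v) (hz : z ∈ petal m v R) :
    petal m v R ⊆ connectedComponentIn (basin ω) z :=
  (isPreconnected_petal m v h.nonneg).subset_connectedComponentIn hz (h.petal_subset_basin hv)

lemma exists_inverse_branch (h : HasAttractingPetals ω q m a R) {v ζ : ℂ}
    (hv : IsAttractingDir m a v) (hζ : R < ζ.re)
    (hcrit : ∀ n, -ω / 2 ∉ connectedComponentIn (basin ω) ((Pq ω)^[n] (parBranch m v ζ))) (k : ℕ) :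
    let x₀ := (parConj (Pq ω)^[q] m a v)^[k] ζ
    ∃ H : ℂ → ℂ, DifferentiableOn ℂ H (ball x₀ (x₀.re - R)) ∧ H x₀ = parBranch m v ζ ∧
      MapsTo H (ball x₀ (x₀.re - R)) (basin ω) ∧
      EqOn (((Pq ω)^[q])^[k] ∘ H) (parBranch m v) (ball x₀ (x₀.re - R)) := by
  intro x₀
  have hp := h.isPetal v hv
  have hx₀ : R < x₀.re := hp.isNearTranslation.lt_re_iterate hζ k
  have hd : DifferentiableOn ℂ (parBranch m v) (ball x₀ (x₀.re - R)) := fun x hx =>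
    (differentiableAt_parBranch m v
      (Or.inl (h.nonneg.trans_lt (lt_re_of_mem_ball hx)))).differentiableWithinAt
  have hx₀eq : parBranch m v x₀ = (Pq ω)^[q * k] (parBranch m v ζ) := by
    rw [Function.iterate_mul, ← hp.parBranch_iterate hζ]
  obtain ⟨H, hH, hHx₀, hmaps, heq⟩ := exists_lift_Pq_iterate h.norm_eq_one.le h.isOpen_basin hd
    (mem_ball_self (sub_pos.2 hx₀)) (q * k) (h.petal_subset_basin hv ⟨ζ, hζ, rfl⟩) hx₀eq
    (fun x hx => hx₀eq ▸ h.petal_subset_connectedComponentIn hv ⟨x₀, hx₀, rfl⟩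
      ⟨x, lt_re_of_mem_ball hx, rfl⟩) hcrit
  exact ⟨H, hH, hHx₀, hmaps.mono_right (connectedComponentIn_subset _ _),
    Function.iterate_mul (Pq ω) q k ▸ heq⟩

/-- Otherwise the inverse branches along the orbit would extend to arbitrarily large balls of the
Fatou coordinate while staying bounded, contradicting Cauchy's estimate. -/
lemma exists_critical_mem_connectedComponentIn (h : HasAttractingPetals ω q m a R) {v z : ℂ}
    (hv : IsAttractingDir m a v) (hz : z ∈ petal m v R) :
    ∃ n, -ω / 2 ∈ connectedComponentIn (basin ω) ((Pq ω)^[n] z) := by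
  by_contra! hcrit
  have hp := h.isPetal v hv
  have hF := hp.isNearTranslation
  obtain ⟨Φ, hΦ⟩ := hp.exists_isFatouCoord
  obtain ⟨ζ, hζ : R < ζ.re, rfl⟩ := hz
  have hpos {ζ : ℂ} (hζ : R < ζ.re) : 0 < ζ.re := h.nonneg.trans_lt hζ
  choose H hH hHx₀ hmaps heq using h.exists_inverse_branch hv hζ hcrit
  refine deriv_parBranch_ne_zero hv.m_ne_zero hv.ne_zero (hpos hζ)
    (hΦ.eq_zero_of_deriv_mul_deriv_iterate_eq hF hζ
      (fun k x hx => (hH k).differentiableAt (isOpen_ball.mem_nhds hx))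
      (fun k x hx => norm_le_four_of_mem_basin h.norm_eq_one.le (hmaps k hx)) fun k => ?_)
  have hk := hF.lt_re_iterate hζ k
  have hball := ball_mem_nhds ((parConj (Pq ω)^[q] m a v)^[k] ζ) (sub_pos.2 hk)
  exact deriv_mul_deriv_eq_of_semiconj (Differentiable.iterate (differentiable_Pq_iterate ω q) k)
    ((hH k).differentiableAt hball) (hF.differentiableAt_iterate hζ k)
    (differentiableAt_parBranch m v (Or.inl (hpos hζ))) (hHx₀ k)
    (eventuallyEq_of_mem hball (heq k))
    (eventuallyEq_of_mem ((isOpen_setOf_lt_re R).mem_nhds hζ)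
      fun x hx => (hp.parBranch_iterate hx k).symm)
    (deriv_parBranch_ne_zero hv.m_ne_zero hv.ne_zero (hpos hk))

end HasAttractingPetals

end CriticalPoint

section Ray

open Metric

lemma eq_zpow_mul_add_intCast {u : ℂ → ℝ} {D : ℝ} (hD : D ≠ 0) (hu : ∀ z, u z = D * u (z + 1))
    (n : ℤ) (z : ℂ) : u z = D ^ n * u (z + n) := by
  induction n with
  | zero => simp
  | succ n ih =>
    rw [ih, hu (z + (n : ℤ)), zpow_add_one₀ hD, mul_assoc]
    push_cast
    rw [add_assoc]
  | pred n ih =>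
    have hpred := hu (z + (-n - 1 : ℤ))
    push_cast at hpred ih ⊢
    rw [add_assoc, sub_add_cancel] at hpred
    rw [hpred, zpow_sub_one₀ hD, mul_assoc, inv_mul_cancel_left₀ hD, ← ih]

lemma exists_pos_forall_le_zpow_mul {u : ℂ → ℝ} {D : ℝ} (hD : D ≠ 0)
    (hu : ∀ z, u z = D * u (z + 1)) {K : Set ℂ} (hK : IsCompact K) (hcont : ContinuousOn u K)
    (hpos : ∀ z ∈ K, 0 < u z) : ∃ μ > 0, ∀ z ∈ K, ∀ n : ℤ, μ ≤ D ^ n * u (z + n) := by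
  obtain ⟨μ, hμ, hle⟩ := hK.exists_forall_le' hcont hpos
  exact ⟨μ, hμ, fun z hz n => eq_zpow_mul_add_intCast hD hu n z ▸ hle z hz⟩

lemma isClosed_insert_zero_iUnion {C : ℤ → Set ℂ} (hC : ∀ n, IsClosed (C n))
    (htop : ∀ ε > 0, ∀ᶠ n in atTop, ∀ z ∈ C n, ‖z‖ < ε)
    (hbot : ∀ A : ℝ, ∀ᶠ n in atBot, ∀ z ∈ C n, A < ‖z‖) : IsClosed (insert 0 (⋃ n, C n)) := by
  refine isClosed_of_closure_subset fun y hy => or_iff_not_imp_left.2 fun hy₀ => ?_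
  have hy₀ : 0 < ‖y‖ := norm_pos_iff.2 hy₀
  obtain ⟨n₁, hn₁⟩ := eventually_atTop.1 (htop (‖y‖ / 2) (by positivity))
  obtain ⟨n₂, hn₂⟩ := eventually_atBot.1 (hbot (‖y‖ + 1))
  have hclosed : IsClosed (⋃ n ∈ Finset.Icc n₂ n₁, C n) := isClosed_biUnion_finset fun n _ => hC n
  have hlow : ∀ᶠ z in 𝓝 y, ‖y‖ / 2 < ‖z‖ :=
    (continuous_norm.tendsto y).eventually_const_lt (half_lt_self hy₀)
  have hup : ∀ᶠ z in 𝓝 y, ‖z‖ < ‖y‖ + 1 :=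
    (continuous_norm.tendsto y).eventually_lt_const (lt_add_one _)
  have hmem : y ∈ ⋃ n ∈ Finset.Icc n₂ n₁, C n := by
    rw [← hclosed.closure_eq, mem_closure_iff_frequently]
    refine ((mem_closure_iff_frequently.1 hy).and_eventually (hlow.and hup)).mono ?_
    rintro z ⟨rfl | hz, hzlow, hzup⟩
    · rw [norm_zero] at hzlow
      linarith
    · obtain ⟨n, hn⟩ := mem_iUnion.1 hz
      refine mem_biUnion (Finset.mem_Icc.2 ⟨?_, ?_⟩) hn
      · by_contra! hlt
        linarith [hn₂ n hlt.le z hn]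
      · by_contra! hlt
        linarith [hn₁ n hlt.le z hn]
  exact iUnion₂_subset_iUnion _ _ hmem

/-- A closed connected set joining `0` to infinity. Off such a set there are branches of the
logarithm. -/
structure JoinsZeroToInfinity (X : Set ℂ) : Prop where
  isClosed : IsClosed X
  isPreconnected : IsPreconnected X
  zero_mem : 0 ∈ X
  exists_lt_norm : ∀ A : ℝ, ∃ z ∈ X, A < ‖z‖

/-- A closed connected subset of `{z | 0 < G z} ∪ {0}` joining `0` to infinity. For `G` the Green's
function it plays the part of a dynamic ray landing at `0`. -/
structure IsRayToZero (G : ℂ → ℝ) (X : Set ℂ) : Prop extends JoinsZeroToInfinity X where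
  pos : ∀ z ∈ X, z ≠ 0 → 0 < G z

lemma isRayToZero_insert_zero_iUnion {G : ℂ → ℝ} {C : ℤ → Set ℂ} (hcpt : ∀ n, IsCompact (C n))
    (hconn : ∀ n, IsPreconnected (C n)) (hchain : ∀ n, (C n ∩ C (n + 1)).Nonempty)
    (htop : ∀ ε > 0, ∀ᶠ n in atTop, ∀ z ∈ C n, ‖z‖ < ε)
    (hbot : ∀ A : ℝ, ∀ᶠ n in atBot, ∀ z ∈ C n, A < ‖z‖) (hpos : ∀ n, ∀ z ∈ C n, 0 < G z) :
    IsRayToZero G (insert 0 (⋃ n, C n)) where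
  isClosed := isClosed_insert_zero_iUnion (fun n => (hcpt n).isClosed) htop hbot
  isPreconnected := by
    refine (IsPreconnected.iUnion_of_chain hconn hchain).subset_closure (subset_insert _ _)
      (insert_subset (Metric.mem_closure_iff.2 fun ε hε => ?_) subset_closure)
    obtain ⟨n, hn⟩ := (htop ε hε).exists
    obtain ⟨z, hz, -⟩ := hchain n
    exact ⟨z, mem_iUnion.2 ⟨n, hz⟩, by simpa only [dist_zero_left] using hn z hz⟩
  zero_mem := mem_insert _ _
  exists_lt_norm A := by
    obtain ⟨n, hn⟩ := (hbot A).exists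
    obtain ⟨z, hz, -⟩ := hchain n
    exact ⟨z, Or.inr (mem_iUnion.2 ⟨n, hz⟩), hn z hz⟩
  pos z hz hz₀ := by
    obtain ⟨n, hn⟩ := mem_iUnion.1 (hz.resolve_left hz₀)
    exact hpos n z hn

variable {Ψ : ℂ → ℂ} {G : ℂ → ℝ} {D μ : ℝ} {K : Set ℂ}

lemma eventually_atBot_forall_lt_norm (hG : Continuous G) (hD : 1 < D) (hμ : 0 < μ)
    (hle : ∀ Z ∈ K, ∀ n : ℤ, μ ≤ D ^ n * G (Ψ (Z + n))) (A : ℝ) :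
    ∀ᶠ n : ℤ in atBot, ∀ Z ∈ K, A < ‖Ψ (Z + n)‖ := by
  obtain ⟨g, hg⟩ := ((isCompact_closedBall (0 : ℂ) A).image hG).bddAbove
  have hlim : Tendsto (fun n : ℤ => D ^ n * g) atBot (𝓝 0) := by
    simpa only [Function.comp_def, Real.rpow_intCast, zero_mul, id] using
      ((tendsto_rpow_atBot_of_base_gt_one D hD).comp
        (tendsto_intCast_atBot_iff.2 tendsto_id)).mul_const g
  filter_upwards [hlim.eventually_lt_const hμ] with n hn Z hZ
  by_contra! hA
  have hGg : G (Ψ (Z + n)) ≤ g := hg ⟨_, mem_closedBall_zero_iff.2 hA, rfl⟩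
  exact hn.not_ge ((hle Z hZ n).trans (by gcongr))

lemma eventually_nhds_zero_forall_lt (hG : Continuous G) (hG₀ : G 0 = 0) (hD : 1 < D) (hμ : 0 < μ)
    (hle : ∀ Z ∈ K, ∀ n : ℤ, μ ≤ D ^ n * G (Ψ (Z + n))) (N : ℤ) :
    ∀ᶠ w in 𝓝 0, ∀ Z ∈ K, ∀ n : ℤ, Ψ (Z + n) = w → N < n := by
  have : 0 < D := one_pos.trans hD
  have hlim : Tendsto (fun w => D ^ N * G w) (𝓝 0) (𝓝 0) :=
    (hG.const_mul _).tendsto' _ _ (by rw [hG₀, mul_zero])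
  filter_upwards [hlim.eventually_lt_const hμ] with w hw Z hZ n hn
  have hn' := hn ▸ hle Z hZ n
  have hw₀ : 0 < G w := pos_of_mul_pos_right (hμ.trans_le hn') (by positivity)
  exact (zpow_lt_zpow_iff_right₀ hD).1 (lt_of_mul_lt_mul_right (hw.trans_le hn') hw₀.le)

lemma eventually_atTop_forall_lt_re (hK : IsCompact K) (T : ℝ) :
    ∀ᶠ n : ℤ in atTop, ∀ Z ∈ K, T < (Z + n).re := by
  obtain ⟨b, hb⟩ := (hK.image continuous_re).bddBelow
  filter_upwards [tendsto_intCast_atTop_atTop.eventually_gt_atTop (T - b)] with n hn Z hZ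
  have hbZ : b ≤ Z.re := hb ⟨Z, hZ, rfl⟩
  rw [add_re, intCast_re]
  linarith

/-- The images of all integer translates of `K` form the ray; along them `G` grows by the factor `D`
towards infinity. -/
lemma exists_isRayToZero {Z₀ : ℂ} (hG : Continuous G) (hG₀ : G 0 = 0) (hD : 1 < D)
    (hu : ∀ Z, G (Ψ Z) = D * G (Ψ (Z + 1))) (hK : IsCompact K) (hKc : IsPreconnected K)
    (hZ₀ : Z₀ ∈ K) (hZ₁ : Z₀ + 1 ∈ K) (hpos : ∀ Z ∈ K, 0 < G (Ψ Z))
    (hΨ : ∀ Z, 0 < G (Ψ Z) → ContinuousAt Ψ Z)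
    (hsmall : ∀ ε > 0, ∃ T : ℝ, ∀ Z, 0 < G (Ψ Z) → T < Z.re → ‖Ψ Z‖ < ε) :
    ∃ X, IsRayToZero G X ∧
      ∀ T : ℝ, ∀ᶠ z in 𝓝[≠] 0, z ∈ X → z ∈ Ψ '' {Z | 0 < G (Ψ Z) ∧ T < Z.re} := by
  have hD₀ : 0 < D := one_pos.trans hD
  have hcontΨ : ContinuousOn (G ∘ Ψ) K := fun Z hZ =>
    (hG.continuousAt.comp (hΨ Z (hpos Z hZ))).continuousWithinAt
  obtain ⟨μ, hμ, hle⟩ := exists_pos_forall_le_zpow_mul hD₀.ne' hu hK hcontΨ hpos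
  have hpos' (Z) (hZ : Z ∈ K) (n : ℤ) : 0 < G (Ψ (Z + n)) :=
    pos_of_mul_pos_right (hμ.trans_le (hle Z hZ n)) (by positivity)
  have hcont (n : ℤ) : ContinuousOn (fun Z => Ψ (Z + n)) K := fun Z hZ =>
    ((hΨ (Z + n) (hpos' Z hZ n)).comp (f := fun Z => Z + (n : ℂ)) (by fun_prop)).continuousWithinAt
  refine ⟨insert 0 (⋃ n : ℤ, (fun Z => Ψ (Z + n)) '' K), isRayToZero_insert_zero_iUnion
    (fun n => hK.image_of_continuousOn (hcont n)) (fun n => hKc.image _ (hcont n))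
    (fun n => ⟨Ψ (Z₀ + 1 + n), ⟨_, hZ₁, rfl⟩, Z₀, hZ₀, ?_⟩) (fun ε hε => ?_) (fun A => ?_)
    (fun n => forall_mem_image.2 fun Z hZ => hpos' Z hZ n), fun T => ?_⟩
  · push_cast
    ring_nf
  · obtain ⟨T, hT⟩ := hsmall ε hε
    filter_upwards [eventually_atTop_forall_lt_re hK T] with n hn
    exact forall_mem_image.2 fun Z hZ => hT _ (hpos' Z hZ n) (hn Z hZ)
  · exact (eventually_atBot_forall_lt_norm hG hD hμ hle A).mono fun n hn => forall_mem_image.2 hn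
  · obtain ⟨N, hN⟩ := eventually_atTop.1 (eventually_atTop_forall_lt_re hK T)
    filter_upwards [self_mem_nhdsWithin, nhdsWithin_le_nhds
      (eventually_nhds_zero_forall_lt hG hG₀ hD hμ hle N)] with z hz₀ hzN hz
    obtain ⟨n, Z, hZ, rfl⟩ := mem_iUnion.1 (hz.resolve_left hz₀)
    exact ⟨Z + n, ⟨hpos' Z hZ n, hN n (hzN Z hZ n rfl).le Z hZ⟩, rfl⟩

end Ray

section ParabolicOrbit

variable {f : ℂ → ℂ} {m : ℕ} {a : ℂ}

lemma exists_forall_norm_lt_of_le_norm_parCoord (hm : m ≠ 0) (ha : a ≠ 0) {r : ℝ} (hr : 0 < r) :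
    ∃ A : ℝ, ∀ z, A ≤ ‖parCoord m a z‖ → ‖z‖ < r := by
  refine ⟨1 / (m * ‖a‖ * r ^ m) + 1, fun z hz => ?_⟩
  by_contra! hrz
  have hnorm : ‖parCoord m a z‖ = 1 / (m * ‖a‖ * ‖z‖ ^ m) := by simp [parCoord]
  have := norm_pos_iff.2 ha
  have hle : 1 / (m * ‖a‖ * ‖z‖ ^ m) ≤ 1 / (m * ‖a‖ * r ^ m) := by gcongr
  linarith

namespace IsParabolicGerm

lemma tendsto_nhdsNE_zero (hf : IsParabolicGerm f m a) : Tendsto f (𝓝[≠] 0) (𝓝[≠] 0) := by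
  refine tendsto_nhdsWithin_iff.2 ⟨?_, hf.eventually_ne_zero⟩
  have hlim := hf.analyticAt.continuousAt.tendsto
  rw [hf.map_zero] at hlim
  exact hlim.mono_left nhdsWithin_le_nhds

lemma eventually_norm_parCoord_iterate_sub_le (hf : IsParabolicGerm f m a) {ε : ℝ} (hε : 0 < ε)
    (N : ℕ) :
    ∀ᶠ z in 𝓝[≠] 0, ‖parCoord m a (f^[N] z) - parCoord m a z - N‖ ≤ N * ε := by
  induction N with
  | zero => simp
  | succ N ih =>
    filter_upwards [ih, (hf.tendsto_nhdsNE_zero.iterate N).eventually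
      (hf.eventually_norm_parCoord_sub_le hε)] with z hz hstep
    rw [← Function.iterate_succ_apply' f] at hstep
    calc ‖parCoord m a (f^[N + 1] z) - parCoord m a z - (N + 1 : ℕ)‖
        = ‖(parCoord m a (f^[N] z) - parCoord m a z - N) +
            (parCoord m a (f^[N + 1] z) - parCoord m a (f^[N] z) - 1)‖ := by
          push_cast
          ring_nf
      _ ≤ N * ε + ε := (norm_add_le _ _).trans (add_le_add hz hstep)
      _ = (N + 1 : ℕ) * ε := by
          push_cast
          ring

end IsParabolicGerm

end ParabolicOrbit

section RepellingPetal

open Metric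

/-- A repelling petal of `f` in the direction `w`: an attracting petal of a local right inverse `g`
of `f`. Here `a` is the coefficient of `g`, the opposite of that of `f`. -/
structure IsRepellingPetal (f g : ℂ → ℂ) (m : ℕ) (a w : ℂ) (R r : ℝ) : Prop where
  isPetal : IsPetal g m a w R r
  rightInverse : ∀ z, ‖z‖ < r → f (g z) = z

variable {f g : ℂ → ℂ} {ω : ℂ} {q m : ℕ} {a w ζ : ℂ} {R R' r : ℝ}

lemma IsParabolicGerm.exists_isRepellingPetal (hf : IsParabolicGerm f m a)
    (hw : IsAttractingDir m (-a) w) : ∃ g R r, IsRepellingPetal f g m (-a) w R r := by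
  obtain ⟨g, hg, hinv⟩ := hf.exists_rightInverse
  obtain ⟨r, hr, hball⟩ := Metric.eventually_nhds_iff_ball.1 hinv
  obtain ⟨R, hR⟩ := hg.exists_forall_isPetal hr
  exact ⟨g, R, r, hR w hw, fun z hz => hball z (mem_ball_zero_iff.2 hz)⟩

namespace IsRepellingPetal

lemma map_parBranch_parConj (hp : IsRepellingPetal f g m a w R r) (hζ : R < ζ.re) :
    f (parBranch m w (parConj g m a w ζ)) = parBranch m w ζ := by
  rw [hp.isPetal.parBranch_parConj ζ hζ, hp.rightInverse _ (hp.isPetal.norm_lt ζ hζ)]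

lemma iterate_parBranch_iterate (hp : IsRepellingPetal f g m a w R r) (hζ : R < ζ.re) (k : ℕ) :
    f^[k] (parBranch m w ((parConj g m a w)^[k] ζ)) = parBranch m w ζ := by
  induction k with
  | zero => rfl
  | succ k ih =>
    rw [Function.iterate_succ_apply, Function.iterate_succ_apply',
      hp.map_parBranch_parConj (hp.isPetal.isNearTranslation.lt_re_iterate hζ k), ih]

/-- Otherwise the iterates `f^[k] ∘ parBranch m w` would be bounded on arbitrarily large balls. -/
lemma exists_green_pos (hp : IsRepellingPetal (Pq ω)^[q] g m a w R r) (hω : ‖ω‖ ≤ 1) :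
    ∃ ζ : ℂ, R < ζ.re ∧ 0 < green ω (parBranch m w ζ) := by
  by_contra! hle
  have hzero (ζ : ℂ) (hζ : R < ζ.re) : green ω (parBranch m w ζ) = 0 :=
    (hle ζ hζ).antisymm (green_nonneg hω _)
  obtain ⟨Φ, hΦ⟩ := hp.isPetal.exists_isFatouCoord
  have hF := hp.isPetal.isNearTranslation
  have hv := hp.isPetal.isAttractingDir
  have hpos {ζ : ℂ} (hζ : R < ζ.re) : 0 < ζ.re := hp.isPetal.nonneg.trans_lt hζ
  obtain ⟨ζ, hζ⟩ : ∃ ζ : ℂ, R < ζ.re := ⟨(R + 1 : ℝ), by rw [ofReal_re]; linarith⟩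
  have hd (k : ℕ) (x : ℂ) (hx : R < x.re) :
      DifferentiableAt ℂ (((Pq ω)^[q])^[k] ∘ parBranch m w) x :=
    ((differentiable_Pq_iterate ω q).iterate k).differentiableAt.comp x
      (differentiableAt_parBranch m w (Or.inl (hpos hx)))
  refine deriv_parBranch_ne_zero hv.m_ne_zero hv.ne_zero (hpos hζ)
    (hΦ.eq_zero_of_deriv_mul_deriv_iterate_eq hF hζ (K := 4)
      (H := fun k => ((Pq ω)^[q])^[k] ∘ parBranch m w)
      (fun k x hx => hd k x (lt_re_of_mem_ball hx)) (fun k x hx => ?_) fun k => ?_)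
  · rw [Function.comp_apply, ← Function.iterate_mul]
    exact norm_iterate_le_four_of_green_eq_zero hω (hzero x (lt_re_of_mem_ball hx)) _
  · have heq : (((Pq ω)^[q])^[k] ∘ parBranch m w) ∘ (parConj g m a w)^[k] =ᶠ[𝓝 ζ] parBranch m w :=
      eventuallyEq_of_mem ((isOpen_setOf_lt_re R).mem_nhds hζ)
        fun x hx => hp.iterate_parBranch_iterate hx k
    rw [← heq.deriv_eq]
    exact (deriv_comp ζ (hd k _ (hF.lt_re_iterate hζ k)) (hF.differentiableAt_iterate hζ k)).symm

/-- Orbits entering far above or below the real axis of the Fatou coordinate turn around `0` into an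
attracting petal. -/
lemma exists_forall_green_eq_zero (h : HasAttractingPetals ω q m a R)
    (hp : IsRepellingPetal (Pq ω)^[q] g m (-a) w R' r) {Φ : ℂ → ℂ}
    (hΦ : IsFatouCoord (parConj g m (-a) w) R' Φ) :
    ∃ M : ℝ, ∀ ζ : ℂ, R' < ζ.re → M ≤ |(Φ ζ).im| → green ω (parBranch m w ζ) = 0 := by
  obtain ⟨N, hN⟩ := exists_nat_gt (2 * (R + R' + 2))
  have hf := h.isParabolicGerm
  obtain ⟨r₁, hr₁, hball⟩ := Metric.eventually_nhds_iff_ball.1 (eventually_nhdsWithin_iff.1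
    ((hf.eventually_norm_parCoord_iterate_sub_le (by norm_num : (0 : ℝ) < 1 / 4) N).and
      ((hf.tendsto_nhdsNE_zero.iterate N).eventually self_mem_nhdsWithin)))
  obtain ⟨A, hA⟩ := exists_forall_norm_lt_of_le_norm_parCoord hf.m_ne_zero hf.a_ne_zero hr₁
  obtain ⟨M, hM⟩ := hΦ.exists_le_abs_im_of_le_abs_im hp.isPetal.isNearTranslation A
  refine ⟨M, fun ζ hζ hζM => green_eq_zero_of_mem_basinAug h.norm_eq_one.le ?_⟩
  obtain ⟨n, x, hx, hxR', hxζ, hxA⟩ := hM ζ hζ hζM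
  have hw := hp.isPetal.isAttractingDir
  have hcoord : parCoord m a (parBranch m w x) = -x := by
    have hneg := parCoord_parBranch hw (ne_zero_of_lt_re hp.isPetal.nonneg hx)
    rw [parCoord, mul_neg, neg_mul, div_neg] at hneg
    exact neg_eq_iff_eq_neg.1 hneg
  have hsmall : ‖parBranch m w x‖ < r₁ :=
    hA _ (by rw [hcoord, norm_neg]; exact hxA.trans (abs_im_le_norm x))
  obtain ⟨hnear, hne⟩ := hball _ (mem_ball_zero_iff.2 hsmall) (parBranch_ne_zero hw.ne_zero m x)
  have hre : R < (parCoord m a (((Pq ω)^[q])^[N] (parBranch m w x))).re := by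
    have habs := (abs_re_le_norm _).trans hnear
    rw [hcoord, sub_neg_eq_add, sub_re, add_re, natCast_re] at habs
    linarith [(abs_le.1 habs).1]
  obtain ⟨v, hv, hmem⟩ :=
    exists_mem_petal_of_lt_re_parCoord hf.m_ne_zero hf.a_ne_zero hne h.nonneg hre
  have hbasin := h.petal_subset_basin hv hmem
  have hζx : ((Pq ω)^[q])^[n] (parBranch m w ζ) = parBranch m w x :=
    hxζ ▸ hp.iterate_parBranch_iterate hx n
  rw [← hζx, ← Function.iterate_mul, ← Function.iterate_mul, Pq_iterate_mem_basin,
    Pq_iterate_mem_basin] at hbasin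
  exact hbasin.1

end IsRepellingPetal

end RepellingPetal

section RepellingParam

variable {ω : ℂ} {q m : ℕ} {a w : ℂ} {f g Φ χ Ψ : ℂ → ℂ} {B M N₀ R R' r : ℝ}

lemma iterate_add_natCast_of_map_eq (hΨ : ∀ Z, Ψ Z = f (Ψ (Z + 1))) (Z : ℂ) (n : ℕ) :
    f^[n] (Ψ (Z + n)) = Ψ Z := by
  induction n generalizing Z with
  | zero => simp
  | succ n ih =>
    rw [Nat.cast_succ, add_comm (n : ℂ), ← add_assoc, Function.iterate_succ_apply', ih, ← hΨ]

lemma iterate_add_natCast_of_map_eq_of_halfStrip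
    (hχ : ∀ Z : ℂ, N₀ < Z.re → |Z.im| < B → f (χ (Z + 1)) = χ Z) {Z : ℂ} (hre : N₀ < Z.re)
    (him : |Z.im| < B) (n : ℕ) : f^[n] (χ (Z + n)) = χ Z := by
  induction n generalizing Z with
  | zero => simp
  | succ n ih =>
    rw [Nat.cast_succ, add_comm (n : ℂ), ← add_assoc, Function.iterate_succ_apply',
      ih (by simpa using hre.trans (lt_add_one _)) (by simpa using him), hχ Z hre him]

/-- The functional equation extends `χ` to the whole strip by `Ψ Z = f^[n] (χ (Z + n))`. -/
lemma exists_extension_of_halfStrip (hf : Differentiable ℂ f) (hf₀ : f 0 = 0)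
    (hχ : ∀ Z : ℂ, N₀ < Z.re → |Z.im| < B → f (χ (Z + 1)) = χ Z)
    (hχd : ∀ Z : ℂ, N₀ < Z.re → |Z.im| < B → DifferentiableAt ℂ χ Z) :
    ∃ Ψ : ℂ → ℂ, (∀ Z : ℂ, N₀ < Z.re → |Z.im| < B → Ψ Z = χ Z) ∧
      (∀ Z : ℂ, |Z.im| < B → DifferentiableAt ℂ Ψ Z) ∧ (∀ Z, Ψ Z = f (Ψ (Z + 1))) ∧
      ∀ Z : ℂ, B ≤ |Z.im| → Ψ Z = 0 := by
  have him (Z : ℂ) (n : ℕ) : (Z + n).im = Z.im := by simp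
  have hre (Z : ℂ) (n : ℕ) : (Z + n).re = Z.re + n := by simp
  have heq {Z : ℂ} (hZ : |Z.im| < B) {n k : ℕ} (hnk : n ≤ k) (hn : N₀ < Z.re + n) :
      f^[k] (χ (Z + k)) = f^[n] (χ (Z + n)) := by
    obtain ⟨d, rfl⟩ := Nat.exists_eq_add_of_le hnk
    rw [Nat.cast_add, ← add_assoc, Function.iterate_add_apply,
      iterate_add_natCast_of_map_eq_of_halfStrip hχ ((hre Z n).symm ▸ hn) ((him Z n).symm ▸ hZ)]
  choose N hN using fun Z : ℂ => exists_nat_gt (N₀ - Z.re)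
  replace hN (Z : ℂ) : N₀ < Z.re + N Z := sub_lt_iff_lt_add'.1 (hN Z)
  set Ψ : ℂ → ℂ := fun Z => if |Z.im| < B then f^[N Z] (χ (Z + N Z)) else 0
  have hΨ {Z : ℂ} (hZ : |Z.im| < B) {n : ℕ} (hn : N₀ < Z.re + n) :
      Ψ Z = f^[n] (χ (Z + n)) := by
    refine (if_pos hZ).trans ?_
    rcases le_total n (N Z) with hle | hle
    · exact heq hZ hle hn
    · exact (heq hZ hle (hN Z)).symm
  refine ⟨Ψ, fun Z hZre hZ => ?_, fun Z hZ => ?_, fun Z => ?_, fun Z hZ => if_neg hZ.not_gt⟩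
  · simpa using hΨ hZ (n := 0) (by simpa using hZre)
  · have hopen : IsOpen {Y : ℂ | |Y.im| < B ∧ N₀ < Y.re + N Z} :=
      (isOpen_lt continuous_im.abs continuous_const).inter
        (isOpen_lt continuous_const (continuous_re.add_const _))
    have hnear : Ψ =ᶠ[𝓝 Z] fun Y => f^[N Z] (χ (Y + N Z)) :=
      eventuallyEq_of_mem (hopen.mem_nhds ⟨hZ, hN Z⟩) fun Y hY => hΨ hY.1 hY.2
    have hχZ := hχd (Z + N Z) ((hre Z _).symm ▸ hN Z) ((him Z _).symm ▸ hZ)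
    exact ((hf.iterate (N Z)).differentiableAt.comp Z
      (hχZ.comp Z (differentiableAt_id.add_const _))).congr_of_eventuallyEq hnear
  · by_cases hZ : |Z.im| < B
    · have hZ' : |(Z + 1).im| < B := by simpa using hZ
      have hlt := hN Z
      rw [hΨ hZ' (n := N Z) (by simpa using hlt.trans (by simp)),
        hΨ hZ (n := N Z + 1) (by push_cast; linarith), Nat.cast_succ, add_comm (N Z : ℂ),
        ← add_assoc, Function.iterate_succ_apply']
    · have hZ' : ¬ |(Z + 1).im| < B := by simpa using hZ
      rw [show Ψ Z = 0 from if_neg hZ, show Ψ (Z + 1) = 0 from if_neg hZ', hf₀]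

lemma IsFatouCoord.exists_forall_le_norm {F : ℂ → ℂ} (hΦ : IsFatouCoord F R Φ) (A : ℝ) :
    ∃ T : ℝ, ∀ ζ : ℂ, R < ζ.re → T < (Φ ζ).re → A ≤ ‖ζ‖ := by
  obtain ⟨x, hx⟩ : ∃ x : ℂ, R < x.re := ⟨(R + 1 : ℝ), by rw [ofReal_re]; linarith⟩
  refine ⟨(Φ x).re + 3 / 2 * (A + ‖x‖), fun ζ hζ hT => ?_⟩
  have hle := (re_le_norm _).trans (hΦ.isNearId.norm_map_sub_le hζ hx)
  rw [sub_re] at hle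
  linarith [norm_sub_le ζ x]

/-- The inverse `Ψ` of a repelling Fatou coordinate in the direction `w`, extended to the strip
`|im Z| < M + 1` by the functional equation and by `0` outside of it. -/
structure IsRepellingParam (ω : ℂ) (q m : ℕ) (w : ℂ) (M : ℝ) (Ψ : ℂ → ℂ) : Prop where
  map_eq : ∀ Z, Ψ Z = (Pq ω)^[q] (Ψ (Z + 1))
  differentiableAt : ∀ Z : ℂ, |Z.im| < M + 1 → DifferentiableAt ℂ Ψ Z
  green_eq_zero : ∀ Z : ℂ, M ≤ |Z.im| → green ω (Ψ Z) = 0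
  exists_green_pos : ∃ Z, 0 < green ω (Ψ Z)
  exists_norm_lt : ∀ ε > 0, ∃ T : ℝ, ∀ Z : ℂ, |Z.im| < M → T < Z.re → ‖Ψ Z‖ < ε
  exists_mem_petal : ∃ T : ℝ, ∀ Z : ℂ, |Z.im| < M → T < Z.re → Ψ Z ∈ petal m w 0

namespace IsRepellingPetal

lemma exists_strip_extension (hp : IsRepellingPetal (Pq ω)^[q] g m a w R r)
    (hΦ : IsFatouCoord (parConj g m a w) R Φ) (B : ℝ) :
    ∃ (N₀ : ℝ) (Ψ : ℂ → ℂ), (∀ Z, Ψ Z = (Pq ω)^[q] (Ψ (Z + 1))) ∧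
      (∀ Z : ℂ, |Z.im| < B → DifferentiableAt ℂ Ψ Z) ∧ (∀ Z : ℂ, B ≤ |Z.im| → Ψ Z = 0) ∧
      ∀ Z : ℂ, N₀ < Z.re → |Z.im| < B →
        ∃ ζ : ℂ, R < ζ.re ∧ Φ ζ = Z ∧ Ψ Z = parBranch m w ζ := by
  obtain ⟨N₀, ψ, hψ⟩ := hΦ.exists_rightInverse hp.isPetal.isNearTranslation B
  obtain ⟨Ψ, hΨ, hΨd, hmap, hΨ₀⟩ := exists_extension_of_halfStrip (χ := parBranch m w ∘ ψ)
    (differentiable_Pq_iterate ω q) (Pq_iterate_zero ω q)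
    (fun Z hZ hB => by
      obtain ⟨hre, -, -, hstep⟩ := hψ Z hZ hB
      rw [Function.comp_apply, ← hstep, hp.map_parBranch_parConj hre, Function.comp_apply])
    (fun Z hZ hB => (differentiableAt_parBranch m w (Or.inl (hp.isPetal.nonneg.trans_lt
      (hψ Z hZ hB).1))).comp Z (hψ Z hZ hB).2.2.1)
  exact ⟨N₀, Ψ, hmap, hΨd, hΨ₀, fun Z hZ hB =>
    ⟨ψ Z, (hψ Z hZ hB).1, (hψ Z hZ hB).2.1, hΨ Z hZ hB⟩⟩

lemma exists_forall_norm_parBranch_lt (hp : IsRepellingPetal f g m a w R r)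
    (hΦ : IsFatouCoord (parConj g m a w) R Φ) {ε : ℝ} (hε : 0 < ε) :
    ∃ T : ℝ, ∀ ζ : ℂ, R < ζ.re → T < (Φ ζ).re → ‖parBranch m w ζ‖ < ε := by
  have hw := hp.isPetal.isAttractingDir
  obtain ⟨A, hA⟩ := exists_forall_norm_lt_of_le_norm_parCoord hw.m_ne_zero hw.a_ne_zero hε
  obtain ⟨T, hT⟩ := hΦ.exists_forall_le_norm A
  refine ⟨T, fun ζ hζ hre => hA _ ?_⟩
  rw [parCoord_parBranch hw (ne_zero_of_lt_re hp.isPetal.nonneg hζ)]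
  exact hT ζ hζ hre

lemma exists_isRepellingParam (h : HasAttractingPetals ω q m a R)
    (hp : IsRepellingPetal (Pq ω)^[q] g m (-a) w R' r) : ∃ M Ψ, IsRepellingParam ω q m w M Ψ := by
  have hω := h.norm_eq_one.le
  have hF := hp.isPetal.isNearTranslation
  obtain ⟨Φ, hΦ⟩ := hp.isPetal.exists_isFatouCoord
  obtain ⟨M, hM⟩ := hp.exists_forall_green_eq_zero h hΦ
  obtain ⟨N₀, Ψ, hmap, hΨd, hΨ₀, hΨ⟩ := hp.exists_strip_extension hΦ (M + 1)
  have hshift (Z : ℂ) (hZ : |Z.im| < M + 1) : ∃ (n : ℕ) (ζ : ℂ), R' < ζ.re ∧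
      Φ ζ = Z + n ∧ Ψ Z = ((Pq ω)^[q])^[n] (parBranch m w ζ) := by
    obtain ⟨n, hn⟩ := exists_nat_gt (N₀ - Z.re)
    obtain ⟨ζ, hζ, hΦζ, hΨζ⟩ := hΨ (Z + n) (by rw [add_re, natCast_re]; linarith)
      (by simpa using hZ)
    exact ⟨n, ζ, hζ, hΦζ, hΨζ ▸ (iterate_add_natCast_of_map_eq hmap Z n).symm⟩
  refine ⟨M, Ψ, hmap, hΨd, fun Z hZ => ?_, ?_, fun ε hε => ?_, N₀, fun Z hZ hre => ?_⟩
  · rcases lt_or_ge |Z.im| (M + 1) with hB | hB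
    · obtain ⟨n, ζ, hζ, hΦζ, hΨζ⟩ := hshift Z hB
      rw [hΨζ, ← Function.iterate_mul, green_iterate hω,
        hM _ hζ (by rw [hΦζ]; simpa using hZ), mul_zero]
    · rw [hΨ₀ Z hB]
      exact green_eq_zero_of_norm_iterate_le hω (K := 0) fun n => by simp
  · obtain ⟨x, hx, hpos⟩ := hp.exists_green_pos hω
    have him : |(Φ x).im| < M := by
      by_contra! hle
      exact hpos.ne' (hM x hx hle)
    obtain ⟨n, ζ, hζ, hΦζ, hΨζ⟩ := hshift (Φ x) (him.trans (lt_add_one M))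
    have hζx : ζ = (parConj g m (-a) w)^[n] x :=
      hΦ.isNearId.injOn hζ (hF.lt_re_iterate hx n) (hΦζ.trans (hΦ.map_iterate hF hx n).symm)
    exact ⟨Φ x, by rwa [hΨζ, hζx, hp.iterate_parBranch_iterate hx]⟩
  · obtain ⟨T, hT⟩ := hp.exists_forall_norm_parBranch_lt hΦ hε
    refine ⟨max N₀ T, fun Z hZ hre => ?_⟩
    obtain ⟨ζ, hζ, rfl, hΨζ⟩ := hΨ Z (max_lt_iff.1 hre).1 (hZ.trans (lt_add_one M))
    exact hΨζ ▸ hT ζ hζ (max_lt_iff.1 hre).2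
  · obtain ⟨ζ, hζ, -, hΨζ⟩ := hΨ Z hre (hZ.trans (lt_add_one M))
    exact ⟨ζ, hp.isPetal.nonneg.trans_lt hζ, hΨζ.symm⟩

end IsRepellingPetal

namespace IsRepellingParam

lemma abs_im_lt (hΨ : IsRepellingParam ω q m w M Ψ) {Z : ℂ} (hZ : 0 < green ω (Ψ Z)) :
    |Z.im| < M := by
  by_contra! hle
  exact hZ.ne' (hΨ.green_eq_zero Z hle)

lemma green_eq (hΨ : IsRepellingParam ω q m w M Ψ) (hω : ‖ω‖ ≤ 1) (Z : ℂ) :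
    green ω (Ψ Z) = 2 ^ q * green ω (Ψ (Z + 1)) := by
  rw [hΨ.map_eq Z, green_iterate hω]

lemma nonnegSubharmonic (hΨ : IsRepellingParam ω q m w M Ψ) (hω : ‖ω‖ ≤ 1) :
    NonnegSubharmonic (green ω ∘ Ψ) where
  continuous := by
    refine continuous_iff_continuousAt.2 fun Z => ?_
    rcases lt_or_ge |Z.im| (M + 1) with hB | hB
    · exact (continuous_green hω).continuousAt.comp (hΨ.differentiableAt Z hB).continuousAt
    · have hopen : IsOpen {Y : ℂ | M < |Y.im|} := isOpen_lt continuous_const continuous_im.abs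
      exact continuousAt_const.congr (eventuallyEq_of_mem
        (hopen.mem_nhds ((lt_add_one M).trans_le hB))
        fun Y (hY : M < |Y.im|) => (hΨ.green_eq_zero Y hY.le).symm)
  nonneg Z := green_nonneg hω _
  le_circleAverage_of_pos Z hZ := by
    have hopen : IsOpen {Y : ℂ | |Y.im| < M + 1} := isOpen_lt continuous_im.abs continuous_const
    exact green_comp_le_circleAverage hω (eventually_of_mem
      (hopen.mem_nhds ((hΨ.abs_im_lt hZ).trans (lt_add_one M))) hΨ.differentiableAt) hZ

lemma exists_isCompact_isPreconnected (hΨ : IsRepellingParam ω q m w M Ψ) (hω : ‖ω‖ ≤ 1)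
    (hq : q ≠ 0) : ∃ (k : ℕ) (K : Set ℂ) (Z₀ : ℂ), k ≠ 0 ∧ IsCompact K ∧ IsPreconnected K ∧
      Z₀ ∈ K ∧ Z₀ + k ∈ K ∧ ∀ Z ∈ K, 0 < green ω (Ψ Z) := by
  obtain ⟨Z₀, hZ₀⟩ := hΨ.exists_green_pos
  have hsub := hΨ.nonnegSubharmonic hω
  obtain ⟨k, hk, hmem⟩ := exists_add_natCast_mem_connectedComponentIn hsub
    (one_lt_pow₀ one_lt_two hq) (hΨ.green_eq hω) hΨ.green_eq_zero hZ₀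
  have hopen : IsOpen {Z | 0 < (green ω ∘ Ψ) Z} := isOpen_lt continuous_const hsub.continuous
  have hpath : IsPathConnected (connectedComponentIn {Z | 0 < (green ω ∘ Ψ) Z} Z₀) :=
    hopen.connectedComponentIn.isConnected_iff_isPathConnected.1
      (isConnected_connectedComponentIn_iff.2 hZ₀)
  obtain ⟨γ, hγ⟩ := hpath.joinedIn Z₀ (mem_connectedComponentIn hZ₀) _ hmem
  refine ⟨k, range γ, Z₀, Nat.one_le_iff_ne_zero.1 hk, isCompact_range γ.continuous,
    isPreconnected_range γ.continuous, ⟨0, γ.source⟩, ⟨1, γ.target⟩, ?_⟩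
  rintro _ ⟨t, rfl⟩
  exact connectedComponentIn_subset {Z | 0 < (green ω ∘ Ψ) Z} Z₀ (hγ t)

lemma exists_isRayToZero (hΨ : IsRepellingParam ω q m w M Ψ) (hω : ‖ω‖ ≤ 1) (hq : q ≠ 0) :
    ∃ X, IsRayToZero (green ω) X ∧ ∀ᶠ z in 𝓝[≠] 0, z ∈ X → z ∈ petal m w 0 := by
  obtain ⟨k, K, Z₀, hk, hK, hKc, hZ₀, hZ₁, hpos⟩ := hΨ.exists_isCompact_isPreconnected hω hq
  have hk₀ : (k : ℂ) ≠ 0 := Nat.cast_ne_zero.2 hk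
  have hk₁ : (0 : ℝ) < k := Nat.cast_pos.2 hk.bot_lt
  have hcancel (Z : ℂ) : k * (Z / k) = Z := mul_div_cancel₀ Z hk₀
  have hdiv : Continuous fun Z : ℂ => Z / k := continuous_id.div_const _
  have hgreen (Z : ℂ) : green ω (Ψ (k * Z)) = (2 ^ q) ^ k * green ω (Ψ (k * (Z + 1))) := by
    conv_lhs => rw [← iterate_add_natCast_of_map_eq hΨ.map_eq (k * Z) k, ← Function.iterate_mul,
      green_iterate hω, pow_mul]
    rw [mul_add, mul_one]
  have him {Z : ℂ} (hZ : 0 < green ω (Ψ (k * Z))) : |(k * Z).im| < M := hΨ.abs_im_lt hZ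
  have hlt {T : ℝ} {Z : ℂ} (hZ : T / k < Z.re) : T < (k * Z).re := by
    rw [← ofReal_natCast, re_ofReal_mul]
    exact (div_lt_iff₀' hk₁).1 hZ
  obtain ⟨X, hX, hsub⟩ := _root_.exists_isRayToZero (Ψ := fun Z => Ψ (k * Z)) (Z₀ := Z₀ / k)
    (continuous_green hω) (green_eq_zero_of_norm_iterate_le hω (K := 0) fun n => by simp)
    (one_lt_pow₀ (one_lt_pow₀ one_lt_two hq) hk) hgreen (hK.image hdiv)
    (hKc.image _ hdiv.continuousOn) (mem_image_of_mem _ hZ₀)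
    ⟨_, hZ₁, (add_div _ _ _).trans (by rw [div_self hk₀])⟩
    (forall_mem_image.2 fun Z hZ => by simpa only [hcancel] using hpos Z hZ)
    (fun Z hZ => (hΨ.differentiableAt _ ((him hZ).trans (lt_add_one M))).continuousAt.comp
      (continuous_const_mul (k : ℂ)).continuousAt)
    (fun ε hε => by
      obtain ⟨T, hT⟩ := hΨ.exists_norm_lt ε hε
      exact ⟨T / k, fun Z hZ hre => hT _ (him hZ) (hlt hre)⟩)
  obtain ⟨T, hT⟩ := hΨ.exists_mem_petal
  refine ⟨X, hX, (hsub (T / k)).mono fun z hz hzX => ?_⟩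
  obtain ⟨Z, ⟨hZ, hre⟩, rfl⟩ := hz hzX
  exact hT _ (him hZ) (hlt hre)

end IsRepellingParam

lemma HasAttractingPetals.exists_isRayToZero (h : HasAttractingPetals ω q m a R)
    (hw : IsAttractingDir m (-a) w) :
    ∃ X, IsRayToZero (green ω) X ∧ ∀ᶠ z in 𝓝[≠] 0, z ∈ X → z ∈ petal m w 0 := by
  obtain ⟨g, R', r, hp⟩ := h.isParabolicGerm.exists_isRepellingPetal hw
  obtain ⟨M, Ψ, hΨ⟩ := hp.exists_isRepellingParam h
  exact hΨ.exists_isRayToZero h.norm_eq_one.le h.q_ne_zero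

end RepellingParam

section PetalComponent

variable {ω a v v' z u : ℂ} {q m : ℕ} {R : ℝ}

lemma IsAttractingDir.mul_of_pow_eq_one (hv : IsAttractingDir m a v) {ξ : ℂ} (hξ : ξ ^ m = 1) :
    IsAttractingDir m a (ξ * v) := by
  rw [IsAttractingDir, mul_pow, hξ, one_mul, hv]

lemma IsAttractingDir.div_pow_eq_one (hv : IsAttractingDir m a v) (hv' : IsAttractingDir m a v') :
    (v' / v) ^ m = 1 := by
  rw [div_pow, div_eq_one_iff_eq (pow_ne_zero m hv.ne_zero)]
  exact mul_left_cancel₀ (left_ne_zero_of_mul hv.mul_ne_zero) (hv'.trans hv.symm)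

lemma tendsto_parBranch_natCast (hm : m ≠ 0) (v : ℂ) :
    Tendsto (fun n : ℕ => parBranch m v n) atTop (𝓝 0) :=
  tendsto_parBranch_comp hm v (by simpa only [natCast_re] using tendsto_natCast_atTop_atTop)

lemma eventually_parBranch_natCast_mem_petal (m : ℕ) (v : ℂ) (R : ℝ) :
    ∀ᶠ n : ℕ in atTop, parBranch m v n ∈ petal m v R := by
  filter_upwards [tendsto_natCast_atTop_atTop.eventually_gt_atTop R] with n hn
  exact mem_image_of_mem _ (by rwa [mem_ofPred_eq, natCast_re])

lemma eventually_parBranch_natCast_mul_mem_petal (hv : IsAttractingDir m a v) (R : ℝ) {t : ℕ → ℂ}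
    (ht : Tendsto t atTop (𝓝 1)) : ∀ᶠ n : ℕ in atTop, parBranch m v n * t n ∈ petal m v R := by
  have : (0 : ℝ) < m := Nat.cast_pos.2 hv.m_ne_zero.bot_lt
  have hinv : Tendsto (fun n => ((t n ^ m)⁻¹).re) atTop (𝓝 1) := by
    have hlim := (ht.pow m).inv₀ (by rw [one_pow]; exact one_ne_zero)
    rw [one_pow, inv_one] at hlim
    exact (continuous_re.tendsto' 1 1 one_re).comp hlim
  have hsub : Tendsto (fun n => ‖t n - 1‖) atTop (𝓝 0) :=
    tendsto_iff_norm_sub_tendsto_zero.1 ht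
  filter_upwards [hinv.eventually_const_lt one_half_lt_one,
    hsub.eventually_lt_const (show 0 < 1 / (2 * (m : ℝ)) by positivity),
    tendsto_natCast_atTop_atTop.eventually_gt_atTop (2 * R), eventually_gt_atTop 0]
    with n hre hnorm hnR hn
  have hn : (0 : ℝ) < n := Nat.cast_pos.2 hn
  have hcoord : parCoord m a (parBranch m v n * t n) = (n : ℝ) * (t n ^ m)⁻¹ := by
    rw [parCoord_mul, ← ofReal_natCast, parCoord_parBranch hv (ofReal_ne_zero.2 hn.ne'),
      div_eq_mul_inv]
  refine ⟨parCoord m a (parBranch m v n * t n), ?_, parBranch_parCoord hv (ζ := (n : ℝ)) hn ?_⟩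
  · rw [mem_ofPred_eq, hcoord, re_ofReal_mul]
    nlinarith
  · rw [ofReal_natCast, mul_div_cancel_left₀ _ (parBranch_ne_zero hv.ne_zero m n)]
    exact hnorm.le

/-- The component of the basin that contains the attracting petal about `v`. -/
def petalComponent (ω : ℂ) (m : ℕ) (R : ℝ) (v : ℂ) : Set ℂ :=
  connectedComponentIn (basin ω) (parBranch m v (R + 1 : ℝ))

lemma petalComponent_subset_basin : petalComponent ω m R v ⊆ basin ω :=
  connectedComponentIn_subset _ _

lemma connectedComponentIn_eq_petalComponent (hz : z ∈ petalComponent ω m R v) :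
    connectedComponentIn (basin ω) z = petalComponent ω m R v :=
  (connectedComponentIn_eq hz).symm

lemma parBranch_add_one_mem_petal (m : ℕ) (v : ℂ) (R : ℝ) :
    parBranch m v (R + 1 : ℝ) ∈ petal m v R :=
  mem_image_of_mem _ (lt_add_one R)

namespace HasAttractingPetals

lemma ne_zero (h : HasAttractingPetals ω q m a R) : ω ≠ 0 :=
  norm_ne_zero_iff.1 (h.norm_eq_one ▸ one_ne_zero)

lemma pow_q_eq_one (h : HasAttractingPetals ω q m a R) : ω ^ q = 1 :=
  (hasDerivAt_Pq_iterate_zero ω q).unique h.isParabolicGerm.hasDerivAt_zero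

lemma pow_m_eq_one (h : HasAttractingPetals ω q m a R) : ω ^ m = 1 :=
  pow_eq_one_of_isParabolicGerm_Pq_iterate h.ne_zero h.isParabolicGerm

lemma isAttractingDir_pow_mul (h : HasAttractingPetals ω q m a R) (hv : IsAttractingDir m a v)
    (n : ℕ) : IsAttractingDir m a (ω ^ n * v) :=
  hv.mul_of_pow_eq_one (by rw [pow_right_comm, h.pow_m_eq_one, one_pow])

lemma parBranch_mem_basin (h : HasAttractingPetals ω q m a R) (hv : IsAttractingDir m a v) :
    parBranch m v (R + 1 : ℝ) ∈ basin ω :=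
  h.petal_subset_basin hv (parBranch_add_one_mem_petal m v R)

lemma petal_subset_petalComponent (h : HasAttractingPetals ω q m a R)
    (hv : IsAttractingDir m a v) : petal m v R ⊆ petalComponent ω m R v :=
  h.petal_subset_connectedComponentIn hv (parBranch_add_one_mem_petal m v R)

lemma petalComponent_subset_petalBasin (h : HasAttractingPetals ω q m a R)
    (hv : IsAttractingDir m a v) : petalComponent ω m R v ⊆ petalBasin ω q m v R :=
  h.subset_petalBasin_of_isPreconnected hv isPreconnected_connectedComponentIn
    petalComponent_subset_basin (mem_connectedComponentIn (h.parBranch_mem_basin hv))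
    ⟨0, parBranch_add_one_mem_petal m v R⟩

lemma eq_of_mem_petalComponent_of_mem_petalComponent (h : HasAttractingPetals ω q m a R)
    (hv : IsAttractingDir m a v) (hv' : IsAttractingDir m a v') (hz : z ∈ petalComponent ω m R v)
    (hz' : z ∈ petalComponent ω m R v') : v = v' :=
  h.eq_of_mem_petalBasin_of_mem_petalBasin hv hv' (h.petalComponent_subset_petalBasin hv hz)
    (h.petalComponent_subset_petalBasin hv' hz')

lemma isOpen_petalComponent (h : HasAttractingPetals ω q m a R) (v : ℂ) :
    IsOpen (petalComponent ω m R v) :=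
  h.isOpen_basin.connectedComponentIn

lemma isConnected_petalComponent (h : HasAttractingPetals ω q m a R) (hv : IsAttractingDir m a v) :
    IsConnected (petalComponent ω m R v) :=
  isConnected_connectedComponentIn_iff.2 (h.parBranch_mem_basin hv)

lemma eventually_parBranch_natCast_mem_petalComponent (h : HasAttractingPetals ω q m a R)
    (hv : IsAttractingDir m a v) : ∀ᶠ n : ℕ in atTop, parBranch m v n ∈ petalComponent ω m R v :=
  (eventually_parBranch_natCast_mem_petal m v R).mono
    fun _ hn => h.petal_subset_petalComponent hv hn

lemma zero_mem_closure_petalComponent (h : HasAttractingPetals ω q m a R)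
    (hv : IsAttractingDir m a v) : 0 ∈ closure (petalComponent ω m R v) :=
  mem_closure_of_tendsto (tendsto_parBranch_natCast hv.m_ne_zero v)
    (h.eventually_parBranch_natCast_mem_petalComponent hv)

/-- Near `0` the polynomial is close to multiplication by `ω`, which maps the axis of the petal
about `v` to that of the petal about `ω * v`. -/
lemma image_petalComponent (h : HasAttractingPetals ω q m a R) (hv : IsAttractingDir m a v) :
    Pq ω '' petalComponent ω m R v = petalComponent ω m R (ω * v) := by
  have hv' : IsAttractingDir m a (ω * v) := hv.mul_of_pow_eq_one h.pow_m_eq_one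
  have hlim : Tendsto (fun n : ℕ => 1 + parBranch m v n / ω) atTop (𝓝 1) := by
    simpa only [zero_div, add_zero] using
      ((tendsto_parBranch_natCast hv.m_ne_zero v).div_const ω).const_add 1
  obtain ⟨n, hn, hn'⟩ := ((h.eventually_parBranch_natCast_mem_petalComponent hv).and
    (eventually_parBranch_natCast_mul_mem_petal hv' R hlim)).exists
  have hPq : Pq ω (parBranch m v n) = parBranch m (ω * v) n * (1 + parBranch m v n / ω) := by
    have hω := h.ne_zero
    simp only [parBranch, Pq]
    field_simp
  rw [← connectedComponentIn_eq_petalComponent hn,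
    h.image_component (petalComponent_subset_basin hn), hPq,
    connectedComponentIn_eq_petalComponent (h.petal_subset_petalComponent hv' hn')]

lemma image_iterate_petalComponent (h : HasAttractingPetals ω q m a R)
    (hv : IsAttractingDir m a v) (n : ℕ) :
    (Pq ω)^[n] '' petalComponent ω m R v = petalComponent ω m R (ω ^ n * v) := by
  induction n with
  | zero => rw [Function.iterate_zero, image_id, pow_zero, one_mul]
  | succ n ih =>
    rw [Function.iterate_succ', image_comp, ih,
      h.image_petalComponent (h.isAttractingDir_pow_mul hv n), pow_succ', mul_assoc]

lemma exists_critical_mem_petalComponent (h : HasAttractingPetals ω q m a R)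
    (hv : IsAttractingDir m a v) : ∃ n : ℕ, -ω / 2 ∈ petalComponent ω m R (ω ^ n * v) := by
  have hmem := parBranch_add_one_mem_petal m v R
  obtain ⟨n, hn⟩ := h.exists_critical_mem_connectedComponentIn hv hmem
  refine ⟨n, ?_⟩
  rwa [connectedComponentIn_eq_petalComponent (v := ω ^ n * v)] at hn
  rw [← h.image_iterate_petalComponent hv]
  exact mem_image_of_mem _ (h.petal_subset_petalComponent hv hmem)

/-- There is only one critical point, so only one cycle of petals. -/
lemma m_dvd_q (h : HasAttractingPetals ω q m a R) : m ∣ q := by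
  have hm := h.isParabolicGerm.m_ne_zero
  obtain ⟨v, hv⟩ := exists_isAttractingDir hm h.isParabolicGerm.a_ne_zero
  have hξ := isPrimitiveRoot_exp m hm
  set ξ := exp (2 * Real.pi * I / m)
  have hξv := hv.mul_of_pow_eq_one hξ.pow_eq_one
  obtain ⟨n, hn⟩ := h.exists_critical_mem_petalComponent hv
  obtain ⟨k, hk⟩ := h.exists_critical_mem_petalComponent hξv
  have heq : ω ^ n = ω ^ k * ξ := mul_right_cancel₀ hv.ne_zero <| by
    rw [h.eq_of_mem_petalComponent_of_mem_petalComponent (h.isAttractingDir_pow_mul hv n)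
      (h.isAttractingDir_pow_mul hξv k) hn hk, mul_assoc]
  refine hξ.dvd_of_pow_eq_one q ?_
  have hpow := congrArg (· ^ q) heq
  simpa only [mul_pow, pow_right_comm ω _ q, h.pow_q_eq_one, one_pow, one_mul, eq_comm] using hpow

end HasAttractingPetals

end PetalComponent

section Symmetry

variable {ω z w : ℂ} {m : ℕ} {R : ℝ} {v : ℂ}

lemma Pq_neg_sub (ω z : ℂ) : Pq ω (-ω - z) = Pq ω z := by
  simp only [Pq]
  ring

lemma Pq_eq_Pq_iff : Pq ω z = Pq ω w ↔ z = w ∨ z = -ω - w := by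
  rw [← sub_eq_zero, ← sub_eq_zero (a := z) (b := w), ← sub_eq_zero (a := z) (b := -ω - w),
    ← mul_eq_zero]
  simp only [Pq]
  ring_nf

lemma neg_sub_mem_basin : -ω - z ∈ basin ω ↔ z ∈ basin ω := by
  rw [← Pq_mem_basin, Pq_neg_sub, Pq_mem_basin]

lemma mapsTo_neg_sub_connectedComponentIn_basin (hz : z ∈ basin ω) :
    MapsTo (fun w => -ω - w) (connectedComponentIn (basin ω) z)
      (connectedComponentIn (basin ω) (-ω - z)) := by
  refine mapsTo_iff_image_subset.2 ((isPreconnected_connectedComponentIn.image _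
    (by fun_prop)).subset_connectedComponentIn ⟨z, mem_connectedComponentIn hz, rfl⟩ ?_)
  exact image_subset_iff.2 fun w hw => neg_sub_mem_basin.2 (connectedComponentIn_subset _ _ hw)

lemma neg_mem_closure_connectedComponentIn_neg_sub (hz : z ∈ basin ω)
    (h : 0 ∈ closure (connectedComponentIn (basin ω) z)) :
    -ω ∈ closure (connectedComponentIn (basin ω) (-ω - z)) := by
  have hmaps := (mapsTo_neg_sub_connectedComponentIn_basin hz).closure (by fun_prop)
  simpa only [sub_zero] using hmaps h

end Symmetry

section LogBranch

variable {α : Type*} [TopologicalSpace α]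

lemma isLocallyInjective_exp : IsLocallyInjective exp := by
  refine isLocallyInjective_iff_nhds.2 fun z => ?_
  have hderiv := (hasStrictDerivAt_exp z).hasStrictFDerivAt_equiv (exp_ne_zero z)
  set e := hderiv.toOpenPartialHomeomorph
  exact ⟨e.source, e.open_source.mem_nhds hderiv.mem_toOpenPartialHomeomorph_source, e.injOn⟩

lemma sub_eq_sub_of_eqOn_exp {S : Set α} (hS : IsPreconnected S) {F F' : α → ℂ}
    (hF : ContinuousOn F S) (hF' : ContinuousOn F' S) (hexp : ∀ x ∈ S, exp (F x) = exp (F' x))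
    {x y : α} (hx : x ∈ S) (hy : y ∈ S) : F x - F y = F' x - F' y := by
  have heq : EqOn F (fun s => F' s + (F y - F' y)) S := by
    refine (T2Space.isSeparatedMap exp).eqOn_of_comp_eqOn isLocallyInjective_exp hS hF
      (hF'.add continuousOn_const) (fun s hs => ?_) hy (by ring)
    rw [Function.comp_apply, Function.comp_apply, exp_add, exp_sub, hexp y hy, hexp s hs,
      div_self (exp_ne_zero _), mul_one]
  linear_combination heq hx

variable {Q X X' Y : Set ℂ} {a b c : ℂ} {S S' : ℝ} {L : ℂ → ℂ}

/-- There is a continuous branch of `z ↦ log (z / (z - a))` on `Q`. -/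
def HasLogDivSub (Q : Set ℂ) (a : ℂ) : Prop :=
  ∃ L : ℂ → ℂ, ContinuousOn L Q ∧ ∀ z ∈ Q, exp (L z) * (z - a) = z

lemma HasLogDivSub.of_norm_sub_lt (ha : HasLogDivSub Q a) (hab : ∀ z ∈ Q, ‖b - a‖ < ‖z - b‖) :
    HasLogDivSub Q b := by
  obtain ⟨L, hL, hexp⟩ := ha
  have hne (z) (hz : z ∈ Q) : z - b ≠ 0 := norm_pos_iff.1 ((norm_nonneg _).trans_lt (hab z hz))
  have hslit (z) (hz : z ∈ Q) : 1 + (b - a) / (z - b) ∈ slitPlane := by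
    refine mem_slitPlane_of_norm_lt_one ?_
    rw [norm_div, div_lt_one (norm_pos_iff.2 (hne z hz))]
    exact hab z hz
  refine ⟨fun z => L z + log (1 + (b - a) / (z - b)), hL.add (ContinuousOn.clog
    (continuousOn_const.add (continuousOn_const.div (by fun_prop) hne)) hslit), fun z hz => ?_⟩
  have hz₀ := hne z hz
  rw [exp_add, exp_log (slitPlane_ne_zero (hslit z hz))]
  field_simp
  linear_combination hexp z hz

lemma HasLogDivSub.exists_log (hb : HasLogDivSub Q b) (hlt : ∀ z ∈ Q, ‖z‖ < ‖b‖) (hb₀ : b ≠ 0) :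
    ∃ L : ℂ → ℂ, ContinuousOn L Q ∧ ∀ z ∈ Q, exp (L z) = z := by
  obtain ⟨L, hL, hexp⟩ := hb
  have hslit (z) (hz : z ∈ Q) : 1 + -z / b ∈ slitPlane := by
    refine mem_slitPlane_of_norm_lt_one ?_
    rw [norm_div, norm_neg, div_lt_one (norm_pos_iff.2 hb₀)]
    exact hlt z hz
  refine ⟨fun z => L z + log (1 + -z / b) + log (-b),
    (hL.add (ContinuousOn.clog (by fun_prop) hslit)).add continuousOn_const, fun z hz => ?_⟩
  rw [exp_add, exp_add, exp_log (slitPlane_ne_zero (hslit z hz)), exp_log (neg_ne_zero.2 hb₀)]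
  field_simp
  linear_combination hexp z hz

namespace JoinsZeroToInfinity

lemma hasLogDivSub (hX : JoinsZeroToInfinity X) (hQ : IsCompact Q) (hd : Disjoint Q X)
    (ha : a ∈ X) : HasLogDivSub Q a := by
  obtain ⟨δ, hδ, hdist⟩ := Metric.exists_pos_forall_lt_edist hQ hX.isClosed hd
  have hstep {x y : ℂ} (hy : y ∈ X) (hxy : edist y x < δ) (hx : HasLogDivSub Q x) :
      HasLogDivSub Q y := hx.of_norm_sub_lt fun z hz => by
    have hlt := hxy.trans (hdist z hz y hy)
    rwa [edist_dist, edist_dist, ENNReal.ofReal_lt_ofReal_iff_of_nonneg dist_nonneg,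
      dist_eq_norm, dist_eq_norm] at hlt
  have hiff : HasLogDivSub Q 0 ↔ HasLogDivSub Q a := by
    refine hX.isPreconnected.induction₂ (fun x y => HasLogDivSub Q x ↔ HasLogDivSub Q y)
      (fun x hx => ?_) (fun _ _ _ _ _ _ => Iff.trans) (fun _ _ _ _ => Iff.symm) hX.zero_mem ha
    filter_upwards [self_mem_nhdsWithin, nhdsWithin_le_nhds (Metric.eball_mem_nhds x
      (ENNReal.coe_pos.2 hδ))] with y hy hxy
    exact ⟨hstep hy hxy, hstep hx (by rwa [edist_comm])⟩
  exact hiff.1 ⟨0, continuousOn_const, fun z _ => by simp⟩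

lemma exists_log (hX : JoinsZeroToInfinity X) (hQ : IsCompact Q) (hd : Disjoint Q X) :
    ∃ L : ℂ → ℂ, ContinuousOn L Q ∧ ∀ z ∈ Q, exp (L z) = z := by
  obtain ⟨A, hA⟩ := hQ.isBounded.exists_norm_le
  obtain ⟨b, hb, hAb⟩ := hX.exists_lt_norm (max A 0)
  exact (hX.hasLogDivSub hQ hd hb).exists_log
    (fun z hz => (hA z hz).trans_lt ((le_max_left _ _).trans_lt hAb))
    (norm_pos_iff.1 ((le_max_right _ _).trans_lt hAb))

end JoinsZeroToInfinity

lemma log_arc_sub_log (hL : ContinuousOn L Q) (hexp : ∀ z ∈ Q, exp (L z) = z)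
    (harc : ∀ s ∈ uIcc 0 S, c * exp (s * I) ∈ Q) : L (c * exp (S * I)) - L c = S * I := by
  have hcont : ContinuousOn (fun s : ℝ => L (c * exp (s * I))) (uIcc 0 S) :=
    hL.comp (Continuous.continuousOn (by fun_prop)) harc
  have hc := harc 0 left_mem_uIcc
  rw [ofReal_zero, zero_mul, exp_zero, mul_one] at hc
  have hsub := sub_eq_sub_of_eqOn_exp isPreconnected_uIcc hcont (F' := fun s : ℝ => L c + s * I)
    (Continuous.continuousOn (by fun_prop))
    (fun s hs => by rw [hexp _ (harc s hs), exp_add, hexp c hc]) right_mem_uIcc left_mem_uIcc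
  simpa only [ofReal_zero, zero_mul, exp_zero, mul_one, add_zero, add_sub_cancel_left] using hsub

lemma JoinsZeroToInfinity.exists_log_arc (hX : JoinsZeroToInfinity X) (hQ : IsCompact Q)
    (hd : Disjoint Q X) (harc : ∀ s ∈ uIcc 0 S, c * exp (s * I) ∉ X) :
    ∃ L : ℂ → ℂ, ContinuousOn L Q ∧ (∀ z ∈ Q, exp (L z) = z) ∧
      L (c * exp (S * I)) - L c = S * I := by
  have hcpt : IsCompact ((fun s : ℝ => c * exp (s * I)) '' uIcc 0 S) :=
    isCompact_uIcc.image (by fun_prop)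
  obtain ⟨L, hL, hexp⟩ := hX.exists_log (hQ.union hcpt)
    (hd.union_left (disjoint_left.2 (forall_mem_image.2 harc)))
  exact ⟨L, hL.mono subset_union_left, fun z hz => hexp z (Or.inl hz),
    log_arc_sub_log hL hexp fun s hs => Or.inr (mem_image_of_mem _ hs)⟩

/-- Branches of the logarithm off `X` and off `X'` measure the two angles; they differ by a constant
along a path in `Y`. -/
lemma eq_of_mul_exp_eq_mul_exp (hX : JoinsZeroToInfinity X) (hX' : JoinsZeroToInfinity X')
    (hY : IsOpen Y) (hYc : IsConnected Y) (hYX : Disjoint Y X) (hYX' : Disjoint Y X') (hc : c ∈ Y)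
    (hS : c * exp (S * I) ∈ Y) (heq : c * exp (S * I) = c * exp (S' * I))
    (harc : ∀ s ∈ uIcc 0 S, c * exp (s * I) ∉ X) (harc' : ∀ s ∈ uIcc 0 S', c * exp (s * I) ∉ X') :
    S = S' := by
  obtain ⟨γ, hγ⟩ := (hY.isConnected_iff_isPathConnected.1 hYc).joinedIn c hc _ hS
  have hγY : range γ ⊆ Y := range_subset_iff.2 hγ
  have hcpt := isCompact_range γ.continuous
  obtain ⟨L, hL, hexp, hLS⟩ := hX.exists_log_arc hcpt (hYX.mono_left hγY) harc
  obtain ⟨L', hL', hexp', hLS'⟩ := hX'.exists_log_arc hcpt (hYX'.mono_left hγY) harc'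
  have hsub := sub_eq_sub_of_eqOn_exp (isPreconnected_range γ.continuous) hL hL'
    (fun z hz => by rw [hexp z hz, hexp' z hz]) ⟨1, γ.target⟩ ⟨0, γ.source⟩
  rw [hLS, heq, hLS'] at hsub
  exact ofReal_injective (mul_right_cancel₀ I_ne_zero hsub)

end LogBranch

section Separation

variable {ω a v v' : ℂ} {q m : ℕ} {R θ S : ℝ}

lemma parBranch_natCast (m : ℕ) (v : ℂ) (n : ℕ) :
    parBranch m v n = v * (Real.exp (-Real.log n / m) : ℝ) := by
  rw [parBranch, ← natCast_log]
  push_cast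
  rfl

lemma mul_exp_notMem_petal (hm : m ≠ 0) (hv : v ≠ 0) {ρ s : ℝ} (hρ : 0 < ρ)
    (hs : θ + Real.pi / (2 * m) ≤ s) (hs' : s ≤ θ + 2 * Real.pi - Real.pi / (2 * m)) :
    v * ρ * exp (s * I) ∉ petal m (v * exp (θ * I)) 0 := by
  rintro ⟨ζ, hζ : 0 < ζ.re, heq⟩
  have hm₀ : (0 : ℝ) < m := Nat.cast_pos.2 hm.bot_lt
  rw [parBranch, mul_assoc, mul_assoc, mul_right_inj' hv, ← Real.exp_log hρ, ofReal_exp, ← exp_add,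
    ← exp_add] at heq
  obtain ⟨n, hn⟩ := exp_eq_exp_iff_exists_int.1 heq
  have him : θ - ζ.arg / m = s + n * (2 * Real.pi) := by
    have := congrArg im hn
    simpa [neg_div, div_natCast_im, log_im, ← sub_eq_add_neg] using this
  obtain ⟨harg, harg'⟩ := abs_lt.1 (abs_arg_lt_pi_div_two_iff.2 (Or.inl hζ))
  have hlt : ζ.arg / m < Real.pi / (2 * m) := by
    rw [← div_div]
    gcongr
  have hgt : -(Real.pi / (2 * m)) < ζ.arg / m := by
    rw [← div_div, ← neg_div]
    gcongr
  have := Real.two_pi_pos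
  have hneg : n < 0 := by
    have : (n : ℝ) < 0 := by nlinarith
    exact_mod_cast this
  have hgt_neg : -1 < n := by
    have : (-1 : ℝ) < n := by nlinarith
    exact_mod_cast this
  omega

lemma exp_natCast_mul_eq_neg_one {k : ℕ} (h : m * θ = Real.pi - k * (2 * Real.pi)) :
    exp (m * (θ * I)) = -1 := by
  have hcast : (m : ℂ) * (θ * I) = Real.pi * I - k * (2 * Real.pi * I) := by
    rw [← mul_assoc, ← ofReal_natCast, ← ofReal_mul, h]
    push_cast
    ring
  rw [hcast, exp_sub, exp_pi_mul_I, exp_nat_mul_two_pi_mul_I, div_one]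

lemma IsAttractingDir.mul_exp_neg (hv : IsAttractingDir m a v) (hθ : exp (m * (θ * I)) = -1) :
    IsAttractingDir m (-a) (v * exp (θ * I)) := by
  rw [IsAttractingDir] at hv ⊢
  rw [mul_pow, ← exp_nat_mul, hθ]
  linear_combination hv

lemma IsAttractingDir.exists_eq_mul_exp (hv : IsAttractingDir m a v)
    (hv' : IsAttractingDir m a v') (hne : v ≠ v') :
    ∃ α : ℝ, 2 * Real.pi / m ≤ α ∧ α ≤ 2 * Real.pi - 2 * Real.pi / m ∧ v' = v * exp (α * I) := by
  have hm := hv.m_ne_zero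
  have : NeZero m := ⟨hm⟩
  have hm₀ : (0 : ℝ) < m := Nat.cast_pos.2 hm.bot_lt
  obtain ⟨t, ht, htv⟩ := (isPrimitiveRoot_exp m hm).eq_pow_of_pow_eq_one (hv.div_pow_eq_one hv')
  have ht₀ : t ≠ 0 := by
    rintro rfl
    exact hne ((div_eq_one_iff_eq hv.ne_zero).1 (htv.symm.trans (pow_zero _))).symm
  have ht₁ : (1 : ℝ) ≤ t := Nat.one_le_cast.2 (Nat.one_le_iff_ne_zero.2 ht₀)
  have htm : (t : ℝ) + 1 ≤ m := by exact_mod_cast ht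
  have := Real.pi_pos
  refine ⟨2 * Real.pi * t / m, ?_, ?_, ?_⟩
  · refine div_le_div_of_nonneg_right ?_ hm₀.le
    nlinarith
  · rw [le_sub_iff_add_le, ← add_div, div_le_iff₀ hm₀]
    nlinarith
  · rw [← mul_div_cancel₀ v' hv.ne_zero, ← htv, ← exp_nat_mul]
    push_cast
    ring_nf

lemma disjoint_basin_of_forall_green_pos (hω : ‖ω‖ ≤ 1) {Z : Set ℂ}
    (hZ : ∀ z ∈ Z, z ≠ 0 → 0 < green ω z) : Disjoint (basin ω) Z :=
  disjoint_left.2 fun z hz hzZ =>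
    (hZ z hzZ (ne_of_mem_of_not_mem hz zero_notMem_basin)).ne'
      (green_eq_zero_of_mem_basinAug hω hz.1)

lemma green_neg_eq_zero (hω : ‖ω‖ ≤ 1) : green ω (-ω) = 0 := by
  have hPq : Pq ω (-ω) = 0 := by
    simp only [Pq]
    ring
  refine green_eq_zero_of_norm_iterate_le hω (K := ‖ω‖) fun n => ?_
  cases n with
  | zero => simp
  | succ n => simp [Function.iterate_succ_apply, hPq]

namespace HasAttractingPetals

lemma exists_isRayToZero_disjoint_arc (h : HasAttractingPetals ω q m a R)
    (hv : IsAttractingDir m a v) (hθ : exp (m * (θ * I)) = -1)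
    (hS : uIcc 0 S ⊆ Icc (θ + Real.pi / (2 * m)) (θ + 2 * Real.pi - Real.pi / (2 * m))) :
    ∃ X, IsRayToZero (green ω) X ∧
      ∀ᶠ n : ℕ in atTop, ∀ s ∈ uIcc 0 S, parBranch m v n * exp (s * I) ∉ X := by
  obtain ⟨X, hX, hXpetal⟩ := h.exists_isRayToZero (hv.mul_exp_neg hθ)
  refine ⟨X, hX, ?_⟩
  obtain ⟨r, hr, hball⟩ := Metric.eventually_nhds_iff.1 (eventually_nhdsWithin_iff.1 hXpetal)
  have hlim := tendsto_zero_iff_norm_tendsto_zero.1 (tendsto_parBranch_natCast hv.m_ne_zero v)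
  filter_upwards [hlim.eventually_lt_const hr] with n hn s hs hmem
  have hdist : dist (parBranch m v n * exp (s * I)) 0 < r := by
    rwa [dist_zero_right, norm_mul, norm_exp_ofReal_mul_I, mul_one]
  have hne := mul_ne_zero (parBranch_ne_zero hv.ne_zero m n) (exp_ne_zero (s * I))
  have hpetal := hball hdist hne hmem
  rw [parBranch_natCast] at hpetal
  exact mul_exp_notMem_petal hv.m_ne_zero hv.ne_zero (Real.exp_pos _) (hS hs).1 (hS hs).2 hpetal

/-- The two arcs from the direction `v` to `v'` each leave out one of the repelling directions
adjacent to `v`; rays landing in these two directions separate the petals. -/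
lemma exists_separating_rays (h : HasAttractingPetals ω q m a R) (hv : IsAttractingDir m a v)
    (hv' : IsAttractingDir m a v') (hne : v ≠ v') :
    ∃ Z, IsClosed Z ∧ (∀ z ∈ Z, z ≠ 0 → 0 < green ω z) ∧ ∀ Y, IsOpen Y → IsConnected Y →
      petalComponent ω m R v ⊆ Y → petalComponent ω m R v' ⊆ Y → ¬Disjoint Y Z := by
  have hm : (m : ℝ) ≠ 0 := Nat.cast_ne_zero.2 hv.m_ne_zero
  obtain ⟨α, hα, hα', hv'α⟩ := hv.exists_eq_mul_exp hv' hne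
  have hdiv : 2 * Real.pi / m = 4 * (Real.pi / (2 * m)) := by ring
  have hdiv' : Real.pi / m = 2 * (Real.pi / (2 * m)) := by ring
  have hpos : 0 < Real.pi / (2 * m) := by
    have : (0 : ℝ) < m := Nat.cast_pos.2 hv.m_ne_zero.bot_lt
    positivity
  obtain ⟨X, hX, harc⟩ := h.exists_isRayToZero_disjoint_arc hv (θ := -(Real.pi / m)) (S := α)
    (exp_natCast_mul_eq_neg_one (k := 1) (by field_simp; norm_num))
    (uIcc_subset_Icc ⟨by linarith, by linarith⟩ ⟨by linarith, by linarith⟩)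
  obtain ⟨X', hX', harc'⟩ := h.exists_isRayToZero_disjoint_arc hv
    (θ := Real.pi / m - 2 * Real.pi) (S := α - 2 * Real.pi)
    (exp_natCast_mul_eq_neg_one (k := m) (by field_simp))
    (uIcc_subset_Icc ⟨by linarith, by linarith⟩ ⟨by linarith, by linarith⟩)
  refine ⟨X ∪ X', hX.isClosed.union hX'.isClosed, fun z hz => hz.elim (hX.pos z) (hX'.pos z),
    fun Y hY hYc hvY hv'Y hd => ?_⟩
  rw [disjoint_union_right] at hd
  obtain ⟨n, hn, hn', hnarc, hnarc'⟩ := ((h.eventually_parBranch_natCast_mem_petalComponent hv).and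
    ((h.eventually_parBranch_natCast_mem_petalComponent hv').and (harc.and harc'))).exists
  have hrot : parBranch m v n * exp (α * I) = parBranch m v' n := by
    rw [hv'α, parBranch, parBranch, mul_right_comm]
  have heq : α = α - 2 * Real.pi := by
    refine eq_of_mul_exp_eq_mul_exp hX.toJoinsZeroToInfinity hX'.toJoinsZeroToInfinity hY hYc hd.1
      hd.2 (hvY hn) (hrot ▸ hv'Y hn') ?_ hnarc hnarc'
    push_cast
    rw [sub_mul, exp_sub, exp_two_pi_mul_I, div_one]
  linarith [Real.pi_pos]

/-- Otherwise a small ball about `-ω` would join the two components off the separating rays. -/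
lemma neg_notMem_closure_petalComponent (h : HasAttractingPetals ω q m a R)
    (hv : IsAttractingDir m a v) (hv' : IsAttractingDir m a v') (hne : v ≠ v')
    (hmem : -ω ∈ closure (petalComponent ω m R v')) : -ω ∉ closure (petalComponent ω m R v) := by
  intro hmem₀
  obtain ⟨Z, hZ, hpos, hsep⟩ := h.exists_separating_rays hv hv' hne
  have hnot : -ω ∉ Z := fun hωZ =>
    (hpos _ hωZ (neg_ne_zero.2 h.ne_zero)).ne' (green_neg_eq_zero h.norm_eq_one.le)
  obtain ⟨ε, hε, hball⟩ := Metric.isOpen_iff.1 hZ.isOpen_compl (-ω) hnot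
  have hmeet {u : ℂ} (hu : -ω ∈ closure (petalComponent ω m R u)) :
      (Metric.ball (-ω) ε ∩ petalComponent ω m R u).Nonempty :=
    mem_closure_iff.1 hu _ Metric.isOpen_ball (Metric.mem_ball_self hε)
  have hdisj (u : ℂ) : Disjoint (petalComponent ω m R u) Z :=
    (disjoint_basin_of_forall_green_pos h.norm_eq_one.le hpos).mono_left petalComponent_subset_basin
  refine hsep (Metric.ball (-ω) ε ∪ petalComponent ω m R v ∪ petalComponent ω m R v')
    ((Metric.isOpen_ball.union (h.isOpen_petalComponent v)).union (h.isOpen_petalComponent v'))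
    (((Metric.isConnected_ball hε).union (hmeet hmem₀) (h.isConnected_petalComponent hv)).union
      ((hmeet hmem).mono (inter_subset_inter_left _ subset_union_left))
      (h.isConnected_petalComponent hv'))
    (subset_union_right.trans subset_union_left) subset_union_right ?_
  exact ((disjoint_left.2 hball).union_left (hdisj v)).union_left (hdisj v')

end HasAttractingPetals

end Separation

section ImmediateBasin

variable {ω a v u z : ℂ} {q m : ℕ} {R : ℝ}

lemma neg_sub_critical (ω : ℂ) : -ω - -ω / 2 = -ω / 2 := by
  ring

lemma neg_sub_mem_petalComponent (hc : -ω / 2 ∈ petalComponent ω m R v)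
    (hz : z ∈ petalComponent ω m R v) : -ω - z ∈ petalComponent ω m R v := by
  have hmaps := mapsTo_neg_sub_connectedComponentIn_basin (petalComponent_subset_basin hc)
  rw [neg_sub_critical, connectedComponentIn_eq_petalComponent hc] at hmaps
  exact hmaps hz

namespace HasAttractingPetals

lemma neg_mem_closure_petalComponent (h : HasAttractingPetals ω q m a R)
    (hv : IsAttractingDir m a v) (hc : -ω / 2 ∈ petalComponent ω m R v) :
    -ω ∈ closure (petalComponent ω m R v) := by
  have hmem := neg_mem_closure_connectedComponentIn_neg_sub (petalComponent_subset_basin hc)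
  rw [neg_sub_critical, connectedComponentIn_eq_petalComponent hc] at hmem
  exact hmem (h.zero_mem_closure_petalComponent hv)

/-- The components over `petalComponent ω m R (ω * u)` are `petalComponent ω m R u` and its
reflection; if these differ, then `petalComponent ω m R u` is not the critical component, so `-ω`,
which is in the closure of the critical one, is not in its closure. -/
lemma mem_petalComponent_of_Pq_mem (h : HasAttractingPetals ω q m a R) (hu : IsAttractingDir m a u)
    (hz : z ∈ basin ω) (h0 : 0 ∈ closure (connectedComponentIn (basin ω) z))
    (hPz : Pq ω z ∈ petalComponent ω m R (ω * u)) : z ∈ petalComponent ω m R u := by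
  rw [← h.image_petalComponent hu] at hPz
  obtain ⟨b, hb, hbz⟩ := hPz
  obtain rfl | rfl := Pq_eq_Pq_iff.1 hbz
  · exact hb
  obtain ⟨k, hc⟩ := h.exists_critical_mem_petalComponent hu
  have hk := h.isAttractingDir_pow_mul hu k
  obtain heq | hne := eq_or_ne (ω ^ k * u) u
  · rw [heq] at hc
    simpa only [sub_sub_cancel] using neg_sub_mem_petalComponent hc hb
  · have hmem := neg_mem_closure_connectedComponentIn_neg_sub hz h0
    rw [connectedComponentIn_eq_petalComponent hb] at hmem
    exact absurd (h.neg_mem_closure_petalComponent hk hc)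
      (h.neg_notMem_closure_petalComponent hk hu hne hmem)

lemma exists_mem_petalComponent_of_iterate_mem (h : HasAttractingPetals ω q m a R)
    (hv : IsAttractingDir m a v) (n : ℕ) (hz : z ∈ basin ω)
    (h0 : 0 ∈ closure (connectedComponentIn (basin ω) z))
    (hn : (Pq ω)^[n] z ∈ petalComponent ω m R v) :
    ∃ u, IsAttractingDir m a u ∧ z ∈ petalComponent ω m R u := by
  induction n generalizing z with
  | zero => exact ⟨v, hv, hn⟩
  | succ n ih =>
    have h0' : 0 ∈ closure (connectedComponentIn (basin ω) (Pq ω z)) := by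
      rw [← h.image_component hz]
      have hmem := mem_image_of_mem (Pq ω) h0
      rw [Pq_zero] at hmem
      exact image_closure_subset_closure_image (differentiable_Pq ω).continuous hmem
    obtain ⟨u, hu, hzu⟩ := ih (Pq_mem_basin.2 hz) h0' hn
    have hωu : ω * (ω ^ (q - 1) * u) = u := by
      rw [← mul_assoc, mul_pow_sub_one h.q_ne_zero, h.pow_q_eq_one, one_mul]
    have hu' := h.isAttractingDir_pow_mul hu (q - 1)
    exact ⟨_, hu', h.mem_petalComponent_of_Pq_mem hu' hz h0 (hωu.symm ▸ hzu)⟩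

lemma injOn_petalComponent (h : HasAttractingPetals ω q m a R) :
    InjOn (petalComponent ω m R) {v | IsAttractingDir m a v} := fun _ hv _ hv' heq =>
  have hmem := mem_connectedComponentIn (h.parBranch_mem_basin hv)
  h.eq_of_mem_petalComponent_of_mem_petalComponent hv hv' hmem (heq.subset hmem)

lemma exists_eq_petalComponent (h : HasAttractingPetals ω q m a R) (hz : z ∈ basin ω)
    (h0 : 0 ∈ closure (connectedComponentIn (basin ω) z)) :
    ∃ v, IsAttractingDir m a v ∧ connectedComponentIn (basin ω) z = petalComponent ω m R v := by
  obtain ⟨v, hv, n, hn⟩ := h.exists_mem_petalBasin hz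
  rw [← Function.iterate_mul] at hn
  obtain ⟨u, hu, hzu⟩ := h.exists_mem_petalComponent_of_iterate_mem hv (q * n) hz h0
    (h.petal_subset_petalComponent hv hn)
  exact ⟨u, hu, connectedComponentIn_eq_petalComponent hzu⟩

end HasAttractingPetals

lemma exists_hasAttractingPetals (hq : q ≠ 0) (hω : IsPrimitiveRoot ω q) :
    ∃ a R, HasAttractingPetals ω q q a R := by
  obtain ⟨m, a, hf⟩ := exists_isParabolicGerm_Pq_iterate hq hω
  obtain ⟨R, hR⟩ := hf.exists_forall_isPetal one_pos
  have h : HasAttractingPetals ω q m a R := ⟨hω.norm'_eq_one hq, hq, hf, hR⟩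
  have hmq : m = q := h.m_dvd_q.antisymm (hω.dvd_of_pow_eq_one m h.pow_m_eq_one)
  exact ⟨a, R, hmq ▸ h⟩

lemma stdAddChar_natCast [NeZero q] (p : ℕ) :
    ZMod.stdAddChar (p : ZMod q) = exp (2 * Real.pi * I * p / q) := by
  exact_mod_cast ZMod.stdAddChar_coe (N := q) p

lemma stdAddChar_pow_eq_one [NeZero q] (j : ZMod q) : ZMod.stdAddChar j ^ q = 1 := by
  rw [← AddChar.map_nsmul_eq_pow, nsmul_eq_mul, CharP.cast_eq_zero, zero_mul,
    AddChar.map_zero_eq_one]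

lemma IsAttractingDir.exists_eq_stdAddChar_mul [NeZero m] (hv : IsAttractingDir m a v)
    (hu : IsAttractingDir m a u) : ∃ j : ZMod m, u = ZMod.stdAddChar j * v := by
  obtain ⟨t, -, ht⟩ :=
    (isPrimitiveRoot_exp m (NeZero.ne m)).eq_pow_of_pow_eq_one (hv.div_pow_eq_one hu)
  refine ⟨t, ?_⟩
  rw [← div_mul_cancel₀ u hv.ne_zero, ← ht, stdAddChar_natCast, ← exp_nat_mul]
  ring_nf

end ImmediateBasin

/-- The immediate parabolic basin of `P_ω` consists of exactly
`q` components permuted cyclically with combinatorial rotation number `p/q`: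
there are exactly `q` distinct connected components of `Λ_ω` whose closure
contains `0`, indexed `B j` for `j : ZMod q` so that `P_ω` maps `B j` into
`B (j + p)`; in particular each `B j` is invariant under `P_ω^[q]`. -/
theorem immediate_basin_components
    (p q : ℕ) (hq : 2 ≤ q) (hp0 : 0 < p) (hpq : p < q) (hcop : Nat.Coprime p q)
    (ω : ℂ) (hω : ω = Complex.exp (2 * Real.pi * Complex.I * (p : ℂ) / (q : ℂ))) :
    ∃ B : ZMod q → Set ℂ,
      Function.Injective B ∧
      (∀ j, ∃ z ∈ basin ω, B j = connectedComponentIn (basin ω) z) ∧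
      (∀ j, (0 : ℂ) ∈ closure (B j)) ∧
      (∀ z ∈ basin ω, (0 : ℂ) ∈ closure (connectedComponentIn (basin ω) z) →
        ∃ j, connectedComponentIn (basin ω) z = B j) ∧
      (∀ j, Pq ω '' B j ⊆ B (j + (p : ZMod q))) ∧
      (∀ j, (Pq ω)^[q] '' B j ⊆ B j) := by
  have hq0 : q ≠ 0 := by omega
  have : NeZero q := ⟨hq0⟩
  have hprim : IsPrimitiveRoot ω q := by
    rw [hω, mul_div_assoc]
    exact isPrimitiveRoot_exp_of_coprime p q hq0 hcop
  obtain ⟨a, R, h⟩ := exists_hasAttractingPetals hq0 hprim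
  obtain ⟨v, hv⟩ := exists_isAttractingDir hq0 h.isParabolicGerm.a_ne_zero
  have hdir (j : ZMod q) : IsAttractingDir q a (ZMod.stdAddChar j * v) :=
    hv.mul_of_pow_eq_one (stdAddChar_pow_eq_one j)
  have hmul (j : ZMod q) : ω * (ZMod.stdAddChar j * v) =
      ZMod.stdAddChar (j + (p : ZMod q)) * v := by
    rw [AddChar.map_add_eq_mul, stdAddChar_natCast, ← hω, mul_left_comm, mul_assoc]
  refine ⟨fun j => petalComponent ω q R (ZMod.stdAddChar j * v), fun i j hij => ?_,
    fun j => ⟨_, h.parBranch_mem_basin (hdir j), rfl⟩,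
    fun j => h.zero_mem_closure_petalComponent (hdir j), fun z hz h0 => ?_, fun j => ?_,
    fun j => ?_⟩
  · have heq := h.injOn_petalComponent (hdir i) (hdir j) hij
    exact ZMod.injective_stdAddChar (mul_right_cancel₀ hv.ne_zero heq)
  · obtain ⟨u, hu, hzu⟩ := h.exists_eq_petalComponent hz h0
    obtain ⟨j, rfl⟩ := hv.exists_eq_stdAddChar_mul hu
    exact ⟨j, hzu⟩
  · rw [h.image_petalComponent (hdir j), hmul]
  · rw [h.image_iterate_petalComponent (hdir j), hprim.pow_eq_one, one_mul]
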